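/- (Isomorphism property of the flat scalar Laplacian on weighted spaces.) Let n ≥ 3, 1 < p < ∞ and δ ∈ (2−n, 0). Then there is a constant C > 0 such that: for every smooth f : ℝⁿ → ℝ with ‖f‖_{L^p_{δ−2}} < ∞ there exists a smooth u : ℝⁿ → ℝ with ‖u‖_{W^{2,p}_δ} < ∞ satisfying Δu = f and ‖u‖_{W^{2,p}_δ} ≤ C ‖f‖_{L^p_{δ−2}}; moreover u is the unique smooth function with ‖u‖_{W^{2,p}_δ} < ∞ and Δu = f. -/

import Mathlib

/-!
The solution is the Newton potential `v = -c |x|^(2-n) * f`, and the task is to bound it and its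
first two derivatives in weighted `L^p`.

*Orders zero and one.* Pointwise, `|v| ≤ C I₂|f|` and `|∂ᵢv| ≤ C I₁|f|` with `I_a` the Riesz
potential of order `a`. These potentials are bounded between the relevant weighted spaces
(`riesz_Lp`) by Schur's test with powers of `⟨x⟩` as test weights; the condition `2 - n < δ < 0` is
what makes a suitable power exist. Since `f` need not decay pointwise, `solve` obtains `v` as a limit
of potentials of `χ_m f`; a parametrix identity (the kernel is split into a compactly supported part
`Pk` and a smooth part `K2`) shows that the limit is smooth and that derivatives pass to the limit.

*Order two.* The unweighted Calderón–Zygmund inequality `cz`, applied to `χ_m ⟨x⟩^β v` with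
`β = 2 - δ - n/p`, bounds the weighted second derivatives by the weighted norms of `Δv`, `∂v` and `v`
(`apriori`). The inequality `cz` is proved without singular integrals. By `heat_repr`, the pairing
`∫ ∂ᵢ∂ⱼu · g` is at most twice the form `∫₀^∞ ∫ |∂ⱼe^{tΔ}Δu| |∂ᵢe^{tΔ}g|`, and that form is bounded by
`C (‖Δu‖_p^p + ‖g‖_q^q)` (`Qf_le`). The latter is the Bellman function method: for an explicit
function `B(u, v) ≲ u^p + v^q` whose Hessian dominates `2 |a b|` (`bellman_hess`), the integral of
`B(e^{tΔ}a, e^{tΔ}c)` decreases in `t` at least as fast as the form accumulates (`bellman_slab`).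
Choosing `g` as a small multiple of `h |h|^(p-2)`, `h = ∂ᵢ∂ⱼu`, finishes `cz`.

*Uniqueness.* If `w` is harmonic with finite norm then `χ_m w` is the Newton potential of
`Δ(χ_m w)`, which tends to zero in weighted `L^p` by dominated convergence, so the bound for
`I₂` gives `w = 0` (`harm_zero`).
-/

noncomputable section

open MeasureTheory Filter
open scoped ENNReal Topology

/-- `n`-dimensional Euclidean space. -/
abbrev Euc (n : ℕ) := EuclideanSpace ℝ (Fin n)

/-- The Japanese bracket `⟨x⟩ = (1 + ‖x‖²)^(1/2)`. -/
def jap {n : ℕ} (x : Euc n) : ℝ := Real.sqrt (1 + ‖x‖ ^ 2)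

/-- Partial derivative `∂ᵢ f` of a real-valued function. -/
def pd {n : ℕ} (i : Fin n) (f : Euc n → ℝ) (x : Euc n) : ℝ :=
  fderiv ℝ f x (EuclideanSpace.single i 1)

/-- The Euclidean Laplacian `Δf = Σᵢ ∂ᵢ²f`. -/
def lap {n : ℕ} (f : Euc n → ℝ) (x : Euc n) : ℝ :=
  ∑ i, pd i (pd i f) x

/-- Divergence of a vector field. -/
def divg {n : ℕ} (W : Euc n → Euc n) (x : Euc n) : ℝ :=
  ∑ i, pd i (fun y => W y i) x

/-- The conformal Killing operator `(𝒟W)ᵢⱼ = ∂ᵢWⱼ + ∂ⱼWᵢ − (2/n)(div W)δᵢⱼ`. -/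
def confKill {n : ℕ} (W : Euc n → Euc n) (x : Euc n) : Matrix (Fin n) (Fin n) ℝ :=
  Matrix.of fun i j =>
    pd i (fun y => W y j) x + pd j (fun y => W y i) x
      - (2 / (n : ℝ)) * divg W x * (if i = j then 1 else 0)

/-- The Frobenius norm of a matrix. -/
def frob {n : ℕ} (M : Matrix (Fin n) (Fin n) ℝ) : ℝ :=
  Real.sqrt (∑ i, ∑ j, (M i j) ^ 2)

/-- The vector Laplacian `(Δ_L W)ⱼ = −Σᵢ ∂ᵢ (𝒟W)ᵢⱼ`. -/
def vecLap {n : ℕ} (W : Euc n → Euc n) (x : Euc n) : Euc n :=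
  (EuclideanSpace.equiv (Fin n) ℝ).symm
    (fun j => -∑ i, pd i (fun y => confKill W y i j) x)

/-- Weighted `L^p_δ` norm (as an extended nonnegative real). -/
def LpW {n : ℕ} {F : Type*} [NormedAddCommGroup F] (p δ : ℝ) (f : Euc n → F) : ℝ≥0∞ :=
  (∫⁻ x, ENNReal.ofReal ((jap x ^ (-δ - (n : ℝ) / p) * ‖f x‖) ^ p)) ^ (1 / p)

/-- Weighted Sobolev `W^{k,p}_δ` norm. -/
def SobW {n : ℕ} {F : Type*} [NormedAddCommGroup F] [NormedSpace ℝ F]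
    (k : ℕ) (p δ : ℝ) (f : Euc n → F) : ℝ≥0∞ :=
  ∑ j ∈ Finset.range (k + 1),
    (∫⁻ x, ENNReal.ofReal
      ((jap x ^ (-δ - (n : ℝ) / p + (j : ℝ)) * ‖iteratedFDeriv ℝ j f x‖) ^ p)) ^ (1 / p)

/-- Weighted `L^∞_δ` norm. -/
def LinfW {n : ℕ} {F : Type*} [NormedAddCommGroup F] (δ : ℝ) (f : Euc n → F) : ℝ≥0∞ :=
  ⨆ x, ENNReal.ofReal (jap x ^ (-δ) * ‖f x‖)

/-- Weighted `L^∞_δ` norm of a matrix field, pointwise Frobenius norm. -/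
def LinfWM {n : ℕ} (δ : ℝ) (σ : Euc n → Matrix (Fin n) (Fin n) ℝ) : ℝ≥0∞ :=
  ⨆ x, ENNReal.ofReal (jap x ^ (-δ) * frob (σ x))

/-- `N = 2n/(n−2)`. -/
def Nc (n : ℕ) : ℝ := 2 * n / ((n : ℝ) - 2)
/-- `c_n = (n−2)/(4(n−1))`. -/
def cc (n : ℕ) : ℝ := ((n : ℝ) - 2) / (4 * ((n : ℝ) - 1))
/-- `b_n = (n−2)/(4n)`. -/
def bc (n : ℕ) : ℝ := ((n : ℝ) - 2) / (4 * (n : ℝ))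

/-- Componentwise smoothness of a matrix field. -/
def SmoothMat {n : ℕ} (σ : Euc n → Matrix (Fin n) (Fin n) ℝ) : Prop :=
  ∀ i j, ContDiff ℝ (⊤ : ℕ∞) fun x => σ x i j

/-- A matrix field is symmetric, trace-free and divergence-free. -/
def SymTT {n : ℕ} (σ : Euc n → Matrix (Fin n) (Fin n) ℝ) : Prop :=
  (∀ x i j, σ x i j = σ x j i) ∧ (∀ x, ∑ i, σ x i i = 0) ∧
    (∀ x j, ∑ i, pd i (fun y => σ y i j) x = 0)

/-- The left-hand side of the Lichnerowicz (Hamiltonian) equation (i). -/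
def HamExpr {n : ℕ} (τ : Euc n → ℝ) (σ : Euc n → Matrix (Fin n) (Fin n) ℝ)
    (ρ : Euc n → ℝ) (u : Euc n → ℝ) (W : Euc n → Euc n) (x : Euc n) : ℝ :=
  lap u x + cc n * frob (σ x + confKill W x) ^ 2 * u x ^ (-(Nc n) - 1)
    - bc n * τ x ^ 2 * u x ^ (Nc n - 1) + cc n * ρ x * u x ^ (-(Nc n) / 2)

/-- Equation (i): the Lichnerowicz equation. -/
def HamEq {n : ℕ} (τ : Euc n → ℝ) (σ : Euc n → Matrix (Fin n) (Fin n) ℝ)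
    (ρ : Euc n → ℝ) (u : Euc n → ℝ) (W : Euc n → Euc n) : Prop :=
  ∀ x, HamExpr τ σ ρ u W x = 0

/-- Equation (ii): the momentum constraint `Δ_L W + ((n−1)/n) u^N ∇τ + J = 0`. -/
def MomEq {n : ℕ} (τ : Euc n → ℝ) (J : Euc n → Euc n)
    (u : Euc n → ℝ) (W : Euc n → Euc n) : Prop :=
  ∀ x, vecLap W x + ((((n : ℝ) - 1) / n) * u x ^ Nc n) • gradient τ x + J x = 0

/-- Global supersolution property for `φ₊`. -/
def GlobalSuperSol {n : ℕ} (p δ : ℝ) (τ : Euc n → ℝ)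
    (σ : Euc n → Matrix (Fin n) (Fin n) ℝ) (ρ : Euc n → ℝ) (J : Euc n → Euc n)
    (φp : Euc n → ℝ) : Prop :=
  ∀ φ : Euc n → ℝ, Continuous φ → (∀ x, 0 < φ x ∧ φ x ≤ φp x) →
    ∀ W : Euc n → Euc n, ContDiff ℝ (⊤ : ℕ∞) W → SobW 2 p δ W < ⊤ → MomEq τ J φ W →
    ∀ x, HamExpr τ σ ρ φp W x ≤ 0

/-- Global subsolution property for `φ₋`. -/
def GlobalSubSol {n : ℕ} (p δ : ℝ) (τ : Euc n → ℝ)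
    (σ : Euc n → Matrix (Fin n) (Fin n) ℝ) (ρ : Euc n → ℝ) (J : Euc n → Euc n)
    (φm : Euc n → ℝ) : Prop :=
  ∀ φ : Euc n → ℝ, Continuous φ → (∀ x, φm x ≤ φ x) →
    ∀ W : Euc n → Euc n, ContDiff ℝ (⊤ : ℕ∞) W → SobW 2 p δ W < ⊤ → MomEq τ J φ W →
    ∀ x, 0 ≤ HamExpr τ σ ρ φm W x

/-! ### Schur's test -/

/-- The Schur test with test weights `h` and `k`, for nonnegative kernels: Hölder's inequality after
writing `K f = (K^(1/q) h) (K^(1/p) f / h)`, then Tonelli. -/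
lemma schur_test {α β : Type*} [MeasurableSpace α] [MeasurableSpace β] {μ : Measure α}
    {ν : Measure β} [SFinite μ] [SFinite ν] {p q : ℝ} (hpq : p.HolderConjugate q)
    {K : α → β → ℝ≥0∞} (hK : Measurable (Function.uncurry K))
    {h : β → ℝ≥0∞} (hh : Measurable h) (h0 : ∀ y, h y ≠ 0) (ht : ∀ y, h y ≠ ⊤)
    {k : α → ℝ≥0∞} (hk : Measurable k)
    {C₁ C₂ : ℝ≥0∞}
    (h1 : ∀ x, ∫⁻ y, K x y * h y ^ q ∂ν ≤ C₁ * k x ^ q)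
    (h2 : ∀ y, ∫⁻ x, K x y * k x ^ p ∂μ ≤ C₂ * h y ^ p)
    {f : β → ℝ≥0∞} (hf : Measurable f) :
    ∫⁻ x, (∫⁻ y, K x y * f y ∂ν) ^ p ∂μ ≤ C₁ ^ (p / q) * C₂ * ∫⁻ y, f y ^ p ∂ν := by
  have hp := hpq.pos
  have hq := hpq.symm.pos
  have hKx : ∀ x, Measurable (K x) := fun x => hK.comp measurable_prodMk_left
  have key : ∀ x, (∫⁻ y, K x y * f y ∂ν) ^ p ≤
      C₁ ^ (p / q) * ∫⁻ y, (K x y * k x ^ p) * (f y ^ p * (h y ^ p)⁻¹) ∂ν := by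
    intro x
    have e1 : ∫⁻ y, K x y * f y ∂ν
        = ∫⁻ y, ((fun y => K x y ^ (1 / q) * h y) * (fun y => K x y ^ (1 / p) * (f y * (h y)⁻¹))) y ∂ν := by
      refine lintegral_congr fun y => ?_
      have : K x y = K x y ^ (1 / q) * K x y ^ (1 / p) := by
        rw [← ENNReal.rpow_add_of_nonneg _ _ (by positivity) (by positivity)]
        have := hpq.symm.inv_add_inv_eq_one
        simp only [one_div, this, ENNReal.rpow_one]
      simp only [Pi.mul_apply]
      calc K x y * f y = (K x y ^ (1 / q) * K x y ^ (1 / p)) * f y * (h y * (h y)⁻¹) := by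
            rw [← this, ENNReal.mul_inv_cancel (h0 y) (ht y), mul_one]
        _ = _ := by ring
    have e2 := ENNReal.lintegral_mul_le_Lp_mul_Lq ν hpq.symm
      (f := fun y => K x y ^ (1 / q) * h y) (g := fun y => K x y ^ (1 / p) * (f y * (h y)⁻¹))
      (by have := hKx x; fun_prop) (by have := hKx x; fun_prop)
    rw [← e1] at e2
    have e3 : ∀ y, (K x y ^ (1 / q) * h y) ^ q = K x y * h y ^ q := by
      intro y
      rw [ENNReal.mul_rpow_of_nonneg _ _ hq.le, ← ENNReal.rpow_mul, one_div_mul_cancel hq.ne',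
        ENNReal.rpow_one]
    have e4 : ∀ y, (K x y ^ (1 / p) * (f y * (h y)⁻¹)) ^ p = K x y * (f y ^ p * (h y ^ p)⁻¹) := by
      intro y
      rw [ENNReal.mul_rpow_of_nonneg _ _ hp.le, ← ENNReal.rpow_mul, one_div_mul_cancel hp.ne',
        ENNReal.rpow_one, ENNReal.mul_rpow_of_nonneg _ _ hp.le, ENNReal.inv_rpow]
    simp only [e3, e4] at e2
    calc (∫⁻ y, K x y * f y ∂ν) ^ p
        ≤ ((C₁ * k x ^ q) ^ (1 / q) * (∫⁻ y, K x y * (f y ^ p * (h y ^ p)⁻¹) ∂ν) ^ (1 / p)) ^ p := by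
          gcongr
          exact e2.trans (by gcongr; exact h1 x)
      _ = C₁ ^ (p / q) * (k x ^ p * ∫⁻ y, K x y * (f y ^ p * (h y ^ p)⁻¹) ∂ν) := by
          rw [ENNReal.mul_rpow_of_nonneg _ _ hp.le, ← ENNReal.rpow_mul, ← ENNReal.rpow_mul,
            one_div_mul_cancel hp.ne', ENNReal.rpow_one, ENNReal.mul_rpow_of_nonneg _ _ (by positivity),
            ← ENNReal.rpow_mul, mul_assoc]
          congr 2
          · ring_nf
          · congr 1; congr 1; field_simp
      _ = _ := by
          rw [← lintegral_const_mul _ (by have := hKx x; fun_prop)]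
          congr 1
          refine lintegral_congr fun y => by ring
  have hKu : Measurable fun z : α × β => K z.1 z.2 := hK
  calc ∫⁻ x, (∫⁻ y, K x y * f y ∂ν) ^ p ∂μ
      ≤ ∫⁻ x, C₁ ^ (p / q) * ∫⁻ y, (K x y * k x ^ p) * (f y ^ p * (h y ^ p)⁻¹) ∂ν ∂μ :=
        lintegral_mono key
    _ = C₁ ^ (p / q) * ∫⁻ x, ∫⁻ y, (K x y * k x ^ p) * (f y ^ p * (h y ^ p)⁻¹) ∂ν ∂μ := by
        rw [lintegral_const_mul]
        exact Measurable.lintegral_prod_right' (f := fun z : α × β => (K z.1 z.2 * k z.1 ^ p) *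
          (f z.2 ^ p * (h z.2 ^ p)⁻¹)) (by fun_prop)
    _ = C₁ ^ (p / q) * ∫⁻ y, (∫⁻ x, K x y * k x ^ p ∂μ) * (f y ^ p * (h y ^ p)⁻¹) ∂ν := by
        rw [lintegral_lintegral_swap]
        · congr 1
          refine lintegral_congr fun y => ?_
          rw [lintegral_mul_const]
          have : Measurable fun x => K x y := hK.comp measurable_prodMk_right
          fun_prop
        · exact (show Measurable fun z : α × β => (K z.1 z.2 * k z.1 ^ p) *
            (f z.2 ^ p * (h z.2 ^ p)⁻¹) by fun_prop).aemeasurable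
    _ ≤ C₁ ^ (p / q) * ∫⁻ y, C₂ * f y ^ p ∂ν := by
        refine mul_le_mul' le_rfl (lintegral_mono fun y => ?_)
        calc _ ≤ (C₂ * h y ^ p) * (f y ^ p * (h y ^ p)⁻¹) := mul_le_mul' (h2 y) le_rfl
          _ = C₂ * f y ^ p * (h y ^ p * (h y ^ p)⁻¹) := by ring
          _ = _ := by
            rw [ENNReal.mul_inv_cancel ?_ ?_, mul_one]
            · exact (ENNReal.rpow_pos (pos_iff_ne_zero.2 (h0 y)) (ht y)).ne'
            · exact ENNReal.rpow_ne_top_of_nonneg hp.le (ht y)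
    _ = _ := by
        rw [lintegral_const_mul _ (by fun_prop), mul_assoc]

/-! ### Calculus of partial derivatives -/

/-- Smooth real-valued functions on `ℝⁿ`. -/
abbrev Sm {n : ℕ} (f : Euc n → ℝ) : Prop := ContDiff ℝ (⊤ : ℕ∞) f

/-- Test functions: smooth with compact support. -/
def Tst {n : ℕ} (f : Euc n → ℝ) : Prop := Sm f ∧ HasCompactSupport f

section calculus
variable {n : ℕ} {f g : Euc n → ℝ}

/-- The `i`-th standard basis vector. -/
abbrev ei {n : ℕ} (i : Fin n) : Euc n := EuclideanSpace.single i (1 : ℝ)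

lemma Sm.diff (hf : Sm f) : Differentiable ℝ f := hf.differentiable (by simp)

lemma Sm.pd (hf : Sm f) (i : Fin n) : Sm (pd i f) := by
  have : ContDiff ℝ (⊤ : ℕ∞) (fderiv ℝ f) := hf.fderiv_right (by simp)
  exact this.clm_apply contDiff_const

lemma Sm.lap (hf : Sm f) : Sm (lap f) := by
  unfold _root_.lap
  exact ContDiff.sum fun i _ => (hf.pd i).pd i

lemma tsupport_pd_subset (i : Fin n) : tsupport (pd i f) ⊆ tsupport f := by
  refine closure_minimal (fun x hx => ?_) (isClosed_tsupport _)
  have : fderiv ℝ f x ≠ 0 := by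
    intro h
    apply hx
    simp [pd, h]
  exact support_fderiv_subset ℝ this

lemma tsupport_lap_subset : tsupport (lap f) ⊆ tsupport f := by
  refine closure_minimal (fun x hx => ?_) (isClosed_tsupport _)
  by_contra hxn
  apply hx
  refine Finset.sum_eq_zero fun i _ => ?_
  by_contra h
  exact hxn (tsupport_pd_subset i (tsupport_pd_subset i (subset_tsupport _ h)))

lemma HasCompactSupport.pd (hf : HasCompactSupport f) (i : Fin n) : HasCompactSupport (pd i f) :=
  hf.of_isClosed_subset (isClosed_tsupport _) (tsupport_pd_subset i)

lemma HasCompactSupport.lap (hf : HasCompactSupport f) : HasCompactSupport (lap f) :=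
  hf.of_isClosed_subset (isClosed_tsupport _) tsupport_lap_subset

lemma Tst.sm (hf : Tst f) : Sm f := hf.1
lemma Tst.cs (hf : Tst f) : HasCompactSupport f := hf.2
lemma Tst.pd (hf : Tst f) (i : Fin n) : Tst (pd i f) := ⟨hf.1.pd i, hf.2.pd i⟩
lemma Tst.lap (hf : Tst f) : Tst (lap f) := ⟨hf.1.lap, hf.2.lap⟩
lemma Tst.cont (hf : Tst f) : Continuous f := hf.1.continuous
lemma Sm.cont (hf : Sm f) : Continuous f := hf.continuous
lemma Tst.integrable (hf : Tst f) : Integrable f := hf.cont.integrable_of_hasCompactSupport hf.2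

lemma pd_mul (hf : Differentiable ℝ f) (hg : Differentiable ℝ g) (i : Fin n) :
    pd i (fun x => f x * g x) = fun x => pd i f x * g x + f x * pd i g x := by
  ext x
  simp only [pd]
  rw [fderiv_fun_mul (hf x) (hg x)]
  simp; ring

lemma pd_add (hf : Differentiable ℝ f) (hg : Differentiable ℝ g) (i : Fin n) :
    pd i (fun x => f x + g x) = fun x => pd i f x + pd i g x := by
  ext x
  simp only [pd]
  rw [fderiv_fun_add (hf x) (hg x)]
  simp

lemma pd_sub (hf : Differentiable ℝ f) (hg : Differentiable ℝ g) (i : Fin n) :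
    pd i (fun x => f x - g x) = fun x => pd i f x - pd i g x := by
  ext x
  simp only [pd]
  rw [fderiv_fun_sub (hf x) (hg x)]
  simp

lemma pd_sum {ι : Type*} (s : Finset ι) {F : ι → Euc n → ℝ} (hF : ∀ k, Differentiable ℝ (F k))
    (i : Fin n) : pd i (fun x => ∑ k ∈ s, F k x) = fun x => ∑ k ∈ s, pd i (F k) x := by
  ext x
  simp only [pd]
  rw [fderiv_fun_sum fun k _ => hF k x]
  simp

lemma lap_sub (hf : Sm f) (hg : Sm g) (x : Euc n) :
    lap (fun x => f x - g x) x = lap f x - lap g x := by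
  simp only [lap]
  rw [← Finset.sum_sub_distrib]
  refine Finset.sum_congr rfl fun i _ => ?_
  rw [pd_sub hf.diff hg.diff, pd_sub (hf.pd i).diff (hg.pd i).diff]

lemma pd_pd_eq (hf : Sm f) (a b : Fin n) (x : Euc n) :
    pd a (pd b f) x = fderiv ℝ (fderiv ℝ f) x (ei a) (ei b) := by
  have h1 : Differentiable ℝ (fderiv ℝ f) :=
    (hf.fderiv_right (m := (⊤ : ℕ∞)) (by simp)).differentiable (by simp)
  have h2 : pd b f = fun y => fderiv ℝ f y (ei b) := rfl
  rw [h2, pd, fderiv_clm_apply (h1 x) (by fun_prop)]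
  simp

lemma pd_comm (hf : Sm f) (i j : Fin n) : pd i (pd j f) = pd j (pd i f) := by
  ext x
  rw [pd_pd_eq hf, pd_pd_eq hf]
  have : IsSymmSndFDerivAt ℝ f x := hf.contDiffAt.isSymmSndFDerivAt (by
    simp only [minSmoothness_of_isRCLikeNormedField]; exact WithTop.coe_le_coe.2 (le_top : (2 : ℕ∞) ≤ ⊤))
  exact this (ei i) (ei j)

lemma pd_lap (hf : Sm f) (i : Fin n) : pd i (lap f) = lap (pd i f) := by
  unfold lap
  rw [pd_sum _ fun k => ((hf.pd k).pd k).diff]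
  ext x
  refine Finset.sum_congr rfl fun k _ => ?_
  rw [pd_comm (hf.pd k), pd_comm hf]

lemma pd_pd_mul (hf : Sm f) (hg : Sm g) (i j : Fin n) :
    pd i (pd j (fun x => f x * g x)) = fun x => pd i (pd j f) x * g x + pd j f x * pd i g x
      + (pd i f x * pd j g x + f x * pd i (pd j g) x) := by
  rw [pd_mul hf.diff hg.diff, pd_add (Sm.diff ((hf.pd j).mul hg)) (Sm.diff (hf.mul (hg.pd j))),
    pd_mul (hf.pd j).diff hg.diff, pd_mul hf.diff (hg.pd j).diff]

lemma lap_mul (hf : Sm f) (hg : Sm g) (x : Euc n) :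
    lap (fun x => f x * g x) x = lap f x * g x + 2 * ∑ i, pd i f x * pd i g x + f x * lap g x := by
  simp only [lap, pd_pd_mul hf hg]
  simp only [Finset.sum_add_distrib, ← Finset.sum_mul, ← Finset.mul_sum]
  ring

lemma ibp (hf : Sm f) (hg : Sm g) (h : HasCompactSupport f ∨ HasCompactSupport g) (i : Fin n) :
    ∫ x, f x * pd i g x = - ∫ x, pd i f x * g x := by
  refine integral_mul_fderiv_eq_neg_fderiv_mul_of_integrable ?_ ?_ ?_ (fun x _ => hf.diff x)
    (fun x _ => hg.diff x)
  · refine Continuous.integrable_of_hasCompactSupport ((hf.pd i).cont.mul hg.cont) ?_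
    rcases h with h | h
    · exact (h.pd i).mul_right
    · exact h.mul_left
  · refine Continuous.integrable_of_hasCompactSupport (hf.cont.mul (hg.pd i).cont) ?_
    rcases h with h | h
    · exact h.mul_right
    · exact (h.pd i).mul_left
  · refine Continuous.integrable_of_hasCompactSupport (hf.cont.mul hg.cont) ?_
    rcases h with h | h
    · exact h.mul_right
    · exact h.mul_left

lemma ibp_lap (hf : Sm f) (hg : Sm g) (h : HasCompactSupport f ∨ HasCompactSupport g) :
    ∫ x, f x * lap g x = ∫ x, lap f x * g x := by
  have hint : ∀ {a b : Euc n → ℝ}, Sm a → Sm b → HasCompactSupport a ∨ HasCompactSupport b →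
      Integrable fun x => a x * b x := by
    intro a b ha hb h
    refine Continuous.integrable_of_hasCompactSupport (ha.cont.mul hb.cont) ?_
    rcases h with h | h
    · exact h.mul_right
    · exact h.mul_left
  simp only [lap, Finset.mul_sum, Finset.sum_mul]
  rw [integral_finsetSum, integral_finsetSum]
  · refine Finset.sum_congr rfl fun i _ => ?_
    have h1 := ibp hf (hg.pd i) (h.imp id fun h => h.pd i) i
    have h2 := ibp (hf.pd i) hg (h.imp (fun h => h.pd i) id) i
    rw [h1, h2, neg_neg]
  · exact fun i _ => hint ((hf.pd i).pd i) hg (h.imp (fun h => (h.pd i).pd i) id)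
  · exact fun i _ => hint hf ((hg.pd i).pd i) (h.imp id fun h => (h.pd i).pd i)

/-- The operator norm is bounded by the sum of the norms of the values on the standard basis; this
turns norms of Fréchet derivatives into sums of partial derivatives. -/
lemma clm_norm_le_sum {F : Type*} [NormedAddCommGroup F] [NormedSpace ℝ F] (L : Euc n →L[ℝ] F) :
    ‖L‖ ≤ ∑ i, ‖L (ei i)‖ := by
  refine L.opNorm_le_bound (Finset.sum_nonneg fun _ _ => norm_nonneg _) fun x => ?_
  have hx : x = ∑ i, x i • ei i := by
    ext j
    simp [Finset.sum_apply, Pi.single_apply]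
  calc ‖L x‖ = ‖∑ i, x i • L (ei i)‖ := by
        conv_lhs => rw [hx]
        simp
    _ ≤ ∑ i, ‖x i • L (ei i)‖ := norm_sum_le _ _
    _ ≤ ∑ i, ‖L (ei i)‖ * ‖x‖ := by
        refine Finset.sum_le_sum fun i _ => ?_
        rw [norm_smul, mul_comm]
        gcongr
        exact PiLp.norm_apply_le x i
    _ = _ := by rw [Finset.sum_mul]

lemma norm_iter0 (x : Euc n) : ‖iteratedFDeriv ℝ 0 f x‖ = |f x| := by simp

lemma norm_iter1 (x : Euc n) : ‖iteratedFDeriv ℝ 1 f x‖ = ‖fderiv ℝ f x‖ := by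
  rw [← norm_iteratedFDeriv_fderiv]; simp

lemma norm_iter2 (x : Euc n) : ‖iteratedFDeriv ℝ 2 f x‖ = ‖fderiv ℝ (fderiv ℝ f) x‖ := by
  rw [show (2 : ℕ) = 1 + 1 from rfl, ← norm_iteratedFDeriv_fderiv, norm_iteratedFDeriv_one]

lemma norm_iter1_le (x : Euc n) : ‖iteratedFDeriv ℝ 1 f x‖ ≤ ∑ i, |pd i f x| := by
  rw [norm_iter1]; exact clm_norm_le_sum _

lemma norm_iter2_le (hf : Sm f) (x : Euc n) :
    ‖iteratedFDeriv ℝ 2 f x‖ ≤ ∑ i, ∑ j, |pd i (pd j f) x| := by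
  rw [norm_iter2]
  refine (clm_norm_le_sum _).trans (Finset.sum_le_sum fun i _ => (clm_norm_le_sum _).trans
    (Finset.sum_le_sum fun j _ => ?_))
  rw [pd_pd_eq hf, Real.norm_eq_abs]

lemma abs_pd_le (i : Fin n) (x : Euc n) : |pd i f x| ≤ ‖iteratedFDeriv ℝ 1 f x‖ := by
  rw [norm_iter1]
  refine ((fderiv ℝ f x).le_opNorm (ei i)).trans (by simp)

end calculus

/-! ### The Bellman function -/

section bellman

/-- `w = u^p + v^q`. -/
def bw (p q u v : ℝ) : ℝ := u ^ p + v ^ q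
/-- The Bellman function `u² (u^p + v^q)^(2/q-1) + K v^q` on the open quadrant `u, v > 0`. -/
def bB (p q K u v : ℝ) : ℝ := u ^ 2 * bw p q u v ^ (2 / q - 1) + K * v ^ q
/-- `∂B/∂u`. -/
def bBu (p q u v : ℝ) : ℝ :=
  2 * u * bw p q u v ^ (2 / q - 1)
    + (2 / q - 1) * p * u ^ 2 * u ^ (p - 1) * bw p q u v ^ (2 / q - 1 - 1)
/-- `∂B/∂v`. -/
def bBv (p q K u v : ℝ) : ℝ :=
  (2 / q - 1) * q * u ^ 2 * v ^ (q - 1) * bw p q u v ^ (2 / q - 1 - 1) + K * q * v ^ (q - 1)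
/-- `∂²B/∂u²`. -/
def bBuu (p q u v : ℝ) : ℝ :=
  2 * bw p q u v ^ (2 / q - 1)
    + 4 * (2 / q - 1) * p * u * u ^ (p - 1) * bw p q u v ^ (2 / q - 1 - 1)
    + (2 / q - 1) * p * (p - 1) * u ^ 2 * u ^ (p - 1 - 1) * bw p q u v ^ (2 / q - 1 - 1)
    + (2 / q - 1) * (2 / q - 1 - 1) * p ^ 2 * u ^ 2 * (u ^ (p - 1)) ^ 2
      * bw p q u v ^ (2 / q - 1 - 1 - 1)
/-- `∂²B/∂u∂v`. -/
def bBuv (p q u v : ℝ) : ℝ :=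
  2 * (2 / q - 1) * q * u * v ^ (q - 1) * bw p q u v ^ (2 / q - 1 - 1)
    + (2 / q - 1) * (2 / q - 1 - 1) * p * q * u ^ 2 * u ^ (p - 1) * v ^ (q - 1)
      * bw p q u v ^ (2 / q - 1 - 1 - 1)
/-- `∂²B/∂v²`. -/
def bBvv (p q K u v : ℝ) : ℝ :=
  (2 / q - 1) * q * (q - 1) * u ^ 2 * v ^ (q - 1 - 1) * bw p q u v ^ (2 / q - 1 - 1)
    + (2 / q - 1) * (2 / q - 1 - 1) * q ^ 2 * u ^ 2 * (v ^ (q - 1)) ^ 2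
      * bw p q u v ^ (2 / q - 1 - 1 - 1)
    + K * q * (q - 1) * v ^ (q - 1 - 1)

lemma bw_pos {p q u v : ℝ} (hu : 0 < u) (hv : 0 < v) : 0 < bw p q u v := by
  unfold bw; positivity

variable {u v : ℝ → ℝ} {u' v' t : ℝ} (p q K : ℝ)

lemma bw_hasDerivAt (hu : HasDerivAt u u' t) (hv : HasDerivAt v v' t) (hu0 : 0 < u t)
    (hv0 : 0 < v t) :
    HasDerivAt (fun t => bw p q (u t) (v t))
      (p * u t ^ (p - 1) * u' + q * v t ^ (q - 1) * v') t := by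
  unfold bw
  refine HasDerivAt.congr_deriv ((hu.rpow_const (p := p) (Or.inl hu0.ne')).add
    (hv.rpow_const (p := q) (Or.inl hv0.ne'))) ?_
  ring

lemma bB_hasDerivAt (hu : HasDerivAt u u' t) (hv : HasDerivAt v v' t) (hu0 : 0 < u t)
    (hv0 : 0 < v t) :
    HasDerivAt (fun t => bB p q K (u t) (v t))
      (bBu p q (u t) (v t) * u' + bBv p q K (u t) (v t) * v') t := by
  have hw := bw_hasDerivAt p q hu hv hu0 hv0
  have hw0 := (bw_pos (p := p) (q := q) hu0 hv0).ne'
  unfold bB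
  refine HasDerivAt.congr_deriv (((hu.pow 2).mul (hw.rpow_const (p := 2 / q - 1) (Or.inl hw0))).add
    ((hv.rpow_const (p := q) (Or.inl hv0.ne')).const_mul K)) ?_
  simp only [bBu, bBv, Pi.pow_apply]
  push_cast
  ring

lemma bBu_hasDerivAt (hu : HasDerivAt u u' t) (hv : HasDerivAt v v' t) (hu0 : 0 < u t)
    (hv0 : 0 < v t) :
    HasDerivAt (fun t => bBu p q (u t) (v t))
      (bBuu p q (u t) (v t) * u' + bBuv p q (u t) (v t) * v') t := by
  have hw := bw_hasDerivAt p q hu hv hu0 hv0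
  have hw0 := (bw_pos (p := p) (q := q) hu0 hv0).ne'
  unfold bBu
  refine HasDerivAt.congr_deriv ((((hu.const_mul 2)).mul (hw.rpow_const (p := 2 / q - 1) (Or.inl hw0))).add
    ((((hu.pow 2).const_mul ((2 / q - 1) * p)).mul
      (hu.rpow_const (p := p - 1) (Or.inl hu0.ne'))).mul
        (hw.rpow_const (p := 2 / q - 1 - 1) (Or.inl hw0)))) ?_
  simp only [bBuu, bBuv, Pi.pow_apply, Pi.mul_apply]
  push_cast
  ring

lemma bBv_hasDerivAt (hu : HasDerivAt u u' t) (hv : HasDerivAt v v' t) (hu0 : 0 < u t)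
    (hv0 : 0 < v t) :
    HasDerivAt (fun t => bBv p q K (u t) (v t))
      (bBuv p q (u t) (v t) * u' + bBvv p q K (u t) (v t) * v') t := by
  have hw := bw_hasDerivAt p q hu hv hu0 hv0
  have hw0 := (bw_pos (p := p) (q := q) hu0 hv0).ne'
  unfold bBv
  refine HasDerivAt.congr_deriv (((((hu.pow 2).const_mul ((2 / q - 1) * q)).mul
      (hv.rpow_const (p := q - 1) (Or.inl hv0.ne'))).mul
        (hw.rpow_const (p := 2 / q - 1 - 1) (Or.inl hw0))).add
        ((hv.rpow_const (p := q - 1) (Or.inl hv0.ne')).const_mul (K * q))) ?_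
  simp only [bBvv, bBuv, Pi.pow_apply, Pi.mul_apply]
  push_cast
  ring

/-- The Bellman function of smooth positive arguments is smooth. -/
lemma bB_contDiffOn {E : Type*} [NormedAddCommGroup E] [NormedSpace ℝ E] {s : Set E}
    {F G : E → ℝ} (hF : ContDiffOn ℝ (⊤ : ℕ∞) F s) (hG : ContDiffOn ℝ (⊤ : ℕ∞) G s)
    (hF0 : ∀ x ∈ s, 0 < F x) (hG0 : ∀ x ∈ s, 0 < G x) :
    ContDiffOn ℝ (⊤ : ℕ∞) (fun x => bB p q K (F x) (G x)) s := by
  have hw : ContDiffOn ℝ (⊤ : ℕ∞) (fun x => bw p q (F x) (G x)) s :=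
    (hF.rpow_const_of_ne fun x hx => (hF0 x hx).ne').add
      (hG.rpow_const_of_ne fun x hx => (hG0 x hx).ne')
  exact ((hF.pow 2).mul (hw.rpow_const_of_ne fun x hx => (bw_pos (hF0 x hx) (hG0 x hx)).ne')).add
    (contDiffOn_const.mul (hG.rpow_const_of_ne fun x hx => (hG0 x hx).ne'))

variable {p q}

/-- Scaling: `u ≤ w^(1/p)`, and the exponents `2/p` and `2/q - 2` cancel. -/
lemma u_sq_mul_le (hpq : p.HolderConjugate q) {u v : ℝ} (hu : 0 < u) (hv : 0 < v) :
    u ^ 2 * bw p q u v ^ (2 / q - 1 - 1) ≤ 1 := by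
  have hp := hpq.pos
  have hw := bw_pos (p := p) (q := q) hu hv
  have h1 : u ≤ bw p q u v ^ (1 / p) := by
    rw [one_div, Real.le_rpow_inv_iff_of_pos hu.le hw.le hp]
    unfold bw; have := Real.rpow_pos_of_pos hv q; linarith
  have e : 1 / p + 1 / q = 1 := by simpa using hpq.inv_add_inv_eq_one
  calc u ^ 2 * bw p q u v ^ (2 / q - 1 - 1)
      ≤ (bw p q u v ^ (1 / p)) ^ 2 * bw p q u v ^ (2 / q - 1 - 1) := by gcongr
    _ = 1 := by
      rw [← Real.rpow_natCast, ← Real.rpow_mul hw.le, ← Real.rpow_add hw]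
      have : 1 / p * (2 : ℕ) + (2 / q - 1 - 1) = 0 := by
        push_cast
        have : 2 / q = 2 * (1 / q) := by ring
        rw [this]; linarith
      rw [this, Real.rpow_zero]

/-- Scaling: `u ≤ w^(1/p)` and `v^(q-1) ≤ w^(1/p)`, and the exponents cancel. -/
lemma u_v_mul_le (hpq : p.HolderConjugate q) {u v : ℝ} (hu : 0 < u) (hv : 0 < v) :
    u * v ^ (q - 1) * bw p q u v ^ (2 / q - 1 - 1) ≤ 1 := by
  have hp := hpq.pos
  have hq := hpq.symm.pos
  have hw := bw_pos (p := p) (q := q) hu hv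
  have h1 : u ≤ bw p q u v ^ (1 / p) := by
    rw [one_div, Real.le_rpow_inv_iff_of_pos hu.le hw.le hp]
    unfold bw; have := Real.rpow_pos_of_pos hv q; linarith
  have h2 : v ≤ bw p q u v ^ (1 / q) := by
    rw [one_div, Real.le_rpow_inv_iff_of_pos hv.le hw.le hq]
    unfold bw; have := Real.rpow_pos_of_pos hu p; linarith
  have hq1 : 0 ≤ q - 1 := by linarith [hpq.symm.lt]
  have e : 1 / p + 1 / q = 1 := by simpa using hpq.inv_add_inv_eq_one
  calc u * v ^ (q - 1) * bw p q u v ^ (2 / q - 1 - 1)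
      ≤ bw p q u v ^ (1 / p) * (bw p q u v ^ (1 / q)) ^ (q - 1) * bw p q u v ^ (2 / q - 1 - 1) := by
        gcongr
    _ = 1 := by
      rw [← Real.rpow_mul hw.le, ← Real.rpow_add hw, ← Real.rpow_add hw]
      have : 1 / p + 1 / q * (q - 1) + (2 / q - 1 - 1) = 0 := by
        have h3 : 2 / q = 2 * (1 / q) := by ring
        have h4 : 1 / q * (q - 1) = 1 - 1 / q := by field_simp
        rw [h3, h4]; linarith
      rw [this, Real.rpow_zero]

lemma bB_nonneg {K : ℝ} (hK : 0 ≤ K) {u v : ℝ} (hu : 0 < u) (hv : 0 < v) : 0 ≤ bB p q K u v := by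
  have hw := bw_pos (p := p) (q := q) hu hv
  unfold bB; positivity

/-- The size bound: the first term of `B` is at most `w`, again by `u ≤ w^(1/p)`. -/
lemma bB_le (hpq : p.HolderConjugate q) {K : ℝ} (hK : 0 ≤ K) {u v : ℝ} (hu : 0 < u) (hv : 0 < v) :
    bB p q K u v ≤ (1 + K) * (u ^ p + v ^ q) := by
  have hw := bw_pos (p := p) (q := q) hu hv
  have h1 := u_sq_mul_le hpq hu hv
  have h2 : bw p q u v ^ (2 / q - 1) = bw p q u v ^ (2 / q - 1 - 1) * bw p q u v := by
    rw [Real.rpow_sub_one hw.ne' (2 / q - 1)]; field_simp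
  have h3 : u ^ 2 * bw p q u v ^ (2 / q - 1) ≤ bw p q u v := by
    rw [h2, ← mul_assoc]; nlinarith
  have := Real.rpow_pos_of_pos hu p
  unfold bB
  unfold bw at *
  nlinarith [mul_nonneg hK this.le]

/-- A quadratic form whose diagonal entries are large relative to its off-diagonal entry dominates
`W a² + W⁻¹ b²`. -/
lemma hess_aux {A B D C W : ℝ} (hW : 0 < W) (c1 : 2 * W ≤ A) (c2 : |B| ≤ C)
    (c3 : (1 + C ^ 2) * W⁻¹ ≤ D) (a b : ℝ) :
    W * a ^ 2 + W⁻¹ * b ^ 2 ≤ A * a ^ 2 + 2 * B * a * b + D * b ^ 2 := by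
  have d1 : 2 * W * a ^ 2 ≤ A * a ^ 2 := by gcongr
  have d3 : (1 + C ^ 2) * W⁻¹ * b ^ 2 ≤ D * b ^ 2 := by gcongr
  have d2 : -(2 * C * (|a| * |b|)) ≤ 2 * B * a * b := by
    have : |B * (a * b)| ≤ C * (|a| * |b|) := by
      rw [abs_mul, abs_mul]; gcongr
    have := (abs_le.1 this).1
    linarith
  have d4 : 0 ≤ W⁻¹ * (W * |a| - C * |b|) ^ 2 := by positivity
  have d5 : W⁻¹ * (W * |a| - C * |b|) ^ 2 =
      W * a ^ 2 - 2 * C * (|a| * |b|) + C ^ 2 * W⁻¹ * b ^ 2 := by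
    rw [← sq_abs a, ← sq_abs b]; field_simp; ring
  have d6 : (1 + C ^ 2) * W⁻¹ * b ^ 2 = W⁻¹ * b ^ 2 + C ^ 2 * W⁻¹ * b ^ 2 := by ring
  linarith

set_option maxHeartbeats 1000000 in
/-- Lower bound for the Hessian of the Bellman function, for `p ≥ 2` and `K` large. The weight `W` is
`(u^p + v^q)^(2/q-1)`; by `2 √(W · W⁻¹) = 2` the right-hand side dominates `2 |a b|`. -/
lemma bellman_hess (hpq : p.HolderConjugate q) (hp2 : 2 ≤ p) :
    ∃ K : ℝ, 0 ≤ K ∧ ∀ u v : ℝ, 0 < u → 0 < v → ∃ W : ℝ, 0 < W ∧ ∀ a b : ℝ,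
      W * a ^ 2 + W⁻¹ * b ^ 2 ≤
        bBuu p q u v * a ^ 2 + 2 * bBuv p q u v * a * b + bBvv p q K u v * b ^ 2 := by
  have hq1 : 1 < q := hpq.symm.lt
  have hq0 : 0 < q := hpq.symm.pos
  have e : 1 / p + 1 / q = 1 := by simpa using hpq.inv_add_inv_eq_one
  have hq2 : q ≤ 2 := by
    have h1 : 1 / p ≤ 1 / 2 := one_div_le_one_div_of_le (by norm_num) hp2
    have h2 : 1 / 2 ≤ 1 / q := by linarith
    exact (one_div_le_one_div (by norm_num) hq0).1 h2
  obtain ⟨s, hs⟩ : ∃ s, s = 2 / q - 1 := ⟨_, rfl⟩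
  have hs0 : 0 ≤ s := by
    rw [hs, sub_nonneg, le_div_iff₀ hq0]; linarith
  have hs1 : s ≤ 1 := by
    rw [hs, sub_le_iff_le_add, div_le_iff₀ hq0]; linarith
  obtain ⟨C, hC⟩ : ∃ C, C = 2 * q + p * q := ⟨_, rfl⟩
  have hC0 : 0 ≤ C := by rw [hC]; positivity
  refine ⟨(1 + C ^ 2 + q ^ 2) / (q * (q - 1)), ?_, ?_⟩
  · have : 0 < q - 1 := by linarith
    positivity
  intro u v hu hv
  have hw := bw_pos (p := p) (q := q) hu hv
  have hX := u_v_mul_le hpq hu hv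
  have hY := u_sq_mul_le hpq hu hv
  have hX0 : 0 ≤ u * v ^ (q - 1) * bw p q u v ^ (2 / q - 1 - 1) := by positivity
  have hY0 : 0 ≤ u ^ 2 * bw p q u v ^ (2 / q - 1 - 1) := by positivity
  have hU : u ^ p ≤ bw p q u v := by
    unfold bw; have := Real.rpow_pos_of_pos hv q; linarith
  have hV : v ^ q ≤ bw p q u v := by
    unfold bw; have := Real.rpow_pos_of_pos hu p; linarith
  have hU0 := Real.rpow_pos_of_pos hu p
  have hV0 := Real.rpow_pos_of_pos hv q
  have hvm : v ^ (q - 2) ≥ (bw p q u v ^ s)⁻¹ := by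
    rw [← Real.rpow_neg hw.le]
    have : v ^ (q - 2) = (v ^ q) ^ (-s) := by
      rw [← Real.rpow_mul hv.le, hs]; congr 1; field_simp; ring
    rw [this]
    exact Real.rpow_le_rpow_of_nonpos hV0 hV (by linarith)
  have hvm0 := Real.rpow_pos_of_pos hv (q - 2)
  have r1 : u * u ^ (p - 1) = u ^ p := by rw [Real.rpow_sub_one hu.ne']; field_simp
  have r2 : u ^ 2 * u ^ (p - 1 - 1) = u ^ p := by
    rw [Real.rpow_sub_one hu.ne', Real.rpow_sub_one hu.ne']; field_simp
  have r3 : v ^ (q - 1) * v ^ (q - 1) = v ^ q * v ^ (q - 2) := by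
    rw [← Real.rpow_add hv, ← Real.rpow_add hv]; congr 1; ring
  have r4 : bw p q u v ^ (2 / q - 1 - 1 - 1) = bw p q u v ^ (2 / q - 1 - 1) * (bw p q u v)⁻¹ := by
    rw [Real.rpow_sub_one hw.ne' (2 / q - 1 - 1)]; rfl
  have r5 : v ^ (q - 1 - 1) = v ^ (q - 2) := by congr 1; ring
  obtain ⟨w, hwd⟩ : ∃ w, w = bw p q u v := ⟨_, rfl⟩
  obtain ⟨Z, hZd⟩ : ∃ Z, Z = bw p q u v ^ (2 / q - 1 - 1) := ⟨_, rfl⟩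
  have hZ0 : 0 < Z := by rw [hZd]; positivity
  obtain ⟨α, hα⟩ : ∃ α, α = u ^ p * w⁻¹ := ⟨_, rfl⟩
  obtain ⟨β, hβ⟩ : ∃ β, β = v ^ q * w⁻¹ := ⟨_, rfl⟩
  have hw' : 0 < w := hwd ▸ hw
  have hα0 : 0 ≤ α := by rw [hα]; positivity
  have hα1 : α ≤ 1 := by
    rw [hα, ← div_eq_mul_inv, div_le_one hw', hwd]; exact hU
  have hβ0 : 0 ≤ β := by rw [hβ]; positivity
  have hβ1 : β ≤ 1 := by
    rw [hβ, ← div_eq_mul_inv, div_le_one hw', hwd]; exact hV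
  rw [← hZd] at hX hY hX0 hY0
  refine ⟨bw p q u v ^ s, by positivity, fun a b => ?_⟩
  have hW0 : 0 < bw p q u v ^ s := by positivity
  have c1 : 2 * bw p q u v ^ s ≤ bBuu p q u v := by
    have : bBuu p q u v = 2 * bw p q u v ^ s + s * p * (u ^ p * Z) * (4 + (p - 1) - p * (1 - s) * α) := by
      simp only [bBuu]
      rw [r4, ← hs, ← hwd, hα]
      have r1' : u ^ 2 * (u ^ (p - 1)) ^ 2 = u ^ p * u ^ p := by rw [← r1]; ring
      rw [hs, ← hwd] at *
      rw [← hZd]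
      linear_combination (4 * (2 / q - 1) * p * Z) * r1 + (2 / q - 1) * p * (p - 1) * Z * r2
        + (2 / q - 1) * (2 / q - 1 - 1) * p ^ 2 * Z * w⁻¹ * r1'
    rw [this]
    have h5 : 0 ≤ 4 + (p - 1) - p * (1 - s) * α := by
      have : p * (1 - s) * α ≤ p * 1 * 1 := by gcongr <;> linarith
      linarith
    have : 0 ≤ s * p * (u ^ p * Z) * (4 + (p - 1) - p * (1 - s) * α) := by positivity
    linarith
  have c2 : |bBuv p q u v| ≤ C := by
    have : bBuv p q u v = (u * v ^ (q - 1) * Z) * (2 * s * q - s * (1 - s) * p * q * α) := by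
      simp only [bBuv]
      rw [r4, ← hs, hα, hwd]
      have r1' : u ^ 2 * u ^ (p - 1) = u * u ^ p := by rw [← r1]; ring
      rw [hs, ← hZd]
      linear_combination (2 / q - 1) * (2 / q - 1 - 1) * p * q * v ^ (q - 1) * Z * (bw p q u v)⁻¹ * r1'
    rw [this, abs_mul, abs_of_nonneg hX0]
    have h6 : |2 * s * q - s * (1 - s) * p * q * α| ≤ C := by
      have t1 : 2 * s * q ≤ 2 * 1 * q := by gcongr
      have t2 : s * (1 - s) * p * q * α ≤ 1 * 1 * p * q * 1 := by gcongr <;> linarith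
      have t3 : 0 ≤ 2 * s * q := by positivity
      have t4 : 0 ≤ s * (1 - s) * p * q * α := by
        have : 0 ≤ 1 - s := by linarith
        positivity
      rw [abs_le]; constructor <;> nlinarith
    calc _ ≤ 1 * C := by gcongr
      _ = C := one_mul _
  have c3 : (1 + C ^ 2) * (bw p q u v ^ s)⁻¹ ≤ bBvv p q ((1 + C ^ 2 + q ^ 2) / (q * (q - 1))) u v := by
    have hq10 : q - 1 ≠ 0 := by linarith
    have : bBvv p q ((1 + C ^ 2 + q ^ 2) / (q * (q - 1))) u v =
        v ^ (q - 2) * ((u ^ 2 * Z) * (s * q * (q - 1) - s * (1 - s) * q ^ 2 * β) + (1 + C ^ 2 + q ^ 2)) := by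
      simp only [bBvv]
      rw [r4, r5, ← hs, hβ, hwd]
      have r3' : (v ^ (q - 1)) ^ 2 = v ^ q * v ^ (q - 2) := by rw [← r3]; ring
      have r6 : (1 + C ^ 2 + q ^ 2) / (q * (q - 1)) * q * (q - 1) = 1 + C ^ 2 + q ^ 2 := by
        field_simp
      rw [hs, ← hZd, r6]
      linear_combination (2 / q - 1) * (2 / q - 1 - 1) * q ^ 2 * u ^ 2 * Z * (bw p q u v)⁻¹ * r3'
    rw [this]
    have t1 : s * (1 - s) * q ^ 2 * β ≤ 1 * 1 * q ^ 2 * 1 := by gcongr <;> linarith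
    have t2 : 0 ≤ s * q * (q - 1) := by
      have : 0 ≤ q - 1 := by linarith
      positivity
    have t3 : -(q ^ 2) ≤ (u ^ 2 * Z) * (s * q * (q - 1) - s * (1 - s) * q ^ 2 * β) := by
      have : -(q ^ 2) ≤ s * q * (q - 1) - s * (1 - s) * q ^ 2 * β := by linarith
      nlinarith [sq_nonneg q]
    have t4 : 1 + C ^ 2 ≤ (u ^ 2 * Z) * (s * q * (q - 1) - s * (1 - s) * q ^ 2 * β) + (1 + C ^ 2 + q ^ 2) := by
      linarith
    calc (1 + C ^ 2) * (bw p q u v ^ s)⁻¹ ≤ (1 + C ^ 2) * v ^ (q - 2) := by gcongr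
      _ ≤ _ := by rw [mul_comm]; gcongr
  exact hess_aux hW0 c1 c2 c3 a b
end bellman

/-! ### The heat semigroup on test functions -/

section heat
variable {n : ℕ}

lemma integrable_gauss {b : ℝ} (hb : 0 < b) :
    Integrable (fun z : Euc n => Real.exp (-b * ‖z‖ ^ 2)) := by
  by_contra h
  have h1 := GaussianFourier.integral_rexp_neg_mul_sq_norm (V := Euc n) hb
  rw [integral_undef h] at h1
  have : 0 < (Real.pi / b) ^ ((Module.finrank ℝ (Euc n) : ℝ) / 2) :=
    Real.rpow_pos_of_pos (div_pos Real.pi_pos hb) _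
  exact this.ne h1

/-- The normalized Gaussian density proportional to `exp (-‖z‖²/4)`. -/
def gd (z : Euc n) : ℝ :=
  (∫ y : Euc n, Real.exp (-(1 / 4) * ‖y‖ ^ 2))⁻¹ * Real.exp (-(1 / 4) * ‖z‖ ^ 2)

lemma gd_const_pos : 0 < (∫ y : Euc n, Real.exp (-(1 / 4) * ‖y‖ ^ 2))⁻¹ := by
  rw [GaussianFourier.integral_rexp_neg_mul_sq_norm (by norm_num)]
  exact inv_pos.2 (Real.rpow_pos_of_pos (div_pos Real.pi_pos (by norm_num)) _)

lemma gd_pos (z : Euc n) : 0 < gd z := mul_pos gd_const_pos (Real.exp_pos _)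

lemma gd_sm : Sm (gd (n := n)) := by
  unfold gd
  exact contDiff_const.mul (contDiff_const.mul (contDiff_norm_sq ℝ)).exp

lemma gd_integrable : Integrable (gd (n := n)) := (integrable_gauss (by norm_num)).const_mul _

lemma gd_integral : ∫ z : Euc n, gd z = 1 := by
  unfold gd
  rw [integral_const_mul]
  exact inv_mul_cancel₀ (inv_pos.1 gd_const_pos).ne'

lemma gd_le : ∀ z : Euc n, gd z ≤ gd (0 : Euc n) := fun z => by
  unfold gd
  refine mul_le_mul_of_nonneg_left (Real.exp_le_exp.2 ?_) gd_const_pos.le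
  simp

lemma pd_gd (i : Fin n) (z : Euc n) : pd i gd z = -(z i / 2) * gd z := by
  have h : HasFDerivAt (gd (n := n)) _ z :=
    ((((hasStrictFDerivAt_norm_sq z).hasFDerivAt.const_mul (-(1 / 4) : ℝ)).exp).const_mul
      (∫ y : Euc n, Real.exp (-(1 / 4) * ‖y‖ ^ 2))⁻¹)
  unfold pd
  rw [h.fderiv]
  simp [gd, EuclideanSpace.inner_single_right]
  ring

lemma gd_norm_integrable : Integrable (fun z : Euc n => gd z * ‖z‖) := by
  have h := (integrable_gauss (n := n) (b := 1 / 8) (by norm_num)).const_mul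
    ((∫ y : Euc n, Real.exp (-(1 / 4) * ‖y‖ ^ 2))⁻¹ * 8)
  refine h.mono' (gd_sm.continuous.mul continuous_norm).aestronglyMeasurable (ae_of_all _ fun z => ?_)
  have h0 := gd_pos z
  rw [Real.norm_of_nonneg (by positivity)]
  unfold gd
  rw [mul_assoc, mul_assoc]
  refine mul_le_mul_of_nonneg_left ?_ gd_const_pos.le
  have e : Real.exp (-(1 / 4) * ‖z‖ ^ 2)
      = Real.exp (-(1 / 8) * ‖z‖ ^ 2) * Real.exp (-(1 / 8 * ‖z‖ ^ 2)) := by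
    rw [← Real.exp_add]; congr 1; ring
  have h1 : ‖z‖ ≤ 8 * Real.exp (1 / 8 * ‖z‖ ^ 2) := by
    have := Real.add_one_le_exp (1 / 8 * ‖z‖ ^ 2)
    nlinarith [sq_nonneg (‖z‖ - 1), norm_nonneg z]
  rw [e, Real.exp_neg]
  have h2 := Real.exp_pos (1 / 8 * ‖z‖ ^ 2)
  have h3 := Real.exp_pos (-(1 / 8) * ‖z‖ ^ 2)
  calc _ = Real.exp (-(1 / 8) * ‖z‖ ^ 2) * (‖z‖ / Real.exp (1 / 8 * ‖z‖ ^ 2)) := by ring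
    _ ≤ Real.exp (-(1 / 8) * ‖z‖ ^ 2) * 8 := by
      gcongr; rwa [div_le_iff₀ h2]
    _ = _ := by ring

/-- The Gaussian probability measure with density `gd`. -/
def gm (n : ℕ) : Measure (Euc n) := volume.withDensity fun z => ENNReal.ofReal (gd z)

lemma integral_gm (f : Euc n → ℝ) : ∫ z, f z ∂gm n = ∫ z, gd z * f z := by
  unfold gm
  rw [integral_withDensity_eq_integral_toReal_smul
    gd_sm.continuous.measurable.ennreal_ofReal (by simp)]
  simp [ENNReal.toReal_ofReal (gd_pos _).le]

lemma integrable_gm_iff {f : Euc n → ℝ} :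
    Integrable f (gm n) ↔ Integrable (fun z => gd z * f z) := by
  unfold gm
  rw [integrable_withDensity_iff_integrable_smul'
    gd_sm.continuous.measurable.ennreal_ofReal (by simp)]
  simp [ENNReal.toReal_ofReal (gd_pos _).le]

instance : IsProbabilityMeasure (gm n) := by
  constructor
  unfold gm
  rw [withDensity_apply _ MeasurableSet.univ, Measure.restrict_univ,
    ← ofReal_integral_eq_lintegral_ofReal gd_integrable (ae_of_all _ fun z => (gd_pos z).le),
    gd_integral, ENNReal.ofReal_one]

/-- The heat semigroup `e^{tΔ} φ (x)`, written as a Gaussian average of `φ (x - √t z)`. -/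
def heat (t : ℝ) (φ : Euc n → ℝ) (x : Euc n) : ℝ := ∫ z, φ (x - Real.sqrt t • z) ∂gm n

lemma Tst.bdd {φ : Euc n → ℝ} (h : Tst φ) : ∃ M : ℝ, 0 ≤ M ∧ ∀ x, |φ x| ≤ M := by
  obtain ⟨M, hM⟩ := h.cs.exists_bound_of_continuous h.cont
  exact ⟨max M 0, le_max_right _ _, fun x => (hM x).trans (le_max_left _ _)⟩

lemma heat_integrand {φ : Euc n → ℝ} (h : Tst φ) (t : ℝ) (x : Euc n) :
    Integrable (fun z => φ (x - Real.sqrt t • z)) (gm n) := by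
  obtain ⟨M, -, hM⟩ := h.bdd
  refine (integrable_const M).mono' ?_ (ae_of_all _ fun z => hM _)
  exact (h.cont.comp (by fun_prop)).aestronglyMeasurable

lemma heat_continuous {φ : Euc n → ℝ} (h : Tst φ) :
    Continuous (fun y : ℝ × Euc n => heat y.1 φ y.2) := by
  obtain ⟨M, -, hM⟩ := h.bdd
  unfold heat
  refine continuous_of_dominated (bound := fun _ => M) (fun y => ?_)
    (fun y => ae_of_all _ fun z => hM _) (integrable_const M) (ae_of_all _ fun z => ?_)
  · exact (h.cont.comp (by fun_prop)).aestronglyMeasurable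
  · exact h.cont.comp (by fun_prop)

lemma heat_continuous_x {φ : Euc n → ℝ} (h : Tst φ) (t : ℝ) : Continuous (heat t φ) :=
  (heat_continuous h).comp (by fun_prop : Continuous fun x : Euc n => (t, x))

lemma heat_abs_le {φ : Euc n → ℝ} {M : ℝ} (hM : ∀ x, |φ x| ≤ M) (t : ℝ) (x : Euc n) :
    |heat t φ x| ≤ M := by
  unfold heat
  have := norm_integral_le_of_norm_le_const (μ := gm n)
    (f := fun z => φ (x - Real.sqrt t • z)) (C := M) (ae_of_all _ fun z => hM _)
  simpa using this

lemma heat_zero (φ : Euc n → ℝ) (x : Euc n) : heat 0 φ x = φ x := by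
  simp [heat]

lemma Sm.line {f : Euc n → ℝ} (hf : Sm f) (i : Fin n) (x : Euc n) (s : ℝ) :
    HasDerivAt (fun s : ℝ => f (x + s • ei i)) (_root_.pd i f (x + s • ei i)) s := by
  have h1 : HasDerivAt (fun s : ℝ => x + s • ei i) (ei i) s := by
    simpa using ((hasDerivAt_id s).smul_const (ei i)).const_add x
  exact (hf.diff _).hasFDerivAt.comp_hasDerivAt s h1

lemma pd_eq_of_line {f : Euc n → ℝ} {i : Fin n} {x : Euc n} {d : ℝ}
    (hf : DifferentiableAt ℝ f x)
    (h : HasDerivAt (fun s : ℝ => f (x + s • ei i)) d 0) : pd i f x = d := by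
  have h1 : HasDerivAt (fun s : ℝ => x + s • ei i) (ei i) 0 := by
    simpa using ((hasDerivAt_id (0 : ℝ)).smul_const (ei i)).const_add x
  have h2 : HasFDerivAt f (fderiv ℝ f x) (x + (0 : ℝ) • ei i) := by simpa using hf.hasFDerivAt
  exact (h2.comp_hasDerivAt (0 : ℝ) h1).unique h

lemma heat_sm {φ : Euc n → ℝ} (h : Tst φ) (t : ℝ) : Sm (heat t φ) := by
  have hm : Measurable fun z : Euc n => Real.sqrt t • z := by fun_prop
  have : heat t φ = convolution (fun _ : Euc n => (1 : ℝ)) φ (ContinuousLinearMap.mul ℝ ℝ)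
      ((gm n).map fun z => Real.sqrt t • z) := by
    ext x
    unfold heat convolution
    rw [integral_map hm.aemeasurable]
    · simp
    · simp only [ContinuousLinearMap.mul_apply', one_mul]
      exact (h.cont.comp (by fun_prop)).aestronglyMeasurable
  rw [this]
  have : IsProbabilityMeasure ((gm n).map fun z => Real.sqrt t • z) :=
    Measure.isProbabilityMeasure_map hm.aemeasurable
  exact h.cs.contDiff_convolution_right _ (locallyIntegrable_const _) h.sm

lemma heat_pd {φ : Euc n → ℝ} (h : Tst φ) (t : ℝ) (i : Fin n) :
    pd i (heat t φ) = heat t (pd i φ) := by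
  ext x
  refine pd_eq_of_line ((heat_sm h t).diff x) ?_
  obtain ⟨M, -, hM⟩ := (h.pd i).bdd
  have := hasDerivAt_integral_of_dominated_loc_of_deriv_le (μ := gm n) (𝕜 := ℝ)
    (F := fun s z => φ (x + s • ei i - Real.sqrt t • z))
    (F' := fun s z => pd i φ (x + s • ei i - Real.sqrt t • z)) (x₀ := 0) (s := Set.univ)
    (bound := fun _ => M) univ_mem
    (Eventually.of_forall fun s => (h.cont.comp (by fun_prop)).aestronglyMeasurable)
    (heat_integrand h t _)
    (((h.pd i).cont.comp (by fun_prop)).aestronglyMeasurable)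
    (ae_of_all _ fun z s _ => hM _) (integrable_const M)
    (ae_of_all _ fun z s _ => ?_)
  · simpa [heat] using this.2
  · have := h.sm.line i (x - Real.sqrt t • z) s
    have e : ∀ s : ℝ, x - Real.sqrt t • z + s • ei i = x + s • ei i - Real.sqrt t • z :=
      fun s => by abel
    simpa only [e] using this

lemma heat_sum {ι : Type*} (s : Finset ι) {F : ι → Euc n → ℝ} (hF : ∀ k, Tst (F k)) (t : ℝ)
    (x : Euc n) : heat t (fun y => ∑ k ∈ s, F k y) x = ∑ k ∈ s, heat t (F k) x := by
  unfold heat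
  exact integral_finsetSum _ fun k _ => heat_integrand (hF k) t x

lemma heat_lap {φ : Euc n → ℝ} (h : Tst φ) (t : ℝ) : lap (heat t φ) = heat t (lap φ) := by
  ext x
  unfold lap
  rw [heat_sum _ fun k => (h.pd k).pd k]
  refine Finset.sum_congr rfl fun i _ => ?_
  rw [heat_pd h, heat_pd (h.pd i)]

/-- Gaussian integration by parts. -/
lemma gauss_ibp {ψ : Euc n → ℝ} (h : Tst ψ) {t : ℝ} (ht : 0 < t) (i : Fin n) (x : Euc n) :
    ∫ z, gd z * (z i * ψ (x - Real.sqrt t • z)) = -(2 * Real.sqrt t) * heat t (pd i ψ) x := by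
  have hs := Real.sqrt_pos.2 ht
  have hsm : Sm fun z => ψ (x - Real.sqrt t • z) := h.sm.comp (by fun_prop)
  have hcs : HasCompactSupport fun z => ψ (x - Real.sqrt t • z) := by
    have := h.cs.comp_homeomorph ((Homeomorph.smulOfNeZero (Real.sqrt t) hs.ne').trans
      (Homeomorph.subLeft x))
    exact this
  have h1 := ibp gd_sm hsm (Or.inr hcs) i
  have h2 : ∀ z, pd i (fun z => ψ (x - Real.sqrt t • z)) z
      = -Real.sqrt t * pd i ψ (x - Real.sqrt t • z) := by
    intro z
    refine pd_eq_of_line (hsm.diff z) ?_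
    have h3 : HasDerivAt (fun s : ℝ => x - Real.sqrt t • (z + s • ei i)) (-(Real.sqrt t • ei i)) 0 := by
      have : HasDerivAt (fun s : ℝ => z + s • ei i) (ei i) 0 := by
        simpa using ((hasDerivAt_id (0 : ℝ)).smul_const (ei i)).const_add z
      exact (this.const_smul (Real.sqrt t)).const_sub x
    have h4 := (h.sm.diff (x - Real.sqrt t • (z + (0 : ℝ) • ei i))).hasFDerivAt.comp_hasDerivAt
      (0 : ℝ) h3
    refine h4.congr_deriv ?_
    simp [pd]
  simp only [h2, pd_gd] at h1
  unfold heat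
  rw [integral_gm]
  have e1 : ∫ z, gd z * (-Real.sqrt t * pd i ψ (x - Real.sqrt t • z))
      = -Real.sqrt t * ∫ z, gd z * pd i ψ (x - Real.sqrt t • z) := by
    rw [← integral_const_mul]; congr 1; ext z; ring
  have e2 : ∫ z, -(z i / 2) * gd z * ψ (x - Real.sqrt t • z)
      = -(1 / 2) * ∫ z, gd z * (z i * ψ (x - Real.sqrt t • z)) := by
    rw [← integral_const_mul]; congr 1; ext z; ring
  rw [e1, e2] at h1
  linarith

lemma fderiv_eq_sum (f : Euc n → ℝ) (x z : Euc n) : fderiv ℝ f x z = ∑ i, z i * pd i f x := by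
  have hx : z = ∑ i, z i • ei i := by
    ext j
    simp [Finset.sum_apply, Pi.single_apply]
  conv_lhs => rw [hx]
  simp [pd]

/-- The heat equation. -/
lemma heat_dt {φ : Euc n → ℝ} (h : Tst φ) {t : ℝ} (ht : 0 < t) (x : Euc n) :
    HasDerivAt (fun t => heat t φ x) (heat t (lap φ) x) t := by
  obtain ⟨M, hM0, hM⟩ : ∃ M : ℝ, 0 ≤ M ∧ ∀ x, ‖fderiv ℝ φ x‖ ≤ M := by
    obtain ⟨M, hM⟩ := (h.cs.fderiv ℝ).exists_bound_of_continuous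
      (h.sm.continuous_fderiv (by simp))
    exact ⟨max M 0, le_max_right _ _, fun x => (hM x).trans (le_max_left _ _)⟩
  have hz : Integrable (fun z : Euc n => ‖z‖) (gm n) := integrable_gm_iff.2 gd_norm_integrable
  have key := hasDerivAt_integral_of_dominated_loc_of_deriv_le (μ := gm n) (𝕜 := ℝ)
    (F := fun t z => φ (x - Real.sqrt t • z))
    (F' := fun t z => fderiv ℝ φ (x - Real.sqrt t • z) (-((1 / (2 * Real.sqrt t)) • z)))
    (x₀ := t) (s := Set.Ioi (t / 2))
    (bound := fun z => M * (1 / (2 * Real.sqrt (t / 2)) * ‖z‖)) (Ioi_mem_nhds (by linarith))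
    (Eventually.of_forall fun s => (h.cont.comp (by fun_prop)).aestronglyMeasurable)
    (heat_integrand h t _)
    (by
      refine Continuous.aestronglyMeasurable ?_
      exact ((h.sm.continuous_fderiv (by simp)).comp (by fun_prop)).clm_apply (by fun_prop))
    (ae_of_all _ fun z s hs => ?_) ((hz.const_mul _).const_mul _)
    (ae_of_all _ fun z s hs => ?_)
  · have h2 := key.2
    refine h2.congr_deriv ?_
    have hsq := Real.sqrt_pos.2 ht
    have e : ∀ z, fderiv ℝ φ (x - Real.sqrt t • z) (-((1 / (2 * Real.sqrt t)) • z))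
        = ∑ i, -(1 / (2 * Real.sqrt t)) * (z i * pd i φ (x - Real.sqrt t • z)) := by
      intro z
      rw [fderiv_eq_sum]
      refine Finset.sum_congr rfl fun i _ => ?_
      simp; ring
    simp only [e]
    rw [integral_finsetSum]
    · have : lap φ = fun y => ∑ i, pd i (pd i φ) y := rfl
      rw [this, heat_sum _ fun k => (h.pd k).pd k]
      refine Finset.sum_congr rfl fun i _ => ?_
      rw [integral_const_mul, integral_gm, gauss_ibp (h.pd i) ht]
      field_simp
    · intro i _
      refine Integrable.const_mul ?_ _
      obtain ⟨M', -, hM'⟩ := (h.pd i).bdd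
      refine (hz.const_mul M').mono' ?_ (ae_of_all _ fun z => ?_)
      · exact (Continuous.mul (by fun_prop) ((h.pd i).cont.comp (by fun_prop))).aestronglyMeasurable
      · rw [norm_mul, mul_comm]
        exact mul_le_mul (hM' _) (PiLp.norm_apply_le z i) (norm_nonneg _) ((abs_nonneg _).trans (hM' 0))
  · refine (ContinuousLinearMap.le_opNorm _ _).trans ?_
    have hs0 : (0 : ℝ) < t / 2 := by linarith
    have hs' : t / 2 ≤ s := le_of_lt hs
    rw [norm_neg, norm_smul, Real.norm_of_nonneg (by positivity)]
    gcongr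
    exact hM _
  · have hs0 : s ≠ 0 := by have : t / 2 < s := hs; linarith
    have h3 : HasDerivAt (fun s : ℝ => x - Real.sqrt s • z) (-((1 / (2 * Real.sqrt s)) • z)) s :=
      ((Real.hasDerivAt_sqrt hs0).smul_const z).const_sub x
    exact (h.sm.diff _).hasFDerivAt.comp_hasDerivAt s h3

end heat

/-! ### `L^p` bounds, decay and the energy identity for the heat flow -/

section heat2
variable {n : ℕ}

/-- Averages over translates of a compactly supported function are integrable, with the same mass. -/
lemma translates_integrable {ψ : Euc n → ℝ} (hc : Continuous ψ) (hs : HasCompactSupport ψ) (t : ℝ) :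
    Integrable (fun y : Euc n × Euc n => ψ (y.1 - Real.sqrt t • y.2)) (volume.prod (gm n)) := by
  have hi : Integrable ψ := hc.integrable_of_hasCompactSupport hs
  have hcc : Continuous fun y : Euc n × Euc n => ψ (y.1 - Real.sqrt t • y.2) :=
    hc.comp (by fun_prop)
  rw [integrable_prod_iff' hcc.aestronglyMeasurable]
  have h1 : ∀ z : Euc n, Integrable fun x => ψ (x - Real.sqrt t • z) := fun z =>
    hi.comp_sub_right (Real.sqrt t • z)
  have h2 : ∀ z : Euc n, ∫ x, ‖ψ (x - Real.sqrt t • z)‖ = ∫ x, ‖ψ x‖ := fun z =>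
    integral_sub_right_eq_self (fun x => ‖ψ x‖) (Real.sqrt t • z)
  constructor
  · exact ae_of_all _ h1
  · simp only [h2]
    exact integrable_const _

/-- The heat semigroup contracts `L^p`: Jensen's inequality for the Gaussian average, and translation
invariance of Lebesgue measure. -/
lemma heat_pow {φ : Euc n → ℝ} (h : Tst φ) (t : ℝ) {p : ℝ} (hp : 1 ≤ p) :
    Integrable (fun x => |heat t φ x| ^ p) ∧ ∫ x, |heat t φ x| ^ p ≤ ∫ x, |φ x| ^ p := by
  have hp0 : 0 < p := by linarith
  have hc : Continuous fun x => |φ x| ^ p :=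
    h.cont.abs.rpow_const fun _ => Or.inr hp0.le
  have hs : HasCompactSupport fun x => |φ x| ^ p :=
    h.cs.comp_left (g := fun y => |y| ^ p) (by simp [hp0.ne'])
  have hI := translates_integrable hc hs t
  have hpt : ∀ x, |heat t φ x| ^ p ≤ ∫ z, |φ (x - Real.sqrt t • z)| ^ p ∂gm n := by
    intro x
    obtain ⟨M, hM0, hM⟩ := h.bdd
    have h1 : |heat t φ x| ≤ ∫ z, |φ (x - Real.sqrt t • z)| ∂gm n := abs_integral_le_integral_abs
    refine (Real.rpow_le_rpow (abs_nonneg _) h1 hp0.le).trans ?_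
    refine (convexOn_rpow hp).map_integral_le
      (continuousOn_id.rpow_const fun _ _ => Or.inr hp0.le) isClosed_Ici
      (ae_of_all _ fun z => Set.mem_Ici.2 (abs_nonneg _)) (heat_integrand h t x).abs ?_
    refine (integrable_const (M ^ p)).mono' ?_ (ae_of_all _ fun z => ?_)
    · exact (hc.comp (by fun_prop : Continuous fun z => x - Real.sqrt t • z)).aestronglyMeasurable
    · simp only [Function.comp]
      rw [Real.norm_of_nonneg (by positivity)]
      exact Real.rpow_le_rpow (abs_nonneg _) (hM _) hp0.le
  have hint : Integrable (fun x => |heat t φ x| ^ p) := by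
    refine hI.integral_prod_left.mono' ?_ (ae_of_all _ fun x => ?_)
    · exact ((heat_continuous_x h t).abs.rpow_const fun _ => Or.inr hp0.le).aestronglyMeasurable
    · rw [Real.norm_of_nonneg (by positivity)]; exact hpt x
  refine ⟨hint, (integral_mono hint hI.integral_prod_left hpt).trans ?_⟩
  rw [integral_integral_swap hI]
  have : ∀ z : Euc n, ∫ x, |φ (x - Real.sqrt t • z)| ^ p = ∫ x, |φ x| ^ p := fun z =>
    integral_sub_right_eq_self (fun x => |φ x| ^ p) _
  simp [this]

lemma heat_L1 {φ : Euc n → ℝ} (h : Tst φ) (t : ℝ) :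
    Integrable (heat t φ) ∧ ∫ x, |heat t φ x| ≤ ∫ x, |φ x| := by
  have := heat_pow h t le_rfl
  simp only [Real.rpow_one] at this
  exact ⟨(integrable_norm_iff (heat_continuous_x h t).aestronglyMeasurable).1 this.1, this.2⟩

lemma heat_mul_integrable {φ ψ : Euc n → ℝ} (h : Tst φ) (h' : Tst ψ) (t : ℝ) :
    Integrable fun x => heat t φ x * heat t ψ x := by
  obtain ⟨M, hM0, hM⟩ := h'.bdd
  exact (heat_L1 h t).1.mul_bdd (c := M) (heat_continuous_x h' t).aestronglyMeasurable
    (ae_of_all _ fun x => heat_abs_le hM t x)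

lemma heat_ibp {φ ψ : Euc n → ℝ} (h : Tst φ) (h' : Tst ψ) (t : ℝ) (i : Fin n) :
    ∫ x, heat t φ x * heat t (pd i ψ) x = - ∫ x, heat t (pd i φ) x * heat t ψ x := by
  have := integral_mul_fderiv_eq_neg_fderiv_mul_of_integrable (μ := (volume : Measure (Euc n)))
    (f := heat t φ) (g := heat t ψ) (v := EuclideanSpace.single i 1)
    (by change Integrable fun x => pd i (heat t φ) x * heat t ψ x
        rw [heat_pd h]; exact heat_mul_integrable (h.pd i) h' t)
    (by change Integrable fun x => heat t φ x * pd i (heat t ψ) x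
        rw [heat_pd h']; exact heat_mul_integrable h (h'.pd i) t)
    (heat_mul_integrable h h' t)
    (fun x _ => (heat_sm h t).diff x) (fun x _ => (heat_sm h' t).diff x)
  change ∫ x, heat t φ x * pd i (heat t ψ) x = - ∫ x, pd i (heat t φ) x * heat t ψ x at this
  rwa [heat_pd h, heat_pd h'] at this

lemma heat_ibp_lap {φ ψ : Euc n → ℝ} (h : Tst φ) (h' : Tst ψ) (t : ℝ) :
    ∫ x, heat t φ x * heat t (lap ψ) x = ∫ x, heat t (lap φ) x * heat t ψ x := by
  have e : ∀ {φ : Euc n → ℝ}, Tst φ → ∀ x, heat t (lap φ) x = ∑ i, heat t (pd i (pd i φ)) x :=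
    fun h x => heat_sum (F := fun i => pd i (pd i _)) _ (fun k => (h.pd k).pd k) t x
  simp only [e h, e h', Finset.mul_sum, Finset.sum_mul]
  rw [integral_finsetSum _ fun i _ => heat_mul_integrable h ((h'.pd i).pd i) t,
    integral_finsetSum _ fun i _ => heat_mul_integrable ((h.pd i).pd i) h' t]
  refine Finset.sum_congr rfl fun i _ => ?_
  rw [heat_ibp h (h'.pd i), heat_ibp (h.pd i) h', neg_neg]

/-- Decay of order `t^(-n/2)`, from the boundedness of the Gaussian density. -/
lemma heat_decay {φ : Euc n → ℝ} (h : Tst φ) {t : ℝ} (ht : 0 < t) (x : Euc n) :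
    |heat t φ x| ≤ gd (0 : Euc n) * ((Real.sqrt t ^ n)⁻¹ * ∫ y, |φ y|) := by
  have hs := Real.sqrt_pos.2 ht
  have hcs : HasCompactSupport fun z => φ (x - Real.sqrt t • z) :=
    h.cs.comp_homeomorph ((Homeomorph.smulOfNeZero (Real.sqrt t) hs.ne').trans (Homeomorph.subLeft x))
  have hint : Integrable fun z => |φ (x - Real.sqrt t • z)| :=
    (Continuous.integrable_of_hasCompactSupport (h.cont.comp (by fun_prop)) hcs).abs
  have h1 : |heat t φ x| ≤ ∫ z, |φ (x - Real.sqrt t • z)| ∂gm n := abs_integral_le_integral_abs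
  rw [integral_gm] at h1
  refine h1.trans ?_
  have h2 : ∫ z, gd z * |φ (x - Real.sqrt t • z)| ≤ ∫ z, gd (0 : Euc n) * |φ (x - Real.sqrt t • z)| := by
    refine integral_mono (integrable_gm_iff.1 (heat_integrand h t x).abs) (hint.const_mul _) fun z => ?_
    exact mul_le_mul_of_nonneg_right (gd_le z) (abs_nonneg _)
  refine h2.trans (le_of_eq ?_)
  rw [integral_const_mul]
  congr 1
  have h3 := Measure.integral_comp_smul (volume : Measure (Euc n)) (fun z => |φ (x - z)|) (Real.sqrt t)
  rw [h3, integral_sub_left_eq_self (fun y => |φ y|) volume x]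
  rw [finrank_euclideanSpace_fin, abs_of_pos (by positivity), smul_eq_mul]

lemma heat_mul_integrable_prod {φ ψ : Euc n → ℝ} (h : Tst φ) (h' : Tst ψ) (T : ℝ) :
    Integrable (fun y : ℝ × Euc n => heat y.1 φ y.2 * heat y.1 ψ y.2)
      ((volume.restrict (Set.Ioc 0 T)).prod volume) := by
  have hm : AEStronglyMeasurable (fun y : ℝ × Euc n => heat y.1 φ y.2 * heat y.1 ψ y.2)
      ((volume.restrict (Set.Ioc 0 T)).prod volume) :=
    ((heat_continuous h).mul (heat_continuous h')).aestronglyMeasurable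
  rw [integrable_prod_iff hm]
  refine ⟨ae_of_all _ fun t => heat_mul_integrable h h' t, ?_⟩
  obtain ⟨M, hM0, hM⟩ := h'.bdd
  refine (integrable_const ((∫ x, |φ x|) * M)).mono' hm.norm.integral_prod_right'
    (ae_of_all _ fun t => ?_)
  rw [Real.norm_of_nonneg (integral_nonneg fun _ => norm_nonneg _)]
  calc ∫ x, ‖heat t φ x * heat t ψ x‖ ≤ ∫ x, |heat t φ x| * M := by
        refine integral_mono (heat_mul_integrable h h' t).norm ((heat_L1 h t).1.abs.mul_const M) fun x => ?_
        simp only [norm_mul, Real.norm_eq_abs]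
        exact mul_le_mul_of_nonneg_left (heat_abs_le hM t x) (abs_nonneg _)
    _ ≤ _ := by
        rw [integral_mul_const]
        exact mul_le_mul_of_nonneg_right (heat_L1 h t).2 hM0

/-- `∫ h g = ∫ (e^{TΔ}h)(e^{TΔ}g) - 2 ∫₀ᵀ ∫ (e^{tΔ}Δh)(e^{tΔ}g)`. -/
lemma heat_energy {h g : Euc n → ℝ} (hh : Tst h) (hg : Tst g) {T : ℝ} (hT : 0 < T) :
    ∫ x, h x * g x = (∫ x, heat T h x * heat T g x)
      - 2 * ∫ t in Set.Ioc 0 T, ∫ x, heat t (lap h) x * heat t g x := by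
  have hpt : ∀ x, heat T h x * heat T g x - h x * g x =
      ∫ t in Set.Ioc 0 T, (heat t (lap h) x * heat t g x + heat t h x * heat t (lap g) x) := by
    intro x
    have hc : ∀ {φ : Euc n → ℝ}, Tst φ → Continuous fun t : ℝ => heat t φ x := fun hφ =>
      (heat_continuous hφ).comp (by fun_prop : Continuous fun t : ℝ => (t, x))
    rw [← intervalIntegral.integral_of_le hT.le,
      intervalIntegral.integral_eq_sub_of_hasDerivAt_of_le
        (f := fun t => heat t h x * heat t g x) hT.le ((hc hh).mul (hc hg)).continuousOn
        (fun t ht => (heat_dt hh ht.1 x).mul (heat_dt hg ht.1 x))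
        ((((hc hh.lap).mul (hc hg)).add ((hc hh).mul (hc hg.lap))).intervalIntegrable _ _)]
    simp [heat_zero]
  have hP := (heat_mul_integrable_prod hh.lap hg T).add (heat_mul_integrable_prod hh hg.lap T)
  have h1 : ∫ x, (heat T h x * heat T g x - h x * g x) =
      ∫ t in Set.Ioc 0 T, ∫ x, (heat t (lap h) x * heat t g x + heat t h x * heat t (lap g) x) := by
    simp only [hpt]
    exact (integral_integral_swap hP).symm
  have h2 : ∀ t, ∫ x, (heat t (lap h) x * heat t g x + heat t h x * heat t (lap g) x)
      = 2 * ∫ x, heat t (lap h) x * heat t g x := by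
    intro t
    rw [integral_add (heat_mul_integrable hh.lap hg t) (heat_mul_integrable hh hg.lap t),
      heat_ibp_lap hh hg]
    ring
  have hi : Integrable fun x => h x * g x :=
    Continuous.integrable_of_hasCompactSupport (hh.cont.mul hg.cont) hh.cs.mul_right
  rw [integral_sub (heat_mul_integrable hh hg T) hi] at h1
  simp only [h2] at h1
  rw [integral_const_mul] at h1
  linarith

/-- The Littlewood–Paley type bilinear form attached to the heat semigroup. -/
def Qf (i j : Fin n) (f g : Euc n → ℝ) : ℝ≥0∞ :=
  ∫⁻ t in Set.Ioi (0 : ℝ), ∫⁻ x, ‖heat t (pd i f) x * heat t (pd j g) x‖ₑ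

/-- The pairing of a second derivative of `u` with `g` is controlled by the form `Qf` of `Δu` and `g`:
integrate the energy identity by parts in space; the boundary term at time `T` vanishes as `T → ∞`. -/
lemma heat_repr [NeZero n] {u g : Euc n → ℝ} (hu : Tst u) (hg : Tst g) (i j : Fin n) :
    ENNReal.ofReal |∫ x, pd i (pd j u) x * g x| ≤ 2 * Qf j i (lap u) g := by
  have hh : Tst (pd i (pd j u)) := (hu.pd j).pd i
  obtain ⟨M, hM0, hM⟩ := hg.bdd
  have key : ∀ T : ℝ, 0 < T → ENNReal.ofReal |∫ x, pd i (pd j u) x * g x| ≤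
      ENNReal.ofReal (gd (0 : Euc n) * ((Real.sqrt T ^ n)⁻¹ * ∫ y, |pd i (pd j u) y|) * ∫ x, |g x|)
        + 2 * Qf j i (lap u) g := by
    intro T hT
    rw [heat_energy hh hg hT]
    have e : ∀ t, ∫ x, heat t (lap (pd i (pd j u))) x * heat t g x
        = - ∫ x, heat t (pd j (lap u)) x * heat t (pd i g) x := by
      intro t
      rw [← pd_lap (hu.pd j).sm, ← pd_lap hu.sm, heat_ibp (hu.lap.pd j) hg, neg_neg]
    simp only [e, integral_neg, mul_neg, sub_neg_eq_add]
    refine (ENNReal.ofReal_le_ofReal (abs_add_le _ _)).trans ?_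
    refine ENNReal.ofReal_add_le.trans (add_le_add ?_ ?_)
    · refine ENNReal.ofReal_le_ofReal ?_
      refine abs_integral_le_integral_abs.trans ?_
      refine (integral_mono (heat_mul_integrable hh hg T).abs
        ((heat_L1 hg T).1.abs.const_mul
          (gd (0 : Euc n) * ((Real.sqrt T ^ n)⁻¹ * ∫ y, |pd i (pd j u) y|))) fun x => ?_).trans ?_
      · simp only [abs_mul]
        exact mul_le_mul_of_nonneg_right (heat_decay hh hT x) (abs_nonneg _)
      · rw [integral_const_mul]
        refine mul_le_mul_of_nonneg_left (heat_L1 hg T).2 ?_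
        have := gd_pos (0 : Euc n)
        have : 0 ≤ ∫ y, |pd i (pd j u) y| := integral_nonneg fun _ => abs_nonneg _
        positivity
    · rw [abs_mul, abs_two, ENNReal.ofReal_mul (by norm_num), ENNReal.ofReal_ofNat]
      refine mul_le_mul_right ?_ 2
      rw [← Real.norm_eq_abs, ofReal_norm]
      refine (enorm_integral_le_lintegral_enorm _).trans ?_
      refine (lintegral_mono fun t => enorm_integral_le_lintegral_enorm _).trans ?_
      exact lintegral_mono_set Set.Ioc_subset_Ioi_self
  have hlim : Tendsto (fun T : ℝ => ENNReal.ofReal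
      (gd (0 : Euc n) * ((Real.sqrt T ^ n)⁻¹ * ∫ y, |pd i (pd j u) y|) * ∫ x, |g x|)
        + 2 * Qf j i (lap u) g) atTop (𝓝 (0 + 2 * Qf j i (lap u) g)) := by
    refine Tendsto.add ?_ tendsto_const_nhds
    rw [← ENNReal.ofReal_zero]
    refine ENNReal.tendsto_ofReal ?_
    have h0 : Tendsto (fun T : ℝ => (Real.sqrt T ^ n)⁻¹) atTop (𝓝 0) :=
      ((tendsto_pow_atTop (NeZero.ne n)).comp Real.tendsto_sqrt_atTop).inv_tendsto_atTop
    have := ((h0.mul_const (∫ y, |pd i (pd j u) y|)).const_mul (gd (0 : Euc n))).mul_const (∫ x, |g x|)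
    simpa using this
  rw [zero_add] at hlim
  exact ge_of_tendsto hlim ((eventually_gt_atTop 0).mono key)

end heat2

/-! ### Cutoffs and the chain rule for the Bellman function -/

section cutoff
variable {n : ℕ}

/-- A fixed smooth cutoff, equal to `1` on the unit ball and supported in the ball of radius `2`. -/
def cut (x : Euc n) : ℝ :=
  (⟨1, 2, by norm_num, by norm_num⟩ : ContDiffBump (0 : Euc n)) x

lemma cut_tst : Tst (cut (n := n)) :=
  ⟨ContDiffBump.contDiff _, ContDiffBump.hasCompactSupport _⟩
lemma cut_nonneg (x : Euc n) : 0 ≤ cut x := ContDiffBump.nonneg _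
lemma cut_le_one (x : Euc n) : cut x ≤ 1 := ContDiffBump.le_one _
lemma cut_one {x : Euc n} (h : ‖x‖ ≤ 1) : cut x = 1 :=
  ContDiffBump.one_of_mem_closedBall _ (by simpa using h)
lemma cut_zero {x : Euc n} (h : 2 ≤ ‖x‖) : cut x = 0 :=
  ContDiffBump.zero_of_le_dist _ (by simpa using h)

lemma pd_comp_smul {f : Euc n → ℝ} (hf : Sm f) (c : ℝ) (i : Fin n) :
    pd i (fun x => f (c • x)) = fun x => c * pd i f (c • x) := by
  ext x
  have hsm : Sm fun x => f (c • x) := hf.comp (by fun_prop)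
  refine pd_eq_of_line (hsm.diff x) ?_
  have h3 : HasDerivAt (fun s : ℝ => c • (x + s • ei i)) (c • ei i) 0 := by
    have : HasDerivAt (fun s : ℝ => x + s • ei i) (ei i) 0 := by
      simpa using ((hasDerivAt_id (0 : ℝ)).smul_const (ei i)).const_add x
    exact this.const_smul c
  have h4 := (hf.diff (c • (x + (0 : ℝ) • ei i))).hasFDerivAt.comp_hasDerivAt (0 : ℝ) h3
  refine h4.congr_deriv ?_
  simp [pd]

lemma pd_const_mul {f : Euc n → ℝ} (hf : Differentiable ℝ f) (c : ℝ) (i : Fin n) :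
    pd i (fun x => c * f x) = fun x => c * pd i f x := by
  ext x
  simp only [pd]
  rw [fderiv_const_mul (hf x)]
  simp

lemma lap_comp_smul {f : Euc n → ℝ} (hf : Sm f) (c : ℝ) (x : Euc n) :
    lap (fun x => f (c • x)) x = c ^ 2 * lap f (c • x) := by
  simp only [lap, Finset.mul_sum]
  refine Finset.sum_congr rfl fun i _ => ?_
  have h1 : Sm fun x => pd i f (c • x) := (hf.pd i).comp (by fun_prop)
  rw [pd_comp_smul hf, pd_const_mul h1.diff, pd_comp_smul (hf.pd i)]
  ring

lemma Tst.comp_smul {f : Euc n → ℝ} (hf : Tst f) {c : ℝ} (hc : c ≠ 0) :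
    Tst fun x => f (c • x) :=
  ⟨hf.sm.comp (by fun_prop), hf.cs.comp_homeomorph (Homeomorph.smulOfNeZero c hc)⟩

end cutoff

section bell
variable {n : ℕ}

/-- Strict positivity of the heat flow of nontrivial nonnegative data, which keeps the Bellman
function inside the open quadrant where it is smooth. -/
lemma heat_pos {a : Euc n → ℝ} (ha : Tst a) (h0 : ∀ x, 0 ≤ a x) {y : Euc n} (hy : a y ≠ 0) {t : ℝ}
    (ht : 0 < t) (x : Euc n) : 0 < heat t a x := by
  have hs := (Real.sqrt_pos.2 ht).ne'
  unfold heat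
  rw [integral_gm]
  have hc : Continuous fun z => gd z * a (x - Real.sqrt t • z) :=
    gd_sm.continuous.mul (ha.cont.comp (by fun_prop))
  refine integral_pos_of_integrable_nonneg_nonzero (x := (Real.sqrt t)⁻¹ • (x - y)) hc
    (integrable_gm_iff.1 (heat_integrand ha t x)) (fun z => mul_nonneg (gd_pos z).le (h0 _)) ?_
  rw [smul_inv_smul₀ hs, sub_sub_cancel]
  exact mul_ne_zero (gd_pos _).ne' hy

/-- Chain rule for the Laplacian of the Bellman function. -/
lemma lap_bB (p q K : ℝ) {F G : Euc n → ℝ} (hF : Sm F) (hG : Sm G) (hF0 : ∀ x, 0 < F x)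
    (hG0 : ∀ x, 0 < G x) (x : Euc n) :
    lap (fun x => bB p q K (F x) (G x)) x =
      bBu p q (F x) (G x) * lap F x + bBv p q K (F x) (G x) * lap G x
      + ∑ k, (bBuu p q (F x) (G x) * pd k F x ^ 2 + 2 * bBuv p q (F x) (G x) * pd k F x * pd k G x
        + bBvv p q K (F x) (G x) * pd k G x ^ 2) := by
  have hb : Sm (fun x => bB p q K (F x) (G x)) :=
    contDiffOn_univ.1 (bB_contDiffOn p q K hF.contDiffOn hG.contDiffOn (fun x _ => hF0 x)
      fun x _ => hG0 x)
  have h1 : ∀ k, pd k (fun x => bB p q K (F x) (G x)) = fun x =>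
      bBu p q (F x) (G x) * pd k F x + bBv p q K (F x) (G x) * pd k G x := by
    intro k
    ext y
    refine pd_eq_of_line (hb.diff y) ?_
    have := bB_hasDerivAt p q K (hF.line k y 0) (hG.line k y 0) (hF0 _) (hG0 _)
    simpa using this
  simp only [lap, Finset.mul_sum, ← Finset.sum_add_distrib]
  refine Finset.sum_congr rfl fun k _ => ?_
  refine pd_eq_of_line ((hb.pd k).diff x) ?_
  simp only [h1]
  have hu := bBu_hasDerivAt p q (hF.line k x 0) (hG.line k x 0) (hF0 _) (hG0 _)
  have hv := bBv_hasDerivAt p q K (hF.line k x 0) (hG.line k x 0) (hF0 _) (hG0 _)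
  refine ((hu.mul ((hF.pd k).line k x 0)).add (hv.mul ((hG.pd k).line k x 0))).congr_deriv ?_
  simp only [zero_smul, add_zero]
  ring

/-- Differentiation under the integral sign against a compactly supported weight. -/
lemma hasDerivAt_integral_cs {b b' : ℝ → Euc n → ℝ} {χ : Euc n → ℝ}
    (hb : ContinuousOn (fun y : ℝ × Euc n => b y.1 y.2) (Set.Ioi 0 ×ˢ Set.univ))
    (hb' : ContinuousOn (fun y : ℝ × Euc n => b' y.1 y.2) (Set.Ioi 0 ×ˢ Set.univ))
    (hχ : Continuous χ) (hs : HasCompactSupport χ)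
    (hd : ∀ t, 0 < t → ∀ x, HasDerivAt (fun t => b t x) (b' t x) t) {t : ℝ} (ht : 0 < t) :
    HasDerivAt (fun t => ∫ x, b t x * χ x) (∫ x, b' t x * χ x) t := by
  have slice : ∀ {c : ℝ → Euc n → ℝ}, ContinuousOn (fun y : ℝ × Euc n => c y.1 y.2)
      (Set.Ioi 0 ×ˢ Set.univ) → ∀ s, 0 < s → Continuous fun x => c s x * χ x := by
    intro c hc s hs
    have : Continuous fun x => c s x :=
      hc.comp_continuous (by fun_prop : Continuous fun x : Euc n => (s, x)) fun x => by simpa using hs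
    exact this.mul hχ
  obtain ⟨C, hC⟩ : ∃ C, ∀ y ∈ Set.Icc (t / 2) (2 * t) ×ˢ tsupport χ, ‖b' y.1 y.2 * χ y.2‖ ≤ C := by
    refine (isCompact_Icc.prod hs).exists_bound_of_continuousOn ?_
    refine (hb'.mono ?_).mul (hχ.comp continuous_snd).continuousOn
    rintro ⟨s, x⟩ h
    have : t / 2 ≤ s := h.1.1
    exact ⟨by simp; linarith, trivial⟩
  refine (hasDerivAt_integral_of_dominated_loc_of_deriv_le (μ := volume) (𝕜 := ℝ)
    (F := fun s x => b s x * χ x) (F' := fun s x => b' s x * χ x)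
    (x₀ := t) (s := Set.Ioo (t / 2) (2 * t)) (bound := (tsupport χ).indicator fun _ => C)
    (Ioo_mem_nhds (by linarith) (by linarith)) ?_ ?_ ?_ ?_ ?_ ?_).2
  · filter_upwards [Ioi_mem_nhds ht] with s hs
    exact (slice hb s hs).aestronglyMeasurable
  · exact (slice hb t ht).integrable_of_hasCompactSupport hs.mul_left
  · exact (slice hb' t ht).aestronglyMeasurable
  · refine ae_of_all _ fun x s hs => ?_
    by_cases hx : x ∈ tsupport χ
    · rw [Set.indicator_of_mem hx]
      exact hC (s, x) ⟨⟨hs.1.le, hs.2.le⟩, hx⟩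
    · rw [Set.indicator_of_notMem hx, image_eq_zero_of_notMem_tsupport hx]; simp
  · exact (integrable_indicator_iff (isClosed_tsupport χ).measurableSet).2
      (integrableOn_const hs.measure_lt_top.ne)
  · refine ae_of_all _ fun x s hs => ?_
    have : 0 < s := by have := hs.1; linarith
    exact (hd s this x).mul_const _

lemma bBu_continuousOn {E : Type*} [TopologicalSpace E] (p q : ℝ) {s : Set E} {F G : E → ℝ}
    (hF : ContinuousOn F s) (hG : ContinuousOn G s)
    (hF0 : ∀ x ∈ s, 0 < F x) (hG0 : ∀ x ∈ s, 0 < G x) :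
    ContinuousOn (fun x => bBu p q (F x) (G x)) s := by
  have hr : ∀ r : ℝ, ContinuousOn (fun x => F x ^ r) s := fun r =>
    hF.rpow_const fun x hx => Or.inl (hF0 x hx).ne'
  have hr' : ∀ r : ℝ, ContinuousOn (fun x => G x ^ r) s := fun r =>
    hG.rpow_const fun x hx => Or.inl (hG0 x hx).ne'
  have hw : ∀ r : ℝ, ContinuousOn (fun x => bw p q (F x) (G x) ^ r) s := fun r =>
    ((hr p).add (hr' q)).rpow_const fun x hx => Or.inl (bw_pos (hF0 x hx) (hG0 x hx)).ne'
  unfold bBu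
  exact ((continuousOn_const.mul hF).mul (hw _)).add
    (((continuousOn_const.mul (hF.pow 2)).mul (hr _)).mul (hw _))

lemma bBv_continuousOn {E : Type*} [TopologicalSpace E] (p q K : ℝ) {s : Set E} {F G : E → ℝ}
    (hF : ContinuousOn F s) (hG : ContinuousOn G s)
    (hF0 : ∀ x ∈ s, 0 < F x) (hG0 : ∀ x ∈ s, 0 < G x) :
    ContinuousOn (fun x => bBv p q K (F x) (G x)) s ∧
      ContinuousOn (fun x => bB p q K (F x) (G x)) s := by
  have hr : ∀ r : ℝ, ContinuousOn (fun x => F x ^ r) s := fun r =>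
    hF.rpow_const fun x hx => Or.inl (hF0 x hx).ne'
  have hr' : ∀ r : ℝ, ContinuousOn (fun x => G x ^ r) s := fun r =>
    hG.rpow_const fun x hx => Or.inl (hG0 x hx).ne'
  have hw : ∀ r : ℝ, ContinuousOn (fun x => bw p q (F x) (G x) ^ r) s := fun r =>
    ((hr p).add (hr' q)).rpow_const fun x hx => Or.inl (bw_pos (hF0 x hx) (hG0 x hx)).ne'
  unfold bBv bB
  exact ⟨(((continuousOn_const.mul (hF.pow 2)).mul (hr' _)).mul (hw _)).add
    (continuousOn_const.mul (hr' _)), ((hF.pow 2).mul (hw _)).add (continuousOn_const.mul (hr' _))⟩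

end bell

/-! ### The Bellman function method on a space-time slab -/

section bell2
variable {n : ℕ}

lemma slab_continuous {a c χ : Euc n → ℝ} (ha : Tst a) (hc : Tst c) (hχ : Tst χ)
    (hχ0 : ∀ x, 0 ≤ χ x) : Continuous fun t => ∫ x, |heat t a x * heat t c x| * χ x := by
  obtain ⟨M₁, hM₁, hb₁⟩ := ha.bdd
  obtain ⟨M₂, hM₂, hb₂⟩ := hc.bdd
  refine continuous_of_dominated (bound := fun x => M₁ * M₂ * χ x) (fun t => ?_)
    (fun t => ae_of_all _ fun x => ?_) (hχ.integrable.const_mul _) (ae_of_all _ fun x => ?_)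
  · exact (((heat_continuous_x ha t).mul (heat_continuous_x hc t)).abs.mul
      hχ.cont).aestronglyMeasurable
  · rw [Real.norm_eq_abs, abs_mul, abs_abs, abs_mul, abs_of_nonneg (hχ0 x)]
    exact mul_le_mul_of_nonneg_right (mul_le_mul (heat_abs_le hb₁ t x) (heat_abs_le hb₂ t x)
      (abs_nonneg _) hM₁) (hχ0 x)
  · have h1 : Continuous fun t => heat t a x :=
      (heat_continuous ha).comp (by fun_prop : Continuous fun t : ℝ => (t, x))
    have h2 : Continuous fun t => heat t c x :=
      (heat_continuous hc).comp (by fun_prop : Continuous fun t : ℝ => (t, x))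
    exact (h1.mul h2).abs.mul continuous_const

/-- The Bellman function method on the slab `[ε, T]`, localized by the cutoff `χ` at scale `R`. With
`b = B(e^{tΔ}a, e^{tΔ}c)`, the Hessian bound gives `∂ₜb ≤ Δb - 2 |∂ᵢe^{tΔ}a · ∂ⱼe^{tΔ}c|`; integrating
against `χ` moves the Laplacian to `χ` and costs `L R⁻²` times the mass of `b`. -/
lemma bellman_slab {p q K L : ℝ} (hpq : p.HolderConjugate q) (hK : 0 ≤ K)
    (hess : ∀ u v : ℝ, 0 < u → 0 < v → ∃ W : ℝ, 0 < W ∧ ∀ a b : ℝ,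
      W * a ^ 2 + W⁻¹ * b ^ 2 ≤
        bBuu p q u v * a ^ 2 + 2 * bBuv p q u v * a * b + bBvv p q K u v * b ^ 2)
    (hL : ∀ x : Euc n, |lap cut x| ≤ L)
    {a c : Euc n → ℝ} (ha : Tst a) (hc : Tst c) (ha0 : ∀ x, 0 ≤ a x) (hc0 : ∀ x, 0 ≤ c x)
    {y₁ y₂ : Euc n} (hy₁ : a y₁ ≠ 0) (hy₂ : c y₂ ≠ 0) (i j : Fin n) {ε T R : ℝ} (hε : 0 < ε)
    (hT : ε ≤ T) (hR : 0 < R) :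
    2 * ∫ t in ε..T, ∫ x, |heat t (pd i a) x * heat t (pd j c) x| * cut (R⁻¹ • x) ≤
      (1 + K) * ((∫ x, |a x| ^ p) + ∫ x, |c x| ^ q) * (1 + L * R⁻¹ ^ 2 * (T - ε)) := by
  have hR' : R⁻¹ ≠ 0 := (inv_pos.2 hR).ne'
  have hχ : Tst fun x : Euc n => cut (R⁻¹ • x) := cut_tst.comp_smul hR'
  set χ : Euc n → ℝ := fun x => cut (R⁻¹ • x) with hχd
  set M := (∫ x, |a x| ^ p) + ∫ x, |c x| ^ q with hM
  have hM0 : 0 ≤ M := add_nonneg (integral_nonneg fun _ => by positivity)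
    (integral_nonneg fun _ => by positivity)
  have hL0 : 0 ≤ L := (abs_nonneg _).trans (hL 0)
  have Fp : ∀ t, 0 < t → ∀ x, 0 < heat t a x := fun t ht x => heat_pos ha ha0 hy₁ ht x
  have Gp : ∀ t, 0 < t → ∀ x, 0 < heat t c x := fun t ht x => heat_pos hc hc0 hy₂ ht x
  set b : ℝ → Euc n → ℝ := fun t x => bB p q K (heat t a x) (heat t c x) with hb
  set b' : ℝ → Euc n → ℝ := fun t x => bBu p q (heat t a x) (heat t c x) * heat t (lap a) x
    + bBv p q K (heat t a x) (heat t c x) * heat t (lap c) x with hb'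
  have hS : ∀ y ∈ (Set.Ioi 0 ×ˢ Set.univ : Set (ℝ × Euc n)), 0 < y.1 := fun y hy => hy.1
  have bcont : ContinuousOn (fun y : ℝ × Euc n => b y.1 y.2) (Set.Ioi 0 ×ˢ Set.univ) :=
    (bBv_continuousOn p q K (heat_continuous ha).continuousOn (heat_continuous hc).continuousOn
      (fun y hy => Fp _ (hS y hy) _) (fun y hy => Gp _ (hS y hy) _)).2
  have b'cont : ContinuousOn (fun y : ℝ × Euc n => b' y.1 y.2) (Set.Ioi 0 ×ˢ Set.univ) :=
    ((bBu_continuousOn p q (heat_continuous ha).continuousOn (heat_continuous hc).continuousOn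
      (fun y hy => Fp _ (hS y hy) _) (fun y hy => Gp _ (hS y hy) _)).mul
        (heat_continuous ha.lap).continuousOn).add
    ((bBv_continuousOn p q K (heat_continuous ha).continuousOn (heat_continuous hc).continuousOn
      (fun y hy => Fp _ (hS y hy) _) (fun y hy => Gp _ (hS y hy) _)).1.mul
        (heat_continuous hc.lap).continuousOn)
  have hd : ∀ t, 0 < t → ∀ x, HasDerivAt (fun t => b t x) (b' t x) t := fun t ht x =>
    bB_hasDerivAt p q K (heat_dt ha ht x) (heat_dt hc ht x) (Fp t ht x) (Gp t ht x)
  have hJ : ∀ t, 0 < t → HasDerivAt (fun t => ∫ x, b t x * χ x) (∫ x, b' t x * χ x) t :=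
    fun t ht => hasDerivAt_integral_cs bcont b'cont hχ.cont hχ.cs hd ht
  have bmass : ∀ t, 0 < t → Integrable (b t) ∧ ∫ x, b t x ≤ (1 + K) * M := by
    intro t ht
    have h1 := heat_pow ha t hpq.lt.le
    have h2 := heat_pow hc t hpq.symm.lt.le
    have hle : ∀ x, b t x ≤ (1 + K) * (|heat t a x| ^ p + |heat t c x| ^ q) := fun x => by
      rw [abs_of_pos (Fp t ht x), abs_of_pos (Gp t ht x)]
      exact bB_le hpq hK (Fp t ht x) (Gp t ht x)
    have bc : Continuous (b t) :=
      bcont.comp_continuous (by fun_prop : Continuous fun x : Euc n => (t, x)) fun x => by simpa using ht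
    have hi : Integrable (b t) := by
      refine ((h1.1.add h2.1).const_mul (1 + K)).mono' bc.aestronglyMeasurable (ae_of_all _ fun x => ?_)
      rw [Real.norm_of_nonneg (bB_nonneg hK (Fp t ht x) (Gp t ht x))]
      exact hle x
    refine ⟨hi, (integral_mono hi ((h1.1.add h2.1).const_mul (1 + K)) hle).trans ?_⟩
    rw [integral_const_mul]
    refine mul_le_mul_of_nonneg_left ?_ (by linarith)
    have := integral_add h1.1 h2.1
    simp only [Pi.add_apply] at this ⊢
    rw [this]
    exact add_le_add h1.2 h2.2
  have hlapχ : ∀ x, |lap χ x| ≤ L * R⁻¹ ^ 2 := by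
    intro x
    rw [hχd, lap_comp_smul cut_tst.sm, abs_mul, abs_of_nonneg (by positivity), mul_comm]
    exact mul_le_mul_of_nonneg_right (hL _) (by positivity)
  set D : ℝ → ℝ := fun t => ∫ x, |heat t (pd i a) x * heat t (pd j c) x| * χ x with hD
  have hDc : Continuous D := slab_continuous (ha.pd i) (hc.pd j) hχ fun x => cut_nonneg _
  have h2D : Continuous fun t => 2 * D t := continuous_const.mul hDc
  have hJ' : ∀ t, 0 < t → 2 * D t - L * R⁻¹ ^ 2 * ((1 + K) * M) ≤ - ∫ x, b' t x * χ x := by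
    intro t ht
    have bsm : Sm (b t) := contDiffOn_univ.1 (bB_contDiffOn p q K (heat_sm ha t).contDiffOn
      (heat_sm hc t).contDiffOn (fun x _ => Fp t ht x) fun x _ => Gp t ht x)
    have b'c : Continuous (b' t) :=
      b'cont.comp_continuous (by fun_prop : Continuous fun x : Euc n => (t, x)) fun x => by simpa using ht
    have hpt : ∀ x, b' t x * χ x ≤ lap (b t) x * χ x
        - 2 * (|heat t (pd i a) x * heat t (pd j c) x| * χ x) := by
      intro x
      have h1 := lap_bB p q K (heat_sm ha t) (heat_sm hc t) (Fp t ht) (Gp t ht) x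
      rw [heat_lap ha, heat_lap hc] at h1
      simp only [heat_pd ha, heat_pd hc] at h1
      obtain ⟨W, hW, hWab⟩ := hess _ _ (Fp t ht x) (Gp t ht x)
      have h2 : W * heat t (pd i a) x ^ 2 + W⁻¹ * heat t (pd j c) x ^ 2 ≤
          ∑ k, (W * heat t (pd k a) x ^ 2 + W⁻¹ * heat t (pd k c) x ^ 2) := by
        rw [Finset.sum_add_distrib]
        refine add_le_add ?_ ?_
        · exact Finset.single_le_sum (f := fun k => W * heat t (pd k a) x ^ 2)
            (fun k _ => by positivity) (Finset.mem_univ i)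
        · exact Finset.single_le_sum (f := fun k => W⁻¹ * heat t (pd k c) x ^ 2)
            (fun k _ => by positivity) (Finset.mem_univ j)
      have h3 := h2.trans (Finset.sum_le_sum fun k _ => hWab (heat t (pd k a) x) (heat t (pd k c) x))
      have h4 : 2 * |heat t (pd i a) x * heat t (pd j c) x| ≤
          W * heat t (pd i a) x ^ 2 + W⁻¹ * heat t (pd j c) x ^ 2 := by
        rw [abs_mul, ← sq_abs (heat t (pd i a) x), ← sq_abs (heat t (pd j c) x)]
        have : 0 ≤ W⁻¹ * (W * |heat t (pd i a) x| - |heat t (pd j c) x|) ^ 2 := by positivity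
        have e : W⁻¹ * (W * |heat t (pd i a) x| - |heat t (pd j c) x|) ^ 2 =
          W * |heat t (pd i a) x| ^ 2 + W⁻¹ * |heat t (pd j c) x| ^ 2
            - 2 * (|heat t (pd i a) x| * |heat t (pd j c) x|) := by
          field_simp; ring
        linarith
      have h5 : b' t x ≤ lap (b t) x - 2 * |heat t (pd i a) x * heat t (pd j c) x| := by
        change bBu p q (heat t a x) (heat t c x) * heat t (lap a) x
          + bBv p q K (heat t a x) (heat t c x) * heat t (lap c) x ≤
          lap (fun x => bB p q K (heat t a x) (heat t c x)) x - _
        rw [h1]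
        linarith
      have := mul_le_mul_of_nonneg_right h5 (cut_nonneg (R⁻¹ • x))
      calc _ ≤ _ := this
        _ = _ := by ring
    have i1 : Integrable fun x => b' t x * χ x :=
      (b'c.mul hχ.cont).integrable_of_hasCompactSupport hχ.cs.mul_left
    have i2 : Integrable fun x => lap (b t) x * χ x :=
      (bsm.lap.cont.mul hχ.cont).integrable_of_hasCompactSupport hχ.cs.mul_left
    have i3 : Integrable fun x => |heat t (pd i a) x * heat t (pd j c) x| * χ x :=
      (((heat_continuous_x (ha.pd i) t).mul (heat_continuous_x (hc.pd j) t)).abs.mul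
        hχ.cont).integrable_of_hasCompactSupport hχ.cs.mul_left
    have h6 := integral_mono i1 (i2.sub (i3.const_mul 2)) hpt
    have h7 : ∫ x, lap (b t) x * χ x ≤ L * R⁻¹ ^ 2 * ((1 + K) * M) := by
      rw [← ibp_lap bsm hχ.sm (Or.inr hχ.cs)]
      have i4 : Integrable fun x => b t x * lap χ x :=
        (bsm.cont.mul hχ.lap.cont).integrable_of_hasCompactSupport hχ.lap.cs.mul_left
      refine (integral_mono i4 ((bmass t ht).1.const_mul (L * R⁻¹ ^ 2)) fun x => ?_).trans ?_
      · change b t x * lap χ x ≤ L * R⁻¹ ^ 2 * b t x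
        rw [mul_comm]
        exact mul_le_mul_of_nonneg_right ((le_abs_self _).trans (hlapχ x))
          (bB_nonneg hK (Fp t ht x) (Gp t ht x))
      · rw [integral_const_mul]
        exact mul_le_mul_of_nonneg_left (bmass t ht).2 (by positivity)
    have h8 : ∫ x, (fun x => lap (b t) x * χ x
        - 2 * (|heat t (pd i a) x * heat t (pd j c) x| * χ x)) x =
        (∫ x, lap (b t) x * χ x) - 2 * D t := by
      rw [integral_sub i2 (i3.const_mul 2), integral_const_mul]
    have h9 := h6.trans_eq h8
    linarith
  have main := intervalIntegral.integral_le_sub_of_hasDeriv_right_of_le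
    (g := fun t => - ∫ x, b t x * χ x) (g' := fun t => - ∫ x, b' t x * χ x)
    (φ := fun t => 2 * D t - L * R⁻¹ ^ 2 * ((1 + K) * M)) hT
    (fun t ht => (hJ t (hε.trans_le ht.1)).neg.continuousAt.continuousWithinAt)
    (fun t ht => (hJ t (hε.trans ht.1)).neg.hasDerivWithinAt)
    (((continuous_const.mul hDc).sub continuous_const).integrableOn_Icc)
    (fun t ht => hJ' t (hε.trans ht.1))
  have hT0 : 0 < T := hε.trans_le hT
  have hend : 0 ≤ ∫ x, b T x * χ x := integral_nonneg fun x =>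
    mul_nonneg (bB_nonneg hK (Fp T hT0 x) (Gp T hT0 x)) (cut_nonneg _)
  have hstart : ∫ x, b ε x * χ x ≤ (1 + K) * M := by
    refine (integral_mono_of_nonneg (ae_of_all _ fun x =>
      mul_nonneg (bB_nonneg hK (Fp ε hε x) (Gp ε hε x)) (cut_nonneg _)) (bmass ε hε).1
      (ae_of_all _ fun x => ?_)).trans (bmass ε hε).2
    exact mul_le_of_le_one_right (bB_nonneg hK (Fp ε hε x) (Gp ε hε x)) (cut_le_one _)
  rw [intervalIntegral.integral_sub (h2D.intervalIntegrable _ _)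
    (continuous_const.intervalIntegrable _ _), intervalIntegral.integral_const_mul,
    intervalIntegral.integral_const, smul_eq_mul] at main
  change 2 * ∫ t in ε..T, D t ≤ _
  nlinarith

end bell2

/-! ### The bilinear estimate for the heat flow -/

section bell3
variable {n : ℕ}

lemma heat_const_zero (t : ℝ) (x : Euc n) : heat t (fun _ : Euc n => (0:ℝ)) x = 0 := by
  simp [heat]

lemma Qf_measurable {f g : Euc n → ℝ} (hf : Tst f) (hg : Tst g) :
    Measurable (fun y : ℝ × Euc n => ‖heat y.1 f y.2 * heat y.1 g y.2‖ₑ) :=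
  ((heat_continuous hf).mul (heat_continuous hg)).measurable.enorm

lemma pd_zero (i : Fin n) : pd i (fun _ : Euc n => (0:ℝ)) = fun _ => 0 := by
  funext x; simp [pd]

lemma Qf_zero_left (i j : Fin n) (g : Euc n → ℝ) : Qf i j (fun _ => 0) g = 0 := by
  simp [Qf, pd_zero, heat_const_zero]

lemma Qf_zero_right (i j : Fin n) (g : Euc n → ℝ) : Qf i j g (fun _ => 0) = 0 := by
  simp [Qf, pd_zero, heat_const_zero]

lemma Qf_comm (i j : Fin n) (f g : Euc n → ℝ) : Qf i j f g = Qf j i g f := by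
  simp only [Qf, mul_comm]

/-- The bilinear estimate for nonnegative functions: `bellman_slab` on the slab `(1/R, R]` with cutoff
scale `R`, whose error term stays bounded, and Fatou's lemma as `R → ∞`. -/
lemma Qf_nonneg_le {p q : ℝ} (hpq : p.HolderConjugate q) (hp2 : 2 ≤ p) :
    ∃ C : ℝ, 0 ≤ C ∧ ∀ (a c : Euc n → ℝ), Tst a → Tst c → (∀ x, 0 ≤ a x) → (∀ x, 0 ≤ c x) →
      ∀ i j, Qf i j a c ≤ ENNReal.ofReal (C * ((∫ x, |a x| ^ p) + ∫ x, |c x| ^ q)) := by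
  obtain ⟨K, hK, hess⟩ := bellman_hess hpq hp2
  obtain ⟨L, hL0, hL⟩ := (cut_tst (n := n)).lap.bdd
  refine ⟨(1 + K) * (1 + L), by positivity, fun a c ha hc ha0 hc0 i j => ?_⟩
  by_cases hy₁ : ∃ y, a y ≠ 0
  swap
  · push Not at hy₁
    rw [show a = fun _ => 0 from funext hy₁, Qf_zero_left]; exact zero_le
  by_cases hy₂ : ∃ y, c y ≠ 0
  swap
  · push Not at hy₂
    rw [show c = fun _ => 0 from funext hy₂, Qf_zero_right]; exact zero_le
  obtain ⟨y₁, hy₁⟩ := hy₁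
  obtain ⟨y₂, hy₂⟩ := hy₂
  set M := (∫ x, |a x| ^ p) + ∫ x, |c x| ^ q with hM
  have hM0 : 0 ≤ M := add_nonneg (integral_nonneg fun _ => by positivity)
    (integral_nonneg fun _ => by positivity)
  set F : ℝ → Euc n → ℝ := fun t x => |heat t (pd i a) x * heat t (pd j c) x| with hF
  have hFc : Continuous fun y : ℝ × Euc n => F y.1 y.2 :=
    ((heat_continuous (ha.pd i)).mul (heat_continuous (hc.pd j))).abs
  let R : ℕ → ℝ := fun m => (m : ℝ) + 1
  have hR : ∀ m, 1 ≤ R m := fun m => by simp [R]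
  have hRp : ∀ m, 0 < R m := fun m => one_pos.trans_le (hR m)
  let G : ℕ → ℝ → Euc n → ℝ≥0∞ := fun m t x =>
    (Set.Ioc (R m)⁻¹ (R m)).indicator (fun t => ENNReal.ofReal (F t x * cut ((R m)⁻¹ • x))) t
  have hRt : Tendsto R atTop atTop := tendsto_atTop_add_const_right _ _ tendsto_natCast_atTop_atTop
  have hRt' : Tendsto (fun m => (R m)⁻¹) atTop (𝓝 0) := hRt.inv_tendsto_atTop
  have hGm : ∀ m, Measurable fun y : ℝ × Euc n => G m y.1 y.2 := by
    intro m
    have : (fun y : ℝ × Euc n => G m y.1 y.2) = (Prod.fst ⁻¹' Set.Ioc (R m)⁻¹ (R m)).indicator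
        (fun y => ENNReal.ofReal (F y.1 y.2 * cut ((R m)⁻¹ • y.2))) := by
      funext y; simp only [G, Set.indicator, Set.mem_preimage]
    rw [this]
    refine Measurable.indicator ?_ (measurableSet_Ioc.preimage measurable_fst)
    exact (hFc.mul (cut_tst.cont.comp (by fun_prop))).measurable.ennreal_ofReal
  have hGle : ∀ m, ∫⁻ t in Set.Ioi 0, ∫⁻ x, G m t x ≤ ENNReal.ofReal ((1 + K) * (1 + L) * M) := by
    intro m
    have hRi : (R m)⁻¹ ≤ R m := (inv_le_one_of_one_le₀ (hR m)).trans (hR m)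
    have hR' : (R m)⁻¹ ≠ 0 := (inv_pos.2 (hRp m)).ne'
    have hχ : Tst fun x : Euc n => cut ((R m)⁻¹ • x) := cut_tst.comp_smul hR'
    have h1 := bellman_slab hpq hK hess hL ha hc ha0 hc0 hy₁ hy₂ i j (inv_pos.2 (hRp m)) hRi (hRp m)
    have hDc := slab_continuous (ha.pd i) (hc.pd j) hχ fun x => cut_nonneg _
    have hD0 : ∀ t, 0 ≤ ∫ x, |heat t (pd i a) x * heat t (pd j c) x| * cut ((R m)⁻¹ • x) :=
      fun t => integral_nonneg fun x => mul_nonneg (abs_nonneg _) (cut_nonneg _)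
    have e1 : ∀ t, ∫⁻ x, G m t x = (Set.Ioc (R m)⁻¹ (R m)).indicator
        (fun t => ENNReal.ofReal
          (∫ x, |heat t (pd i a) x * heat t (pd j c) x| * cut ((R m)⁻¹ • x))) t := by
      intro t
      by_cases ht : t ∈ Set.Ioc (R m)⁻¹ (R m)
      · simp only [G, Set.indicator_of_mem ht]
        rw [ofReal_integral_eq_lintegral_ofReal]
        · exact (((heat_continuous_x (ha.pd i) t).mul (heat_continuous_x (hc.pd j) t)).abs.mul
            hχ.cont).integrable_of_hasCompactSupport hχ.cs.mul_left
        · exact ae_of_all _ fun x => mul_nonneg (abs_nonneg _) (cut_nonneg _)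
      · simp only [G, Set.indicator_of_notMem ht, lintegral_zero]
    calc ∫⁻ t in Set.Ioi 0, ∫⁻ x, G m t x ≤ ∫⁻ t, ∫⁻ x, G m t x := setLIntegral_le_lintegral _ _
      _ = ∫⁻ t in Set.Ioc (R m)⁻¹ (R m), ENNReal.ofReal
          (∫ x, |heat t (pd i a) x * heat t (pd j c) x| * cut ((R m)⁻¹ • x)) := by
        simp_rw [e1]
        rw [lintegral_indicator measurableSet_Ioc]
      _ = ENNReal.ofReal (∫ t in (R m)⁻¹..(R m),
          ∫ x, |heat t (pd i a) x * heat t (pd j c) x| * cut ((R m)⁻¹ • x)) := by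
        rw [intervalIntegral.integral_of_le hRi, ofReal_integral_eq_lintegral_ofReal]
        · exact (hDc.integrableOn_Icc).mono_set Set.Ioc_subset_Icc_self
        · exact ae_of_all _ hD0
      _ ≤ _ := by
        refine ENNReal.ofReal_le_ofReal ?_
        have h2 : 0 ≤ ∫ t in (R m)⁻¹..(R m),
          ∫ x, |heat t (pd i a) x * heat t (pd j c) x| * cut ((R m)⁻¹ • x) :=
          intervalIntegral.integral_nonneg hRi fun t _ => hD0 t
        have h3 : (R m)⁻¹ ^ 2 * (R m - (R m)⁻¹) ≤ 1 := by
          have : (R m)⁻¹ ≤ 1 := inv_le_one_of_one_le₀ (hR m)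
          have h4 : (R m)⁻¹ * R m = 1 := inv_mul_cancel₀ (hRp m).ne'
          have h5 : 0 < (R m)⁻¹ := inv_pos.2 (hRp m)
          have : (R m)⁻¹ ^ 2 * (R m - (R m)⁻¹) = (R m)⁻¹ - (R m)⁻¹ ^ 3 := by
            linear_combination (R m)⁻¹ * h4
          rw [this]
          have : 0 < (R m)⁻¹ ^ 3 := by positivity
          linarith
        have h6 : (1 + K) * M * (1 + L * (R m)⁻¹ ^ 2 * (R m - (R m)⁻¹)) ≤
            (1 + K) * M * (1 + L) := by
          refine mul_le_mul_of_nonneg_left ?_ (by positivity)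
          nlinarith
        rw [← hM] at h1
        linarith
  have hlim : ∀ t ∈ Set.Ioi (0:ℝ), ∀ x, Tendsto (fun m => G m t x) atTop
      (𝓝 ‖heat t (pd i a) x * heat t (pd j c) x‖ₑ) := by
    intro t ht x
    refine tendsto_nhds_of_eventually_eq ?_
    have e1 : ∀ᶠ m in atTop, (R m)⁻¹ < t := hRt'.eventually (gt_mem_nhds ht)
    have e2 := hRt.eventually_ge_atTop t
    have e3 := hRt.eventually_ge_atTop ‖x‖
    filter_upwards [e1, e2, e3] with m h1 h2 h3
    have hc1 : cut ((R m)⁻¹ • x) = 1 := cut_one (by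
      rw [norm_smul, Real.norm_of_nonneg (inv_pos.2 (hRp m)).le, inv_mul_le_iff₀ (hRp m)]
      linarith)
    have hm : t ∈ Set.Ioc (R m)⁻¹ (R m) := ⟨h1, h2⟩
    simp only [G, Set.indicator_of_mem hm, hc1, mul_one, F]
    rw [← Real.norm_eq_abs, ofReal_norm]
  calc Qf i j a c = ∫⁻ t in Set.Ioi 0, ∫⁻ x, liminf (fun m => G m t x) atTop := by
        refine setLIntegral_congr_fun measurableSet_Ioi fun t ht => lintegral_congr fun x => ?_
        exact (hlim t ht x).liminf_eq.symm
    _ ≤ ∫⁻ t in Set.Ioi 0, liminf (fun m => ∫⁻ x, G m t x) atTop :=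
        lintegral_mono fun t => lintegral_liminf_le fun m => (hGm m).comp measurable_prodMk_left
    _ ≤ liminf (fun m => ∫⁻ t in Set.Ioi 0, ∫⁻ x, G m t x) atTop :=
        lintegral_liminf_le fun m => (hGm m).lintegral_prod_right'
    _ ≤ _ := liminf_le_of_frequently_le' (Frequently.of_forall hGle)

lemma heat_pd_sub {a b : Euc n → ℝ} (ha : Tst a) (hb : Tst b) (i : Fin n) (t : ℝ) (x : Euc n) :
    heat t (pd i (fun x => a x - b x)) x = heat t (pd i a) x - heat t (pd i b) x := by
  have : pd i (fun x => a x - b x) = fun x => pd i a x - pd i b x := by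
    exact pd_sub ha.sm.diff hb.sm.diff i
  rw [this]
  exact integral_sub (heat_integrand (ha.pd i) t x) (heat_integrand (hb.pd i) t x)

lemma Qf_sub_left {a b g : Euc n → ℝ} (ha : Tst a) (hb : Tst b) (hg : Tst g) (i j : Fin n) :
    Qf i j (fun x => a x - b x) g ≤ Qf i j a g + Qf i j b g := by
  have hm : Measurable fun y : ℝ × Euc n => ‖heat y.1 (pd i a) y.2 * heat y.1 (pd j g) y.2‖ₑ :=
    Qf_measurable (ha.pd i) (hg.pd j)
  have h1 : Measurable fun t => ∫⁻ x, ‖heat t (pd i a) x * heat t (pd j g) x‖ₑ :=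
    hm.lintegral_prod_right'
  have h2 : ∀ t, ∫⁻ x, ‖heat t (pd i fun x => a x - b x) x * heat t (pd j g) x‖ₑ ≤
      (∫⁻ x, ‖heat t (pd i a) x * heat t (pd j g) x‖ₑ) +
        ∫⁻ x, ‖heat t (pd i b) x * heat t (pd j g) x‖ₑ := by
    intro t
    have h3 : Measurable fun x => ‖heat t (pd i a) x * heat t (pd j g) x‖ₑ :=
      ((heat_continuous_x (ha.pd i) t).mul (heat_continuous_x (hg.pd j) t)).measurable.enorm
    rw [← lintegral_add_left h3]
    refine lintegral_mono fun x => ?_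
    rw [heat_pd_sub ha hb, sub_mul]
    exact enorm_sub_le
  unfold Qf
  rw [← lintegral_add_left h1]
  exact lintegral_mono h2

lemma Qf_sub_right {a b g : Euc n → ℝ} (ha : Tst a) (hb : Tst b) (hg : Tst g) (i j : Fin n) :
    Qf i j g (fun x => a x - b x) ≤ Qf i j g a + Qf i j g b := by
  rw [Qf_comm i j g, Qf_comm i j g, Qf_comm i j g]
  exact Qf_sub_left ha hb hg j i

lemma Tst.pow_integrable {f : Euc n → ℝ} (hf : Tst f) {p : ℝ} (hp : 0 < p) :
    Integrable fun x => |f x| ^ p := by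
  refine (hf.cont.abs.rpow_const fun _ => Or.inr hp.le).integrable_of_hasCompactSupport ?_
  exact hf.cs.comp_left (g := fun s : ℝ => |s| ^ p) (by simp [hp.ne'])

/-- A smooth cutoff equal to `1` on the support of a given compactly supported function. -/
lemma exists_cut {f : Euc n → ℝ} (hf : HasCompactSupport f) :
    ∃ χ : Euc n → ℝ, Tst χ ∧ (∀ x, 0 ≤ χ x) ∧ ∀ x ∈ tsupport f, χ x = 1 := by
  obtain ⟨R, hR0, hR⟩ := hf.isCompact.isBounded.exists_pos_norm_le
  refine ⟨fun x => cut (R⁻¹ • x), cut_tst.comp_smul (inv_pos.2 hR0).ne', fun x => cut_nonneg _,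
    fun x hx => cut_one ?_⟩
  rw [norm_smul, Real.norm_of_nonneg (inv_pos.2 hR0).le, inv_mul_le_iff₀ hR0]
  linarith [hR x hx]

/-- A smooth substitute for the decomposition of a test function into positive and negative
parts, with `L^p` control: the parts are `(r ± f) / 2` with `r = √(f² + (ε χ)²)`, where `χ = 1` on the
support of `f`. -/
lemma exists_parts {f : Euc n → ℝ} (hf : Tst f) {p η : ℝ} (hp : 0 < p) (hη : 0 < η) :
    ∃ a b : Euc n → ℝ, Tst a ∧ Tst b ∧ (∀ x, 0 ≤ a x) ∧ (∀ x, 0 ≤ b x) ∧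
      (f = fun x => a x - b x) ∧ (∫ x, |a x| ^ p ≤ 2 ^ p * (∫ x, |f x| ^ p) + η) ∧
      ∫ x, |b x| ^ p ≤ 2 ^ p * (∫ x, |f x| ^ p) + η := by
  obtain ⟨χ, hχ, hχ0, hχ1⟩ := exists_cut hf.cs
  set I := ∫ x, |χ x| ^ p with hI
  have hI0 : 0 ≤ I := integral_nonneg fun _ => by positivity
  set ε : ℝ := (η / (2 ^ p * (I + 1))) ^ (1 / p) with hε
  have hε0 : 0 < ε := by positivity
  have hεp : 2 ^ p * (ε ^ p * I) ≤ η := by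
    rw [hε, ← Real.rpow_mul (by positivity), one_div_mul_cancel hp.ne', Real.rpow_one]
    rw [show 2 ^ p * (η / (2 ^ p * (I + 1)) * I) = η * (I / (I + 1)) by field_simp]
    exact mul_le_of_le_one_right hη.le ((div_le_one (by positivity)).2 (by linarith))
  set r : Euc n → ℝ := fun x => Real.sqrt (f x ^ 2 + (ε * χ x) ^ 2) with hr
  have hrsm : Sm r := by
    rw [Sm, contDiff_iff_contDiffAt]
    intro x
    by_cases hx : x ∈ tsupport f
    · refine ContDiffAt.sqrt ?_ ?_
      · exact ((hf.sm.contDiffAt.pow 2).add ((contDiffAt_const.mul hχ.sm.contDiffAt).pow 2))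
      · rw [hχ1 x hx]; positivity
    · have h0 : f =ᶠ[𝓝 x] 0 := notMem_tsupport_iff_eventuallyEq.1 hx
      have : r =ᶠ[𝓝 x] fun x => ε * χ x := by
        filter_upwards [h0] with y hy
        simp only [hr, hy, Pi.zero_apply]
        rw [zero_pow two_ne_zero, zero_add, Real.sqrt_sq (mul_nonneg hε0.le (hχ0 y))]
      exact (contDiffAt_const.mul hχ.sm.contDiffAt).congr_of_eventuallyEq this
  have hrle : ∀ x, r x ≤ |f x| + ε * χ x := fun x => by
    refine Real.sqrt_le_iff.2 ⟨add_nonneg (abs_nonneg _) (mul_nonneg hε0.le (hχ0 x)), ?_⟩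
    have := mul_nonneg (abs_nonneg (f x)) (mul_nonneg hε0.le (hχ0 x))
    nlinarith [sq_abs (f x)]
  have hrge : ∀ x, |f x| ≤ r x := fun x => Real.abs_le_sqrt (by nlinarith [sq_nonneg (ε * χ x)])
  have hrcs : HasCompactSupport r := by
    refine HasCompactSupport.intro (hf.cs.isCompact.union hχ.cs.isCompact) fun x hx => ?_
    rw [Set.mem_union, not_or] at hx
    simp [hr, image_eq_zero_of_notMem_tsupport hx.1, image_eq_zero_of_notMem_tsupport hx.2]
  have key : ∀ a : Euc n → ℝ, Tst a → (∀ x, |a x| ≤ |f x| + ε * χ x) →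
      ∫ x, |a x| ^ p ≤ 2 ^ p * (∫ x, |f x| ^ p) + η := by
    intro a ha hle
    have hpt : ∀ x, |a x| ^ p ≤ 2 ^ p * |f x| ^ p + 2 ^ p * ε ^ p * |χ x| ^ p := by
      intro x
      have hc : 0 ≤ ε * χ x := mul_nonneg hε0.le (hχ0 x)
      refine (Real.rpow_le_rpow (abs_nonneg _) (hle x) hp.le).trans ?_
      rw [mul_assoc, ← Real.mul_rpow hε0.le (abs_nonneg _), ← Real.mul_rpow two_pos.le (abs_nonneg _),
        ← Real.mul_rpow two_pos.le (by positivity), abs_of_nonneg (hχ0 x)]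
      rcases le_total (|f x|) (ε * χ x) with h | h
      · refine (Real.rpow_le_rpow (by positivity) (by linarith) hp.le).trans
          (le_add_of_nonneg_left (by positivity))
      · refine (Real.rpow_le_rpow (by positivity) (by linarith) hp.le).trans
          (le_add_of_nonneg_right (by positivity))
    refine (integral_mono (ha.pow_integrable hp) (((hf.pow_integrable hp).const_mul _).add
      ((hχ.pow_integrable hp).const_mul _)) hpt).trans ?_
    have := integral_add ((hf.pow_integrable hp).const_mul (2 ^ p))
      ((hχ.pow_integrable hp).const_mul (2 ^ p * ε ^ p))
    simp only [Pi.add_apply] at this ⊢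
    rw [this, integral_const_mul, integral_const_mul, mul_assoc]
    linarith
  have hp1 : Tst fun x => (r x + f x) / 2 :=
    ⟨(hrsm.add hf.sm).div_const 2, (hrcs.add hf.cs).comp_left (g := fun s : ℝ => s / 2) (by simp)⟩
  have hp2 : Tst fun x => (r x - f x) / 2 :=
    ⟨(hrsm.sub hf.sm).div_const 2, (hrcs.sub hf.cs).comp_left (g := fun s : ℝ => s / 2) (by simp)⟩
  refine ⟨_, _, hp1, hp2, fun x => ?_, fun x => ?_, ?_, key _ hp1 fun x => ?_, key _ hp2 fun x => ?_⟩
  · linarith [hrge x, neg_abs_le (f x)]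
  · linarith [hrge x, le_abs_self (f x)]
  · funext x; ring
  · rw [abs_of_nonneg (by linarith [hrge x, neg_abs_le (f x)])]
    linarith [hrle x, hrge x, le_abs_self (f x), mul_nonneg hε0.le (hχ0 x)]
  · rw [abs_of_nonneg (by linarith [hrge x, le_abs_self (f x)])]
    linarith [hrle x, hrge x, neg_abs_le (f x), mul_nonneg hε0.le (hχ0 x)]

/-- The bilinear estimate for `p ≥ 2`: split both functions into nonnegative smooth parts. -/
lemma Qf_le_of_two_le {p q : ℝ} (hpq : p.HolderConjugate q) (hp2 : 2 ≤ p) :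
    ∃ C : ℝ, 0 ≤ C ∧ ∀ (f g : Euc n → ℝ), Tst f → Tst g →
      ∀ i j, Qf i j f g ≤ ENNReal.ofReal (C * ((∫ x, |f x| ^ p) + ∫ x, |g x| ^ q)) := by
  obtain ⟨C, hC0, hC⟩ := Qf_nonneg_le (n := n) hpq hp2
  set S : ℝ := max (2 ^ p) (2 ^ q)
  refine ⟨4 * C * S, by positivity, fun f g hf hg i j => ?_⟩
  set A := ∫ x, |f x| ^ p with hA
  set B := ∫ x, |g x| ^ q with hB
  have hA0 : 0 ≤ A := integral_nonneg fun _ => by positivity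
  have hB0 : 0 ≤ B := integral_nonneg fun _ => by positivity
  have key : ∀ η : ℝ, 0 < η → Qf i j f g ≤ ENNReal.ofReal (4 * C * (S * (A + B) + 2 * η)) := by
    intro η hη
    obtain ⟨a, b, ha, hb, ha0, hb0, hf', ha', hb'⟩ := exists_parts hf hpq.pos hη
    obtain ⟨c, d, hc, hd, hc0, hd0, hg', hc', hd'⟩ := exists_parts hg hpq.symm.pos hη
    have hbd : ∀ {a c : Euc n → ℝ}, Tst a → Tst c → (∀ x, 0 ≤ a x) → (∀ x, 0 ≤ c x) →
        (∫ x, |a x| ^ p ≤ 2 ^ p * A + η) → (∫ x, |c x| ^ q ≤ 2 ^ q * B + η) →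
        Qf i j a c ≤ ENNReal.ofReal (C * (S * (A + B) + 2 * η)) := by
      intro a c ha hc ha0 hc0 h1 h2
      refine (hC a c ha hc ha0 hc0 i j).trans (ENNReal.ofReal_le_ofReal ?_)
      refine mul_le_mul_of_nonneg_left ?_ hC0
      have h3 : 2 ^ p * A ≤ S * A := mul_le_mul_of_nonneg_right (le_max_left _ _) hA0
      have h4 : 2 ^ q * B ≤ S * B := mul_le_mul_of_nonneg_right (le_max_right _ _) hB0
      linarith
    set X := C * (S * (A + B) + 2 * η)
    have hS0 : 0 ≤ S := by positivity
    have hX : 0 ≤ X := by positivity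
    have h1 := hbd ha hc ha0 hc0 ha' hc'
    have h2 := hbd ha hd ha0 hd0 ha' hd'
    have h3 := hbd hb hc hb0 hc0 hb' hc'
    have h4 := hbd hb hd hb0 hd0 hb' hd'
    calc Qf i j f g ≤ Qf i j a g + Qf i j b g := by
          conv_lhs => rw [hf']
          exact Qf_sub_left ha hb hg i j
      _ ≤ (Qf i j a c + Qf i j a d) + (Qf i j b c + Qf i j b d) := by
          rw [hg']
          exact add_le_add (Qf_sub_right hc hd ha i j) (Qf_sub_right hc hd hb i j)
      _ ≤ (ENNReal.ofReal X + ENNReal.ofReal X) + (ENNReal.ofReal X + ENNReal.ofReal X) := by gcongr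
      _ = _ := by
          rw [← ENNReal.ofReal_add hX hX, ← ENNReal.ofReal_add (by positivity) (by positivity)]
          congr 1; ring
  have hlim : Tendsto (fun η : ℝ => ENNReal.ofReal (4 * C * (S * (A + B) + 2 * η))) (𝓝[>] 0)
      (𝓝 (ENNReal.ofReal (4 * C * (S * (A + B) + 2 * 0)))) := by
    refine (Continuous.tendsto ?_ 0).mono_left nhdsWithin_le_nhds
    exact ENNReal.continuous_ofReal.comp (by fun_prop)
  have := ge_of_tendsto hlim (eventually_nhdsWithin_of_forall key)
  simpa [mul_assoc] using this

/-- The bilinear estimate: one of the conjugate exponents is at least `2`, and `Qf` is symmetric. -/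
lemma Qf_le {p q : ℝ} (hpq : p.HolderConjugate q) :
    ∃ C : ℝ, 0 ≤ C ∧ ∀ (f g : Euc n → ℝ), Tst f → Tst g →
      ∀ i j, Qf i j f g ≤ ENNReal.ofReal (C * ((∫ x, |f x| ^ p) + ∫ x, |g x| ^ q)) := by
  rcases le_total 2 p with h | h
  · exact Qf_le_of_two_le hpq h
  · have h2 : 2 ≤ q := by
      have h1 := hpq.inv_add_inv_eq_one
      have h3 : 2⁻¹ ≤ p⁻¹ := inv_anti₀ hpq.pos h
      have h4 : q⁻¹ ≤ 2⁻¹ := by linarith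
      exact (inv_le_inv₀ hpq.symm.pos two_pos).1 h4
    obtain ⟨C, hC0, hC⟩ := Qf_le_of_two_le (n := n) hpq.symm h2
    refine ⟨C, hC0, fun f g hf hg i j => ?_⟩
    rw [Qf_comm, add_comm]
    exact hC g f hg hf j i

end bell3

/-! ### The Calderón–Zygmund inequality -/

section cz
variable {n : ℕ}

/-- Smooth regularization of the duality map `s ↦ s |s| ^ (p - 2)`. -/
def dmap (p ε s : ℝ) : ℝ := s * (s ^ 2 + ε ^ 2) ^ ((p - 2) / 2)

/-- A bound for `dmap p ε`, uniform in `0 < ε ≤ 1`. -/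
def dbd (p s : ℝ) : ℝ := |s| ^ (p - 1) + |s| * (s ^ 2 + 1) ^ ((p - 2) / 2)

lemma abs_mul_sq_rpow {p s : ℝ} (hs : s ≠ 0) : |s| * (s ^ 2) ^ ((p - 2) / 2) = |s| ^ (p - 1) := by
  have h : 0 < |s| := abs_pos.2 hs
  rw [← sq_abs, ← Real.rpow_natCast, ← Real.rpow_mul h.le]
  nth_rewrite 1 [← Real.rpow_one |s|]
  rw [← Real.rpow_add h]
  congr 1; push_cast; ring

lemma dmap_le {p ε s : ℝ} (hε : 0 < ε) (hε1 : ε ≤ 1) : |dmap p ε s| ≤ dbd p s := by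
  rw [dmap, dbd, abs_mul, abs_of_nonneg (Real.rpow_nonneg (by positivity) _)]
  rcases eq_or_ne s 0 with rfl | hs
  · simp; positivity
  rcases le_total 2 p with h | h
  · refine le_add_of_nonneg_of_le (by positivity) ?_
    refine mul_le_mul_of_nonneg_left ?_ (abs_nonneg _)
    exact Real.rpow_le_rpow (by positivity) (by nlinarith) (by linarith)
  · refine le_add_of_le_of_nonneg ?_ (by positivity)
    rw [← abs_mul_sq_rpow hs]
    refine mul_le_mul_of_nonneg_left ?_ (abs_nonneg _)
    exact Real.rpow_le_rpow_of_nonpos (by positivity) (by nlinarith [sq_nonneg ε]) (by linarith)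

lemma dmap_tendsto (p s : ℝ) : Tendsto (fun m : ℕ => dmap p (1 / ((m:ℝ) + 1)) s) atTop
    (𝓝 (s * (s ^ 2) ^ ((p - 2) / 2))) := by
  rcases eq_or_ne s 0 with rfl | hs
  · simp [dmap]
  refine Tendsto.const_mul _ ?_
  refine Tendsto.rpow_const ?_ (Or.inl (by positivity))
  have := (tendsto_one_div_add_atTop_nhds_zero_nat (𝕜 := ℝ)).pow 2
  simpa using tendsto_const_nhds.add this

lemma dbd_continuous {p : ℝ} (hp : 1 < p) : Continuous (dbd p) := by
  unfold dbd
  refine (continuous_abs.rpow_const fun _ => Or.inr (by linarith)).add (continuous_abs.mul ?_)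
  exact (by fun_prop : Continuous fun s : ℝ => s ^ 2 + 1).rpow_const fun s => Or.inl (by positivity)

lemma dmap_sm {p ε : ℝ} (hε : 0 < ε) : ContDiff ℝ (⊤ : ℕ∞) (dmap p ε) := by
  unfold dmap
  refine contDiff_id.mul (ContDiff.rpow_const_of_ne (by fun_prop) fun s => by positivity)

/-- The Calderón–Zygmund inequality for test functions, by duality: the bilinear estimate is tested
on `g = l h |h|^(p-2)`, `h = ∂ᵢ∂ⱼu`, regularized so that `g` is smooth. -/
lemma cz [NeZero n] {p : ℝ} (hp : 1 < p) : ∃ C : ℝ, 0 < C ∧ ∀ u : Euc n → ℝ, Tst u → ∀ i j,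
    ∫ x, |pd i (pd j u) x| ^ p ≤ C * ∫ x, |lap u x| ^ p := by
  obtain ⟨q, hpq⟩ : ∃ q, p.HolderConjugate q := ⟨_, Real.HolderConjugate.conjExponent hp⟩
  have hq : 1 < q := hpq.symm.lt
  obtain ⟨C, hC0, hC⟩ := Qf_le (n := n) hpq
  set D : ℝ := C + 1 with hD
  have hD0 : 0 < D := by positivity
  -- `l` is chosen so that `2 D l^q = l / 2`: half of the left-hand side absorbs the term with `g`.
  set l : ℝ := (1 / (4 * D)) ^ (1 / (q - 1)) with hl
  have hl0 : 0 < l := by positivity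
  have hlq : 2 * D * l ^ q = l / 2 := by
    have : l ^ q = l * (1 / (4 * D)) := by
      nth_rewrite 1 [show q = 1 + (q - 1) by ring]
      rw [Real.rpow_add hl0, Real.rpow_one]
      congr 1
      rw [hl, ← Real.rpow_mul (by positivity), one_div_mul_cancel (by linarith), Real.rpow_one]
    rw [this]; field_simp; norm_num
  refine ⟨4 * D / l, by positivity, fun u hu i j => ?_⟩
  set h := pd i (pd j u) with hh
  have hT : Tst h := (hu.pd j).pd i
  set A := ∫ x, |lap u x| ^ p with hA
  have hA0 : 0 ≤ A := integral_nonneg fun _ => by positivity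
  have step : ∀ ε : ℝ, 0 < ε → l * ∫ x, h x * dmap p ε (h x) ≤
      2 * D * (A + l ^ q * ∫ x, |dmap p ε (h x)| ^ q) := by
    intro ε hε
    have hg : Tst fun x => l * dmap p ε (h x) :=
      ⟨contDiff_const.mul ((dmap_sm hε).comp hT.sm),
        hT.cs.comp_left (g := fun s => l * dmap p ε s) (by simp [dmap])⟩
    have h1 := (heat_repr hu hg i j).trans (mul_le_mul_right (hC _ _ hu.lap hg j i) 2)
    replace h1 := h1.trans_eq (show _ = ENNReal.ofReal (2 * (C * ((∫ x, |lap u x| ^ p) +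
      ∫ x, |l * dmap p ε (h x)| ^ q))) by
        rw [ENNReal.ofReal_mul (p := 2) (by norm_num), ENNReal.ofReal_ofNat])
    have hB0 : 0 ≤ ∫ x, |l * dmap p ε (h x)| ^ q := integral_nonneg fun _ => by positivity
    have h2 := (ENNReal.ofReal_le_ofReal_iff (by positivity)).1 h1
    have h3 := (le_abs_self _).trans h2
    have e1 : ∫ x, h x * (l * dmap p ε (h x)) = l * ∫ x, h x * dmap p ε (h x) := by
      rw [← integral_const_mul]; congr 1; funext x; ring
    have e2 : ∫ x, |l * dmap p ε (h x)| ^ q = l ^ q * ∫ x, |dmap p ε (h x)| ^ q := by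
      rw [← integral_const_mul]; congr 1; funext x
      rw [abs_mul, abs_of_pos hl0, Real.mul_rpow hl0.le (abs_nonneg _)]
    rw [← hh, e1] at h3
    refine h3.trans ?_
    rw [e2] at hB0 ⊢
    have : C * (A + l ^ q * ∫ x, |dmap p ε (h x)| ^ q) ≤
      D * (A + l ^ q * ∫ x, |dmap p ε (h x)| ^ q) :=
      mul_le_mul_of_nonneg_right (by linarith) (by positivity)
    linarith
  have hlim1 : Tendsto (fun m : ℕ => ∫ x, h x * dmap p (1 / ((m:ℝ) + 1)) (h x)) atTop
      (𝓝 (∫ x, |h x| ^ p)) := by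
    refine tendsto_integral_of_dominated_convergence (fun x => |h x| * dbd p (h x)) (fun m => ?_) ?_
      (fun m => ae_of_all _ fun x => ?_) (ae_of_all _ fun x => ?_)
    · exact (hT.cont.mul ((dmap_sm (by positivity)).continuous.comp hT.cont)).aestronglyMeasurable
    · exact (hT.cont.abs.mul ((dbd_continuous hp).comp hT.cont)).integrable_of_hasCompactSupport
        (hT.cs.comp_left (g := fun s => |s| * dbd p s) (by simp))
    · rw [Real.norm_eq_abs, abs_mul]
      exact mul_le_mul_of_nonneg_left (dmap_le (by positivity)
        ((div_le_one (by positivity)).2 (by simp))) (abs_nonneg _)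
    · convert (dmap_tendsto p (h x)).const_mul (h x) using 2
      rcases eq_or_ne (h x) 0 with h0 | h0
      · simp [h0, hpq.pos.ne']
      · have := abs_mul_sq_rpow (p := p) h0
        have e : h x * (h x * (h x ^ 2) ^ ((p - 2) / 2)) = |h x| * (|h x| * (h x ^ 2) ^ ((p - 2) / 2)) := by
          linear_combination -(h x ^ 2) ^ ((p - 2) / 2) * (sq_abs (h x))
        rw [e, this]
        nth_rewrite 2 [← Real.rpow_one |h x|]
        rw [← Real.rpow_add (abs_pos.2 h0)]; congr 1; ring
  have hlim2 : Tendsto (fun m : ℕ => ∫ x, |dmap p (1 / ((m:ℝ) + 1)) (h x)| ^ q) atTop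
      (𝓝 (∫ x, |h x| ^ p)) := by
    refine tendsto_integral_of_dominated_convergence (fun x => dbd p (h x) ^ q) (fun m => ?_) ?_
      (fun m => ae_of_all _ fun x => ?_) (ae_of_all _ fun x => ?_)
    · exact (((dmap_sm (by positivity)).continuous.comp hT.cont).abs.rpow_const
        fun _ => Or.inr (by linarith)).aestronglyMeasurable
    · refine (((dbd_continuous hp).comp hT.cont).rpow_const
        fun _ => Or.inr (by linarith)).integrable_of_hasCompactSupport
        (hT.cs.comp_left (g := fun s => dbd p s ^ q) ?_)
      simp [dbd, Real.zero_rpow (by linarith : p - 1 ≠ 0), Real.zero_rpow (by linarith : q ≠ 0)]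
    · rw [Real.norm_eq_abs, abs_of_nonneg (by positivity)]
      exact Real.rpow_le_rpow (abs_nonneg _) (dmap_le (by positivity)
        ((div_le_one (by positivity)).2 (by simp))) (by linarith)
    · convert ((dmap_tendsto p (h x)).abs).rpow_const (p := q) (Or.inr (by linarith)) using 2
      rcases eq_or_ne (h x) 0 with h0 | h0
      · simp [h0, hpq.pos.ne', hpq.symm.pos.ne']
      · rw [abs_mul, abs_of_nonneg (Real.rpow_nonneg (sq_nonneg _) _), abs_mul_sq_rpow h0,
          ← Real.rpow_mul (abs_nonneg _), hpq.sub_one_mul_conj]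
  have hfin := le_of_tendsto_of_tendsto' (hlim1.const_mul l)
    (((hlim2.const_mul (l ^ q)).const_add A).const_mul (2 * D)) fun m => step _ (by positivity)
  set X := ∫ x, |h x| ^ p with hX
  rw [div_mul_eq_mul_div, le_div_iff₀ hl0]
  have : 2 * D * (A + l ^ q * X) = 2 * D * A + l / 2 * X := by rw [← hlq]; ring
  linarith

end cz

/-! ### Weighted bounds for Riesz potentials -/

section riesz
variable {n : ℕ}

lemma lintegral_scale {c : ℝ} (hc : 0 < c) (f : Euc n → ℝ≥0∞) :
    ∫⁻ x, f x = ENNReal.ofReal (c ^ n) * ∫⁻ x, f (c • x) := by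
  have h1 := Measure.map_addHaar_smul (volume : Measure (Euc n)) hc.ne'
  have h2 : ∫⁻ x, f (c • x) = ∫⁻ x, f x ∂(Measure.map (c • · : Euc n → Euc n) volume) :=
    (lintegral_map_equiv f (Homeomorph.smulOfNeZero c hc.ne').toMeasurableEquiv).symm
  rw [h2, h1, lintegral_smul_measure, finrank_euclideanSpace, Fintype.card_fin, smul_eq_mul,
    ← mul_assoc, ← ENNReal.ofReal_mul (by positivity), abs_of_pos (by positivity),
    mul_inv_cancel₀ (by positivity), ENNReal.ofReal_one, one_mul]

lemma ball_rpow_finite [NeZero n] {s : ℝ} (hs : -(n:ℝ) < s) :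
    ∫⁻ z : Euc n, ENNReal.ofReal (if ‖z‖ ≤ 1 then ‖z‖ ^ s else 0) < ⊤ := by
  have : Nontrivial (Euc n) := by
    have : Nonempty (Fin n) := ⟨0⟩
    infer_instance
  have hn : 1 ≤ n := NeZero.one_le
  have h : Integrable (fun z : Euc n => if ‖z‖ ≤ 1 then ‖z‖ ^ s else 0) := by
    rw [integrable_fun_norm_addHaar (volume : Measure (Euc n))
      (f := fun y => if y ≤ 1 then y ^ s else 0)]
    simp only [finrank_euclideanSpace, Fintype.card_fin, smul_eq_mul]
    have h1 : IntegrableOn (fun y : ℝ => y ^ ((n:ℝ) - 1 + s)) (Set.Ioc 0 1) :=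
      (intervalIntegrable_iff_integrableOn_Ioc_of_le zero_le_one).1
        (intervalIntegral.intervalIntegrable_rpow' (by linarith))
    have h2 : IntegrableOn (fun y : ℝ => y ^ (n - 1) * if y ≤ 1 then y ^ s else 0) (Set.Ioc 0 1) := by
      refine h1.congr_fun (fun y hy => ?_) measurableSet_Ioc
      simp only [hy.2, if_true]
      rw [Real.rpow_add hy.1, ← Real.rpow_natCast, Nat.cast_sub hn, Nat.cast_one]
    have h3 : IntegrableOn (fun y : ℝ => y ^ (n - 1) * if y ≤ 1 then y ^ s else 0) (Set.Ioi 1) := by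
      refine (integrableOn_zero (ε' := ℝ)).congr_fun (fun y hy => ?_) measurableSet_Ioi
      simp [not_le.2 (Set.mem_Ioi.1 hy)]
    rw [← Set.Ioc_union_Ioi_eq_Ioi zero_le_one]
    exact h2.union h3
  exact h.lintegral_lt_top

lemma exterior_rpow_finite [NeZero n] {s : ℝ} (hs : s < -(n:ℝ)) :
    ∫⁻ z : Euc n, ENNReal.ofReal (if 1 < ‖z‖ then ‖z‖ ^ s else 0) < ⊤ := by
  have : Nontrivial (Euc n) := by
    have : Nonempty (Fin n) := ⟨0⟩
    infer_instance
  have hn : 1 ≤ n := NeZero.one_le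
  have h : Integrable (fun z : Euc n => if 1 < ‖z‖ then ‖z‖ ^ s else 0) := by
    rw [integrable_fun_norm_addHaar (volume : Measure (Euc n))
      (f := fun y => if 1 < y then y ^ s else 0)]
    simp only [finrank_euclideanSpace, Fintype.card_fin, smul_eq_mul]
    have h1 : IntegrableOn (fun y : ℝ => y ^ ((n:ℝ) - 1 + s)) (Set.Ioi 1) :=
      integrableOn_Ioi_rpow_of_lt (by linarith) one_pos
    have h2 : IntegrableOn (fun y : ℝ => y ^ (n - 1) * if 1 < y then y ^ s else 0) (Set.Ioi 1) := by
      refine h1.congr_fun (fun y hy => ?_) measurableSet_Ioi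
      have hy1 : 1 < y := hy
      simp only [hy1, if_true]
      rw [Real.rpow_add (one_pos.trans hy1), ← Real.rpow_natCast, Nat.cast_sub hn, Nat.cast_one]
    have h3 : IntegrableOn (fun y : ℝ => y ^ (n - 1) * if 1 < y then y ^ s else 0) (Set.Ioc 0 1) := by
      refine (integrableOn_zero (ε' := ℝ)).congr_fun (fun y hy => ?_) measurableSet_Ioc
      simp [not_lt.2 hy.2]
    rw [← Set.Ioc_union_Ioi_eq_Ioi zero_le_one]
    exact h3.union h2
  exact h.lintegral_lt_top

lemma ball_rpow_scale (s : ℝ) {R : ℝ} (hR : 0 < R) :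
    ∫⁻ z : Euc n, ENNReal.ofReal (if ‖z‖ ≤ R then ‖z‖ ^ s else 0) = ENNReal.ofReal (R ^ (n + s)) *
      ∫⁻ z : Euc n, ENNReal.ofReal (if ‖z‖ ≤ 1 then ‖z‖ ^ s else 0) := by
  rw [lintegral_scale hR, Real.rpow_add hR, ENNReal.ofReal_mul (by positivity), Real.rpow_natCast,
    mul_assoc]
  congr 1
  rw [← lintegral_const_mul' _ _ ENNReal.ofReal_ne_top]
  refine lintegral_congr fun z => ?_
  rw [norm_smul, Real.norm_of_nonneg hR.le, ← ENNReal.ofReal_mul (by positivity)]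
  have : R * ‖z‖ ≤ R ↔ ‖z‖ ≤ 1 := by
    rw [mul_le_iff_le_one_right hR]
  simp only [this, mul_ite, mul_zero, Real.mul_rpow hR.le (norm_nonneg z)]

lemma exterior_rpow_scale (s : ℝ) {R : ℝ} (hR : 0 < R) :
    ∫⁻ z : Euc n, ENNReal.ofReal (if R < ‖z‖ then ‖z‖ ^ s else 0) = ENNReal.ofReal (R ^ (n + s)) *
      ∫⁻ z : Euc n, ENNReal.ofReal (if 1 < ‖z‖ then ‖z‖ ^ s else 0) := by
  rw [lintegral_scale hR, Real.rpow_add hR, ENNReal.ofReal_mul (by positivity), Real.rpow_natCast,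
    mul_assoc]
  congr 1
  rw [← lintegral_const_mul' _ _ ENNReal.ofReal_ne_top]
  refine lintegral_congr fun z => ?_
  rw [norm_smul, Real.norm_of_nonneg hR.le, ← ENNReal.ofReal_mul (by positivity)]
  have : R < R * ‖z‖ ↔ 1 < ‖z‖ := by
    rw [lt_mul_iff_one_lt_right hR]
  simp only [this, mul_ite, mul_zero, Real.mul_rpow hR.le (norm_nonneg z)]

lemma jap_ge_one (x : Euc n) : 1 ≤ jap x := by
  rw [jap, Real.one_le_sqrt]; nlinarith [sq_nonneg ‖x‖]
lemma jap_pos (x : Euc n) : 0 < jap x := one_pos.trans_le (jap_ge_one x)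
lemma norm_le_jap (x : Euc n) : ‖x‖ ≤ jap x := Real.le_sqrt_of_sq_le (by linarith)
lemma jap_sq (x : Euc n) : jap x ^ 2 = 1 + ‖x‖ ^ 2 := Real.sq_sqrt (by positivity)
lemma jap_le (x : Euc n) : jap x ≤ 1 + ‖x‖ := by
  rw [jap, Real.sqrt_le_iff]; constructor
  · positivity
  · nlinarith [norm_nonneg x]
lemma jap_le_add (x y : Euc n) : jap x ≤ jap y + ‖x - y‖ := by
  have h1 : ‖x‖ ≤ ‖y‖ + ‖x - y‖ := by
    calc ‖x‖ = ‖y + (x - y)‖ := by rw [add_sub_cancel]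
      _ ≤ _ := norm_add_le _ _
  have h2 := jap_sq y
  have h3 := norm_le_jap y
  have h4 := norm_nonneg (x - y)
  have h5 := norm_nonneg x
  refine Real.sqrt_le_iff.2 ⟨by linarith [jap_pos y], ?_⟩
  nlinarith
lemma jap_sm : Sm (jap (n := n)) := by
  unfold jap
  exact (contDiff_const.add (contDiff_norm_sq ℝ)).sqrt fun x => by positivity
lemma jap_cont : Continuous (jap (n := n)) := jap_sm.continuous

/-- Riesz potentials of powers of the weight. With `r = ⟨x⟩`, the integral is split into the regions
`‖x - y‖ ≤ r / 2`, `‖y‖ ≤ r` and `‖y‖ > r`. -/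
lemma riesz_weight [NeZero n] {a b : ℝ} (ha : 0 < a) (hab : a < b) (hb : b < n) :
    ∃ C : ℝ≥0∞, C ≠ ⊤ ∧ ∀ x : Euc n, ∫⁻ y, ENNReal.ofReal (‖x - y‖ ^ (a - n)) *
      ENNReal.ofReal (jap y ^ (-b)) ≤ C * ENNReal.ofReal (jap x ^ (a - b)) := by
  set I1 := ∫⁻ z : Euc n, ENNReal.ofReal (if ‖z‖ ≤ 1 then ‖z‖ ^ (a - n) else 0) with hI1
  set I2 := ∫⁻ z : Euc n, ENNReal.ofReal (if ‖z‖ ≤ 1 then ‖z‖ ^ (-b) else 0) with hI2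
  set I3 := ∫⁻ z : Euc n, ENNReal.ofReal (if 1 < ‖z‖ then ‖z‖ ^ (a - n - b) else 0) with hI3
  have f1 : I1 < ⊤ := ball_rpow_finite (by linarith)
  have f2 : I2 < ⊤ := ball_rpow_finite (by linarith)
  have f3 : I3 < ⊤ := exterior_rpow_finite (by linarith)
  set c1 : ℝ := 2⁻¹ ^ (a - b)
  set c2 : ℝ := 2⁻¹ ^ (a - n)
  set c3 : ℝ := 3⁻¹ ^ (a - n)
  refine ⟨ENNReal.ofReal c1 * I1 + (ENNReal.ofReal c2 * I2 + ENNReal.ofReal c3 * I3),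
    by finiteness, fun x => ?_⟩
  set r := jap x with hr
  have hr0 : 0 < r := jap_pos x
  have hr2 : 0 < r / 2 := by positivity
  have hpt : ∀ y : Euc n, y ≠ 0 → ‖x - y‖ ^ (a - n) * jap y ^ (-b) ≤
      (r / 2) ^ (-b) * (if ‖x - y‖ ≤ r / 2 then ‖x - y‖ ^ (a - n) else 0) +
      ((r / 2) ^ (a - n) * (if ‖y‖ ≤ r then ‖y‖ ^ (-b) else 0) +
        c3 * (if r < ‖y‖ then ‖y‖ ^ (a - n - b) else 0)) := by
    intro y hy
    have hj := jap_pos y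
    have i1 : 0 ≤ (r / 2) ^ (-b) * (if ‖x - y‖ ≤ r / 2 then ‖x - y‖ ^ (a - n) else 0) := by
      split_ifs <;> positivity
    have i2 : 0 ≤ (r / 2) ^ (a - n) * (if ‖y‖ ≤ r then ‖y‖ ^ (-b) else 0) := by
      split_ifs <;> positivity
    have i3 : 0 ≤ c3 * (if r < ‖y‖ then ‖y‖ ^ (a - n - b) else 0) := by
      split_ifs <;> positivity
    by_cases h1 : ‖x - y‖ ≤ r / 2
    · refine le_add_of_le_of_nonneg ?_ (add_nonneg i2 i3)
      rw [if_pos h1, mul_comm]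
      refine mul_le_mul_of_nonneg_right ?_ (by positivity)
      have : r / 2 ≤ jap y := by linarith [jap_le_add x y]
      exact Real.rpow_le_rpow_of_nonpos hr2 this (by linarith)
    · push Not at h1
      have hxy : 0 < ‖x - y‖ := hr2.trans h1
      refine le_add_of_nonneg_of_le i1 ?_
      by_cases h2 : ‖y‖ ≤ r
      · refine le_add_of_le_of_nonneg ?_ i3
        rw [if_pos h2]
        refine mul_le_mul ?_ ?_ (by positivity) (by positivity)
        · exact Real.rpow_le_rpow_of_nonpos hr2 h1.le (by linarith)
        · exact Real.rpow_le_rpow_of_nonpos (norm_pos_iff.2 hy) (norm_le_jap y) (by linarith)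
      · push Not at h2
        refine le_add_of_nonneg_of_le i2 ?_
        rw [if_pos h2]
        have hy : 0 < ‖y‖ := hr0.trans h2
        have h3 : 3⁻¹ * ‖y‖ ≤ ‖x - y‖ := by
          have := jap_le_add y x
          rw [norm_sub_rev] at this
          have := norm_le_jap y
          linarith
        rw [sub_eq_add_neg (a - n) b, Real.rpow_add hy, ← mul_assoc]
        refine mul_le_mul ?_ ?_ (by positivity) (by positivity)
        · rw [← Real.mul_rpow (by norm_num) hy.le]
          exact Real.rpow_le_rpow_of_nonpos (by positivity) h3 (by linarith)
        · exact Real.rpow_le_rpow_of_nonpos hy (norm_le_jap y) (by linarith)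
  have hint : ∫⁻ y, ENNReal.ofReal (‖x - y‖ ^ (a - n)) * ENNReal.ofReal (jap y ^ (-b)) ≤
      ∫⁻ y, (ENNReal.ofReal ((r / 2) ^ (-b)) *
          ENNReal.ofReal (if ‖x - y‖ ≤ r / 2 then ‖x - y‖ ^ (a - n) else 0) +
      (ENNReal.ofReal ((r / 2) ^ (a - n)) * ENNReal.ofReal (if ‖y‖ ≤ r then ‖y‖ ^ (-b) else 0) +
        ENNReal.ofReal c3 * ENNReal.ofReal (if r < ‖y‖ then ‖y‖ ^ (a - n - b) else 0))) := by
    refine lintegral_mono_ae ?_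
    filter_upwards [Measure.ae_ne volume (0 : Euc n)] with y hy
    rw [← ENNReal.ofReal_mul (by positivity), ← ENNReal.ofReal_mul (by positivity),
      ← ENNReal.ofReal_mul (by positivity), ← ENNReal.ofReal_mul (by positivity)]
    exact (ENNReal.ofReal_le_ofReal (hpt y hy)).trans (ENNReal.ofReal_add_le.trans
      (add_le_add le_rfl ENNReal.ofReal_add_le))
  refine hint.trans ?_
  have hm : ∀ (s : ℝ) (R : ℝ),
      Measurable fun z : Euc n => ENNReal.ofReal (if ‖z‖ ≤ R then ‖z‖ ^ s else 0) := fun s R =>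
    (Measurable.ite (measurableSet_le (by fun_prop) (by fun_prop))
      (by fun_prop) measurable_const).ennreal_ofReal
  have hm' : ∀ (s : ℝ) (R : ℝ),
      Measurable fun y : Euc n => ENNReal.ofReal (if ‖x - y‖ ≤ R then ‖x - y‖ ^ s else 0) :=
    fun s R => (hm s R).comp (measurable_const.sub measurable_id)
  rw [lintegral_add_left ((hm' _ _).const_mul _), lintegral_add_left ((hm _ _).const_mul _),
    lintegral_const_mul' _ _ ENNReal.ofReal_ne_top, lintegral_const_mul' _ _ ENNReal.ofReal_ne_top,
    lintegral_const_mul' _ _ ENNReal.ofReal_ne_top,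
    lintegral_sub_left_eq_self (fun z : Euc n => ENNReal.ofReal (if ‖z‖ ≤ r / 2 then ‖z‖ ^ (a - n) else 0)) x,
    ball_rpow_scale _ hr2, ball_rpow_scale _ hr0, exterior_rpow_scale _ hr0, ← hI1, ← hI2, ← hI3]
  have e1 : (r / 2) ^ (-b) * (r / 2) ^ (n + (a - n)) = c1 * r ^ (a - b) := by
    rw [← Real.rpow_add hr2, div_eq_inv_mul, Real.mul_rpow (by norm_num) hr0.le]
    congr 2 <;> ring
  have e2 : (r / 2) ^ (a - n) * r ^ (n + -b) = c2 * r ^ (a - b) := by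
    rw [div_eq_inv_mul, Real.mul_rpow (by norm_num) hr0.le, mul_assoc, ← Real.rpow_add hr0]
    congr 2; ring
  have e3 : r ^ (n + (a - n - b)) = r ^ (a - b) := by congr 1; ring
  rw [← mul_assoc, ← mul_assoc, ← ENNReal.ofReal_mul (by positivity),
    ← ENNReal.ofReal_mul (by positivity), e1, e2, e3, ENNReal.ofReal_mul (by positivity),
    ENNReal.ofReal_mul (by positivity)]
  refine le_of_eq ?_
  ring

/-- The Riesz potential of order `a`, without normalizing constant. -/
def riesz (a : ℝ) (f : Euc n → ℝ≥0∞) (x : Euc n) : ℝ≥0∞ :=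
  ∫⁻ y, ENNReal.ofReal (‖x - y‖ ^ (a - n)) * f y

lemma riesz_kernel_measurable (a : ℝ) :
    Measurable fun z : Euc n × Euc n => ENNReal.ofReal (‖z.1 - z.2‖ ^ (a - n)) :=
  ((measurable_fst.sub measurable_snd).norm.pow_const _).ennreal_ofReal

lemma riesz_measurable (a : ℝ) {f : Euc n → ℝ≥0∞} (hf : Measurable f) : Measurable (riesz a f) :=
  ((riesz_kernel_measurable a).mul (hf.comp measurable_snd)).lintegral_prod_right'

/-- Weighted `L^p` bound for Riesz potentials, by Schur's test with powers of the weight. -/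
lemma riesz_Lp [NeZero n] {p δ a : ℝ} (hp : 1 < p) (hδ : 2 - n < δ) (hδ0 : δ < 0)
    (ha : 0 < a) (ha2 : a ≤ 2) : ∃ C : ℝ≥0∞, C ≠ ⊤ ∧ ∀ f : Euc n → ℝ≥0∞, Measurable f →
      ∫⁻ x, (ENNReal.ofReal (jap x ^ (2 - δ - n / p - a)) * riesz a f x) ^ p ≤
        C * ∫⁻ y, (ENNReal.ofReal (jap y ^ (2 - δ - n / p)) * f y) ^ p := by
  obtain ⟨q, hpq⟩ : ∃ q, p.HolderConjugate q := ⟨_, Real.HolderConjugate.conjExponent hp⟩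
  have hp0 := hpq.pos
  have hq0 := hpq.symm.pos
  have hinv := hpq.inv_add_inv_eq_one
  set s : ℝ := 2 - δ - n / p with hs
  have hsn : s = 2 - δ - n * p⁻¹ := by rw [hs, div_eq_mul_inv]
  have hpi : 0 < p⁻¹ := inv_pos.2 hp0
  have hqi : 0 < q⁻¹ := inv_pos.2 hq0
  -- The bounds on `α` are the hypotheses of `riesz_weight` in the two conditions of Schur's test;
  -- the interval is nonempty because `2 - n < δ < 0`.
  obtain ⟨α, hα1, hα2⟩ : ∃ α, max ((a - s) / q) (s / p) < α ∧ α < min ((n - s) / q) ((n + s - a) / p) := by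
    refine exists_between (lt_min (max_lt ?_ ?_) (max_lt ?_ ?_))
    · exact div_lt_div_of_pos_right (by linarith) hq0
    · rw [div_eq_mul_inv, div_eq_mul_inv, show q⁻¹ = 1 - p⁻¹ by linarith]
      nlinarith
    · rw [div_eq_mul_inv, div_eq_mul_inv, show q⁻¹ = 1 - p⁻¹ by linarith]
      nlinarith
    · exact div_lt_div_of_pos_right (by linarith) hp0
  have b1 : a < s + α * q := by
    have := (div_lt_iff₀ hq0).1 ((le_max_left _ _).trans_lt hα1); linarith
  have b2 : s < α * p := (div_lt_iff₀ hp0).1 ((le_max_right _ _).trans_lt hα1)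
  have b3 : s + α * q < n := by
    have := (lt_div_iff₀ hq0).1 (hα2.trans_le (min_le_left _ _)); linarith
  have b4 : α * p < n + s - a := (lt_div_iff₀ hp0).1 (hα2.trans_le (min_le_right _ _))
  obtain ⟨C₁, hC₁, h₁⟩ := riesz_weight (n := n) ha b1 b3
  obtain ⟨C₂, hC₂, h₂⟩ := riesz_weight (n := n) ha (b := a - s + α * p) (by linarith) (by linarith)
  have hjm : ∀ e : ℝ, Measurable fun y : Euc n => ENNReal.ofReal (jap y ^ e) := fun e =>
    (jap_cont.measurable.pow_const e).ennreal_ofReal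
  have hjr : ∀ (e r : ℝ) (y : Euc n), 0 ≤ r → ENNReal.ofReal (jap y ^ e) ^ r = ENNReal.ofReal (jap y ^ (e * r)) := by
    intro e r y hr
    rw [ENNReal.ofReal_rpow_of_nonneg (Real.rpow_nonneg (jap_pos y).le _) hr,
      ← Real.rpow_mul (jap_pos y).le]
  have hja : ∀ (e r : ℝ) (y : Euc n),
      ENNReal.ofReal (jap y ^ e) * ENNReal.ofReal (jap y ^ r) = ENNReal.ofReal (jap y ^ (e + r)) := by
    intro e r y
    rw [← ENNReal.ofReal_mul (Real.rpow_nonneg (jap_pos y).le _), ← Real.rpow_add (jap_pos y)]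
  refine ⟨C₁ ^ (p / q) * C₂, ENNReal.mul_ne_top (ENNReal.rpow_ne_top_of_nonneg (by positivity) hC₁) hC₂,
    fun f hf => ?_⟩
  have key := schur_test (μ := (volume : Measure (Euc n))) (ν := (volume : Measure (Euc n))) hpq
    (K := fun x y => ENNReal.ofReal (jap x ^ (s - a)) * ENNReal.ofReal (‖x - y‖ ^ (a - n)) *
      ENNReal.ofReal (jap y ^ (-s)))
    (h := fun y => ENNReal.ofReal (jap y ^ (-α))) (k := fun y => ENNReal.ofReal (jap y ^ (-α)))
    (C₁ := C₁) (C₂ := C₂) (f := fun y => ENNReal.ofReal (jap y ^ s) * f y)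
    ((((hjm _).comp measurable_fst).mul (riesz_kernel_measurable a)).mul ((hjm _).comp measurable_snd))
    (hjm _) (fun y => by simpa using Real.rpow_pos_of_pos (jap_pos y) _)
    (fun y => ENNReal.ofReal_ne_top) (hjm _) ?_ ?_ ((hjm _).mul hf)
  · refine le_trans (le_of_eq ?_) key
    refine lintegral_congr fun x => ?_
    congr 1
    rw [riesz, ← lintegral_const_mul' _ _ ENNReal.ofReal_ne_top]
    refine lintegral_congr fun y => ?_
    have := hja (-s) s y
    rw [neg_add_cancel, Real.rpow_zero, ENNReal.ofReal_one] at this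
    calc _ = ENNReal.ofReal (jap x ^ (s - a)) * ENNReal.ofReal (‖x - y‖ ^ (a - n)) * 1 * f y := by ring
      _ = _ := by rw [← this]; ring
  · intro x
    calc _ = ENNReal.ofReal (jap x ^ (s - a)) * ∫⁻ y, ENNReal.ofReal (‖x - y‖ ^ (a - n)) *
          ENNReal.ofReal (jap y ^ (-(s + α * q))) := by
          rw [← lintegral_const_mul' _ _ ENNReal.ofReal_ne_top]
          refine lintegral_congr fun y => ?_
          rw [hjr _ _ _ hq0.le, mul_assoc, hja, mul_assoc]
          congr 5; ring
      _ ≤ ENNReal.ofReal (jap x ^ (s - a)) * (C₁ * ENNReal.ofReal (jap x ^ (a - (s + α * q)))) := by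
          gcongr; exact h₁ x
      _ = _ := by
          rw [mul_left_comm, hja, hjr _ _ _ hq0.le]
          congr 3; ring
  · intro y
    calc _ = ENNReal.ofReal (jap y ^ (-s)) * ∫⁻ x, ENNReal.ofReal (‖y - x‖ ^ (a - n)) *
          ENNReal.ofReal (jap x ^ (-(a - s + α * p))) := by
          rw [← lintegral_const_mul' _ _ ENNReal.ofReal_ne_top]
          refine lintegral_congr fun x => ?_
          rw [hjr _ _ _ hp0.le, show -(a - s + α * p) = (s - a) + -α * p by ring, ← hja, norm_sub_rev]
          ring
      _ ≤ ENNReal.ofReal (jap y ^ (-s)) * (C₂ * ENNReal.ofReal (jap y ^ (a - (a - s + α * p)))) := by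
          gcongr; exact h₂ y
      _ = _ := by
          rw [mul_left_comm, hja, hjr _ _ _ hp0.le]
          congr 3; ring

end riesz

/-! ### The Newton kernel -/

section newton
variable {n : ℕ}

lemma qd_hasFDerivAt {c : ℝ} (s : ℝ) {x : Euc n} (h : 0 < ‖x‖ ^ 2 + c) :
    HasFDerivAt (fun x : Euc n => (‖x‖ ^ 2 + c) ^ s)
      ((s * (‖x‖ ^ 2 + c) ^ (s - 1)) • ((2:ℕ) • innerSL ℝ x)) x :=
  ((hasStrictFDerivAt_norm_sq x).hasFDerivAt.add_const c).rpow_const (Or.inl h.ne')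

lemma pd_qd {c : ℝ} (s : ℝ) {x : Euc n} (h : 0 < ‖x‖ ^ 2 + c) (i : Fin n) :
    pd i (fun x : Euc n => (‖x‖ ^ 2 + c) ^ s) x = 2 * s * x i * (‖x‖ ^ 2 + c) ^ (s - 1) := by
  rw [pd, (qd_hasFDerivAt s h).fderiv]
  simp [EuclideanSpace.inner_single_right]
  ring

lemma pd_pd_qd {c : ℝ} (s : ℝ) {x : Euc n} (h : 0 < ‖x‖ ^ 2 + c) (i j : Fin n) :
    pd j (pd i (fun x : Euc n => (‖x‖ ^ 2 + c) ^ s)) x =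
      2 * s * (if i = j then 1 else 0) * (‖x‖ ^ 2 + c) ^ (s - 1) +
        4 * s * (s - 1) * (x i * x j) * (‖x‖ ^ 2 + c) ^ (s - 2) := by
  have ho : ∀ᶠ y : Euc n in 𝓝 x, 0 < ‖y‖ ^ 2 + c :=
    (by fun_prop : Continuous fun y : Euc n => ‖y‖ ^ 2 + c).continuousAt.eventually (lt_mem_nhds h)
  have he : pd i (fun x : Euc n => (‖x‖ ^ 2 + c) ^ s) =ᶠ[𝓝 x]
      fun y => (2 * s * y i) * (‖y‖ ^ 2 + c) ^ (s - 1) := ho.mono fun y hy => pd_qd s hy i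
  have h1 : HasFDerivAt (fun y : Euc n => 2 * s * y i)
      ((2 * s) • (EuclideanSpace.proj i : Euc n →L[ℝ] ℝ)) x :=
    ((EuclideanSpace.proj i : Euc n →L[ℝ] ℝ).hasFDerivAt).const_mul (2 * s)
  have h2 := h1.mul (qd_hasFDerivAt (s - 1) h)
  rw [pd, he.fderiv_eq]
  erw [h2.fderiv]
  rw [show s - 1 - 1 = s - 2 by ring]
  by_cases hij : i = j
  · subst hij
    simp [EuclideanSpace.inner_single_right]
    ring
  · simp [EuclideanSpace.inner_single_right, hij]
    ring

/-- The regularized Newton kernels, up to a constant; `c = 0` is the Newton kernel. -/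
def Nw (c : ℝ) (x : Euc n) : ℝ := (‖x‖ ^ 2 + c) ^ ((2 - (n:ℝ)) / 2)

/-- The Laplacian of the regularized kernel is a multiple of a bump concentrating at the origin as
`c → 0`. -/
lemma lap_Nw {c : ℝ} {x : Euc n} (h : 0 < ‖x‖ ^ 2 + c) :
    lap (Nw c) x = - (n * (n - 2)) * (c * (‖x‖ ^ 2 + c) ^ (-((n:ℝ) + 2) / 2)) := by
  unfold lap Nw
  simp only [pd_pd_qd _ h, if_true]
  rw [Finset.sum_add_distrib, Finset.sum_const, ← Finset.sum_mul, ← Finset.mul_sum]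
  have hx : ∑ i, x i * x i = ‖x‖ ^ 2 := by
    rw [EuclideanSpace.real_norm_sq_eq]; simp [sq]
  rw [hx, show (2 - (n:ℝ)) / 2 - 1 = ((2 - (n:ℝ)) / 2 - 2) + 1 by ring, Real.rpow_add h, Real.rpow_one,
    show (2 - (n:ℝ)) / 2 - 2 = -((n:ℝ) + 2) / 2 by ring]
  simp
  ring

lemma Nw_sm {c : ℝ} (hc : 0 < c) : Sm (Nw (n := n) c) := by
  unfold Nw
  exact (ContDiff.rpow_const_of_ne ((contDiff_norm_sq ℝ).add contDiff_const) fun x => by positivity)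

lemma Nw_zero (x : Euc n) : Nw 0 x = ‖x‖ ^ ((2:ℝ) - n) := by
  rw [Nw, add_zero, ← Real.rpow_natCast, ← Real.rpow_mul (norm_nonneg _)]
  congr 1; push_cast; ring

lemma Nw_nonneg {c : ℝ} (hc : 0 ≤ c) (x : Euc n) : 0 ≤ Nw c x := by
  unfold Nw; positivity

lemma Nw_le (hn : 3 ≤ n) {c : ℝ} (hc : 0 ≤ c) {x : Euc n} (hx : x ≠ 0) : Nw c x ≤ Nw 0 x := by
  have hn' : (3:ℝ) ≤ n := by exact_mod_cast hn
  have : 0 < ‖x‖ := norm_pos_iff.2 hx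
  exact Real.rpow_le_rpow_of_nonpos (by positivity) (by linarith) (by linarith)

lemma Nw_measurable (c : ℝ) : Measurable (Nw (n := n) c) := by
  unfold Nw
  exact ((continuous_norm.pow 2).measurable.add_const c).pow_const _

lemma Nw_locallyIntegrable [NeZero n] : LocallyIntegrable (Nw (n := n) 0) := by
  have h : ∀ R : ℝ, 0 < R → IntegrableOn (Nw (n := n) 0) (Metric.closedBall 0 R) := by
    intro R hR
    have : ∫⁻ z : Euc n, ENNReal.ofReal (if ‖z‖ ≤ R then ‖z‖ ^ ((2:ℝ) - n) else 0) < ⊤ := by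
      rw [ball_rpow_scale _ hR]
      exact ENNReal.mul_lt_top ENNReal.ofReal_lt_top (ball_rpow_finite (by linarith))
    refine ⟨(Nw_measurable 0).aestronglyMeasurable, ?_⟩
    rw [hasFiniteIntegral_iff_enorm, ← lintegral_indicator Metric.isClosed_closedBall.measurableSet]
    refine lt_of_le_of_lt (lintegral_mono fun z => ?_) this
    by_cases hz : ‖z‖ ≤ R
    · rw [Set.indicator_of_mem (by simpa using hz), if_pos hz, Nw_zero,
        Real.enorm_eq_ofReal (by positivity)]
    · rw [Set.indicator_of_notMem (by simpa using hz)]; exact zero_le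
  rw [locallyIntegrable_iff]
  intro k hk
  obtain ⟨R, hR0, hR⟩ := hk.isBounded.exists_pos_norm_le
  exact (h R hR0).mono_set fun x hx => by simpa using hR x hx

/-- The (positive) normalizing constant of the Newton kernel. -/
def cN (n : ℕ) : ℝ := n * (n - 2) * ∫ z : Euc n, (‖z‖ ^ 2 + 1) ^ (-((n:ℝ) + 2) / 2)

lemma cN_integrable : Integrable fun z : Euc n => (‖z‖ ^ 2 + 1) ^ (-((n:ℝ) + 2) / 2) := by
  have := integrable_rpow_neg_one_add_norm_sq (E := Euc n) (μ := volume) (r := (n:ℝ) + 2)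
    (by rw [finrank_euclideanSpace, Fintype.card_fin]; linarith)
  simpa only [add_comm] using this

lemma cN_pos (hn : 3 ≤ n) : 0 < cN n := by
  have hn' : (3:ℝ) ≤ n := by exact_mod_cast hn
  refine mul_pos (mul_pos (by linarith) (by linarith)) ?_
  refine (integral_pos_iff_support_of_nonneg (fun z => by positivity) cN_integrable).2 ?_
  have : Function.support (fun z : Euc n => (‖z‖ ^ 2 + 1) ^ (-((n:ℝ) + 2) / 2)) = Set.univ := by
    ext z; simp; positivity
  rw [this]; exact isOpen_univ.measure_pos _ Set.univ_nonempty

/-- Convergence of the regularized kernels, by domination by the Newton kernel itself. -/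
lemma Nw_tendsto (hn : 3 ≤ n) {g : Euc n → ℝ} (hg : Continuous g) (hc : HasCompactSupport g)
    {e : ℕ → ℝ} (het : Tendsto e atTop (𝓝 0)) :
    Tendsto (fun m => ∫ y, Nw (e m ^ 2) y * g y) atTop (𝓝 (∫ y, Nw 0 y * g y)) := by
  have : NeZero n := ⟨by omega⟩
  refine tendsto_integral_of_dominated_convergence (fun y => Nw 0 y * |g y|) (fun m => ?_) ?_
    (fun m => ?_) ?_
  · exact ((Nw_measurable _).aestronglyMeasurable).mul hg.aestronglyMeasurable
  · have := Nw_locallyIntegrable.integrable_smul_right_of_hasCompactSupport hg.abs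
      (hc.comp_left (g := fun s : ℝ => |s|) (by simp))
    exact this
  · filter_upwards [Measure.ae_ne volume (0 : Euc n)] with y hy
    rw [norm_mul, Real.norm_of_nonneg (Nw_nonneg (sq_nonneg _) y), Real.norm_eq_abs]
    exact mul_le_mul_of_nonneg_right (Nw_le hn (sq_nonneg _) hy) (abs_nonneg _)
  · filter_upwards [Measure.ae_ne volume (0 : Euc n)] with y hy
    refine Tendsto.mul_const _ ?_
    have : 0 < ‖y‖ := norm_pos_iff.2 hy
    refine Tendsto.rpow_const ?_ (Or.inl (by positivity))
    simpa using tendsto_const_nhds.add (het.pow 2)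

/-- The Newton kernel is a fundamental solution at the origin: after integration by parts, the
Laplacians of the regularized kernels act as an approximate identity of total mass `-cN n`. -/
lemma newton_zero (hn : 3 ≤ n) {φ : Euc n → ℝ} (hφ : Tst φ) :
    ∫ y, Nw 0 y * lap φ y = - cN n * φ 0 := by
  have : NeZero n := ⟨by omega⟩
  let e : ℕ → ℝ := fun m => 1 / ((m:ℝ) + 1)
  have he0 : ∀ m, 0 < e m := fun m => by positivity
  have het : Tendsto e atTop (𝓝 0) := tendsto_one_div_add_atTop_nhds_zero_nat
  have h1 : Tendsto (fun m => ∫ y, Nw (e m ^ 2) y * lap φ y) atTop (𝓝 (∫ y, Nw 0 y * lap φ y)) := by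
    exact Nw_tendsto hn hφ.lap.cont hφ.lap.cs het
  have h2 : ∀ m, ∫ y, Nw (e m ^ 2) y * lap φ y =
      - (n * (n - 2)) * ∫ z, (‖z‖ ^ 2 + 1) ^ (-((n:ℝ) + 2) / 2) * φ (e m • z) := by
    intro m
    have hm := he0 m
    rw [ibp_lap (Nw_sm (by positivity)) hφ.sm (Or.inr hφ.cs)]
    have h3 := Measure.integral_comp_smul_of_nonneg (volume : Measure (Euc n))
      (fun y => lap (Nw (e m ^ 2)) y * φ y) (e m) (hR := hm.le)
    rw [finrank_euclideanSpace, Fintype.card_fin, smul_eq_mul] at h3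
    have h4 : ∫ y, lap (Nw (e m ^ 2)) y * φ y =
        e m ^ n * ∫ z, lap (Nw (e m ^ 2)) (e m • z) * φ (e m • z) := by
      rw [h3, ← mul_assoc, mul_inv_cancel₀ (by positivity), one_mul]
    rw [h4, ← integral_const_mul, ← integral_const_mul]
    congr 1; funext z
    rw [lap_Nw (by positivity), norm_smul, Real.norm_of_nonneg hm.le,
      show (e m * ‖z‖) ^ 2 + e m ^ 2 = e m ^ 2 * (‖z‖ ^ 2 + 1) by ring,
      Real.mul_rpow (by positivity) (by positivity)]
    have : e m ^ n * (e m ^ 2 * (e m ^ 2) ^ (-((n:ℝ) + 2) / 2)) = 1 := by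
      rw [← Real.rpow_natCast (e m) 2, ← Real.rpow_natCast (e m) n, ← Real.rpow_mul hm.le,
        ← Real.rpow_add hm, ← Real.rpow_add hm]
      rw [show (n:ℝ) + (((2:ℕ):ℝ) + ((2:ℕ):ℝ) * (-((n:ℝ) + 2) / 2)) = 0 by push_cast; ring, Real.rpow_zero]
    linear_combination (-(n * (n - 2)) * (‖z‖ ^ 2 + 1) ^ (-((n:ℝ) + 2) / 2) * φ (e m • z)) * this
  obtain ⟨M, hM0, hM⟩ := hφ.bdd
  have h5 : Tendsto (fun m => ∫ z, (‖z‖ ^ 2 + 1) ^ (-((n:ℝ) + 2) / 2) * φ (e m • z)) atTop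
      (𝓝 (∫ z : Euc n, (‖z‖ ^ 2 + 1) ^ (-((n:ℝ) + 2) / 2) * φ 0)) := by
    refine tendsto_integral_of_dominated_convergence
      (fun z => (‖z‖ ^ 2 + 1) ^ (-((n:ℝ) + 2) / 2) * M) (fun m => ?_) (cN_integrable.mul_const M)
      (fun m => ae_of_all _ fun z => ?_) (ae_of_all _ fun z => ?_)
    · exact cN_integrable.aestronglyMeasurable.mul
        (hφ.cont.comp (continuous_const_smul (e m))).aestronglyMeasurable
    · rw [norm_mul, Real.norm_of_nonneg (by positivity)]
      exact mul_le_mul_of_nonneg_left (hM _) (by positivity)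
    · refine Tendsto.const_mul _ ?_
      have := (hφ.cont.tendsto ((0:ℝ) • z)).comp (het.smul_const z)
      simpa [Function.comp_def] using this
  simp only [h2] at h1
  have := tendsto_nhds_unique h1 (h5.const_mul _)
  rw [this, integral_mul_const, cN]
  ring

lemma pd_refl {f : Euc n → ℝ} (hf : Sm f) (x : Euc n) (i : Fin n) :
    pd i (fun y => f (x - y)) = fun y => - pd i f (x - y) := by
  ext y
  have h := (hf.diff (x - y)).hasFDerivAt.comp y ((hasFDerivAt_id y).const_sub x)
  have h' : fderiv ℝ (fun y => f (x - y)) y = _ := h.fderiv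
  simp only [pd]
  rw [h']
  simp

lemma lap_refl {f : Euc n → ℝ} (hf : Sm f) (x y : Euc n) :
    lap (fun y => f (x - y)) y = lap f (x - y) := by
  simp only [lap]
  refine Finset.sum_congr rfl fun i _ => ?_
  rw [pd_refl hf]
  have hs : Sm fun z => (-1) * pd i f z := contDiff_const.mul (hf.pd i)
  have := pd_refl hs x i
  simp only [neg_one_mul] at this
  rw [this]
  have h2 := pd_const_mul (hf.pd i).diff (-1) i
  simp only [neg_one_mul] at h2
  rw [h2]; exact neg_neg _

lemma Tst.refl {f : Euc n → ℝ} (hf : Tst f) (x : Euc n) : Tst fun y => f (x - y) :=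
  ⟨hf.sm.comp (by fun_prop), hf.cs.comp_homeomorph (Homeomorph.subLeft x)⟩

/-- The Newton kernel inverts the Laplacian on test functions. -/
lemma newton (hn : 3 ≤ n) {φ : Euc n → ℝ} (hφ : Tst φ) (x : Euc n) :
    ∫ y, Nw 0 y * lap φ (x - y) = - cN n * φ x := by
  have := newton_zero hn (hφ.refl x)
  simpa [lap_refl hφ.sm] using this

end newton

/-! ### Convolution and the parametrix -/

section convolution
variable {n : ℕ}

/-- Convolution of real functions on `ℝⁿ`. -/
def cv (K f : Euc n → ℝ) (x : Euc n) : ℝ := ∫ y, K y * f (x - y)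

lemma cv_eq_convolution (K f : Euc n → ℝ) :
    cv K f = convolution K f (ContinuousLinearMap.mul ℝ ℝ) volume := by
  ext x; simp [cv, convolution]

lemma cv_comm (K f : Euc n → ℝ) : cv K f = cv f K := by
  ext x
  unfold cv
  rw [← integral_sub_left_eq_self _ volume x]
  simp [mul_comm]

lemma cv_sm {K f : Euc n → ℝ} (hK : LocallyIntegrable K) (hf : Tst f) : Sm (cv K f) := by
  rw [cv_eq_convolution]
  exact hf.cs.contDiff_convolution_right _ hK hf.sm

lemma cv_integrable {K f : Euc n → ℝ} (hK : LocallyIntegrable K) (hf : Continuous f)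
    (hc : HasCompactSupport f) (x : Euc n) : Integrable fun y => K y * f (x - y) := by
  have := hK.integrable_smul_right_of_hasCompactSupport
    (hf.comp (continuous_const.sub continuous_id)) (hc.comp_homeomorph (Homeomorph.subLeft x))
  exact this

lemma pd_cv {K f : Euc n → ℝ} (hK : LocallyIntegrable K) (hf : Tst f) (i : Fin n) :
    pd i (cv K f) = cv K (pd i f) := by
  ext x
  have h := hf.cs.hasFDerivAt_convolution_right (ContinuousLinearMap.mul ℝ ℝ) hK
    (hf.sm.of_le (by exact_mod_cast le_top)) x
  rw [← cv_eq_convolution] at h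
  rw [pd, h.fderiv]
  have hi : Integrable (fun t => ((ContinuousLinearMap.mul ℝ ℝ).precompR (Euc n)) (K t)
      (fderiv ℝ f (x - t))) := by
    have := (hf.cs.fderiv ℝ).convolutionExists_right ((ContinuousLinearMap.mul ℝ ℝ).precompR (Euc n)) hK
      (hf.sm.continuous_fderiv (by simp)) x
    exact this
  rw [convolution_def, ContinuousLinearMap.integral_apply hi]
  simp [cv, pd]

lemma lap_cv {K f : Euc n → ℝ} (hK : LocallyIntegrable K) (hf : Tst f) (x : Euc n) :
    lap (cv K f) x = cv K (lap f) x := by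
  unfold lap
  simp only [pd_cv hK hf, pd_cv hK (hf.pd _)]
  unfold cv
  rw [← integral_finsetSum _ fun i _ => cv_integrable hK ((hf.pd i).pd i).cont ((hf.pd i).pd i).cs x]
  simp [Finset.mul_sum]

/-- A smooth function can be replaced by a test function on any given ball. -/
lemma exists_local {f : Euc n → ℝ} (hf : Sm f) (R : ℝ) :
    ∃ g, Tst g ∧ ∀ x, ‖x‖ < R → g x = f x := by
  let R' := |R| + 1
  have hR' : 0 < R' := by positivity
  refine ⟨fun x => cut (R'⁻¹ • x) * f x, ?_, fun x hx => ?_⟩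
  · have := cut_tst (n := n).comp_smul (inv_ne_zero hR'.ne')
    exact ⟨this.sm.mul hf, this.cs.mul_right⟩
  · have : cut (R'⁻¹ • x) = 1 := cut_one (by
      rw [norm_smul, norm_inv, Real.norm_of_nonneg hR'.le, inv_mul_le_one₀ hR']
      have := le_abs_self R
      linarith)
    simp [this]

lemma pd_congr {f g : Euc n → ℝ} {x : Euc n} (h : f =ᶠ[𝓝 x] g) (i : Fin n) :
    pd i f =ᶠ[𝓝 x] pd i g := by
  filter_upwards [h.fderiv (𝕜 := ℝ)] with y hy
  rw [pd, pd, hy]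

lemma lap_congr {f g : Euc n → ℝ} {x : Euc n} (h : f =ᶠ[𝓝 x] g) : lap f x = lap g x := by
  unfold lap
  exact Finset.sum_congr rfl fun i _ => (pd_congr (pd_congr h i) i).eq_of_nhds

lemma eventuallyEq_of_ball {f g : Euc n → ℝ} {R : ℝ} (h : ∀ x, ‖x‖ < R → g x = f x) {x : Euc n}
    (hx : ‖x‖ < R) : g =ᶠ[𝓝 x] f := by
  filter_upwards [(isOpen_lt continuous_norm continuous_const).mem_nhds hx] with y hy using h y hy

/-- If the kernel lives in the ball of radius `2`, then the convolution at `x` only depends on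
the values at distance at most `2` from `x`. -/
lemma cv_local {K f g : Euc n → ℝ} (hK : ∀ x, 2 ≤ ‖x‖ → K x = 0) {R : ℝ}
    (h : ∀ x, ‖x‖ < R → g x = f x) {x : Euc n} (hx : ‖x‖ + 2 < R) : cv K g x = cv K f x := by
  unfold cv
  congr 1; funext y
  by_cases hy : 2 ≤ ‖y‖
  · simp [hK y hy]
  · rw [h]
    have := norm_sub_le x y
    linarith

lemma cv_local_ev {K f g : Euc n → ℝ} (hK : ∀ x, 2 ≤ ‖x‖ → K x = 0) {R : ℝ}
    (h : ∀ x, ‖x‖ < R → g x = f x) {x : Euc n} (hx : ‖x‖ + 2 < R) : cv K g =ᶠ[𝓝 x] cv K f := by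
  filter_upwards [(isOpen_lt (continuous_norm.add continuous_const) continuous_const).mem_nhds hx]
    with y hy using cv_local hK h hy

lemma cv_sm' {K f : Euc n → ℝ} (hK : LocallyIntegrable K) (hK2 : ∀ x, 2 ≤ ‖x‖ → K x = 0)
    (hf : Sm f) : Sm (cv K f) := by
  refine contDiff_iff_contDiffAt.2 fun x => ?_
  obtain ⟨g, hg, hgf⟩ := exists_local hf (‖x‖ + 3)
  exact ((cv_sm hK hg).contDiffAt).congr_of_eventuallyEq (cv_local_ev hK2 hgf (by linarith)).symm

lemma pd_cv' {K f : Euc n → ℝ} (hK : LocallyIntegrable K) (hK2 : ∀ x, 2 ≤ ‖x‖ → K x = 0)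
    (hf : Sm f) (i : Fin n) : pd i (cv K f) = cv K (pd i f) := by
  ext x
  obtain ⟨g, hg, hgf⟩ := exists_local hf (‖x‖ + 3)
  have h1 := (pd_congr (cv_local_ev hK2 hgf (x := x) (by linarith)) i).eq_of_nhds
  rw [← h1, pd_cv hK hg]
  refine cv_local hK2 (R := ‖x‖ + 3) (fun y hy => ?_) (by linarith)
  exact (pd_congr (eventuallyEq_of_ball hgf hy) i).eq_of_nhds

/-- The part of the Newton kernel near the origin. -/
def Pk (x : Euc n) : ℝ := Nw 0 x * cut x
/-- The part of the Newton kernel away from the origin. -/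
def K2 (x : Euc n) : ℝ := Nw 0 x * (1 - cut x)

lemma Pk_zero (x : Euc n) (hx : 2 ≤ ‖x‖) : Pk x = 0 := by simp [Pk, cut_zero hx]

lemma Pk_li [NeZero n] : LocallyIntegrable (Pk (n := n)) := by
  have := Nw_locallyIntegrable.integrable_smul_right_of_hasCompactSupport (cut_tst (n := n)).cont
    (cut_tst (n := n)).cs
  exact Integrable.locallyIntegrable this

lemma K2_sm : Sm (K2 (n := n)) := by
  refine contDiff_iff_contDiffAt.2 fun x => ?_
  by_cases hx : x = 0
  · subst hx
    refine (contDiffAt_const (c := (0:ℝ))).congr_of_eventuallyEq ?_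
    filter_upwards [Metric.ball_mem_nhds (0 : Euc n) one_pos] with y hy
    rw [K2, cut_one (by simpa using (mem_ball_zero_iff.1 hy).le)]; simp
  · unfold K2 Nw
    have hx' : 0 < ‖x‖ := norm_pos_iff.2 hx
    refine ContDiffAt.mul ?_ (contDiffAt_const.sub cut_tst.sm.contDiffAt)
    exact ContDiffAt.rpow_const_of_ne (((contDiff_norm_sq ℝ).add contDiff_const).contDiffAt)
      (by positivity)

lemma lap_K2_zero (x : Euc n) (hx : 2 < ‖x‖) : lap K2 x = 0 := by
  have h : K2 =ᶠ[𝓝 x] Nw 0 := by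
    filter_upwards [(isOpen_lt continuous_const continuous_norm).mem_nhds hx] with y hy
    rw [K2, cut_zero (le_of_lt hy)]; simp
  rw [lap_congr h, lap_Nw (by positivity)]
  simp

lemma psi_tst : Tst (lap (K2 (n := n))) := by
  refine ⟨K2_sm.lap, HasCompactSupport.of_support_subset_isCompact
    (isCompact_closedBall (0 : Euc n) 2) fun x hx => ?_⟩
  by_contra h
  exact hx (lap_K2_zero x (by simpa using h))

lemma psi_zero (x : Euc n) (hx : 2 ≤ ‖x‖) : lap K2 x = 0 := by
  have h1 : IsClosed {x : Euc n | lap K2 x = 0} := isClosed_eq psi_tst.cont continuous_const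
  have hx0 : x ≠ 0 := by rintro rfl; simp at hx; linarith
  have h2 : Tendsto (fun m : ℕ => (1 + 1 / ((m:ℝ) + 1)) • x) atTop (𝓝 x) := by
    have := ((tendsto_one_div_add_atTop_nhds_zero_nat (𝕜 := ℝ)).const_add 1).smul_const x
    simpa using this
  refine h1.mem_of_tendsto h2 (Eventually.of_forall fun m => lap_K2_zero _ ?_)
  rw [norm_smul, Real.norm_of_nonneg (by positivity)]
  have : 0 < 1 / ((m:ℝ) + 1) := by positivity
  nlinarith

/-- The parametrix identity `Pk * Δφ = -cN φ - ΔK2 * φ`: the Newton kernel is `Pk + K2`, and the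
Laplacian may be moved onto the smooth part `K2`. -/
lemma parametrix (hn : 3 ≤ n) {φ : Euc n → ℝ} (hφ : Sm φ) (x : Euc n) :
    cv Pk (lap φ) x = - cN n * φ x - cv φ (lap K2) x := by
  have : NeZero n := ⟨by omega⟩
  obtain ⟨g, hg, hgf⟩ := exists_local hφ (‖x‖ + 3)
  have h1 : cv Pk (lap g) x = cv Pk (lap φ) x :=
    cv_local Pk_zero (R := ‖x‖ + 3) (fun y hy => lap_congr (eventuallyEq_of_ball hgf hy)) (by linarith)
  have h2 : cv (lap K2) g x = cv (lap K2) φ x := cv_local psi_zero hgf (by linarith)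
  rw [← h1, cv_comm φ, ← h2, ← hgf x (by linarith), ← newton hn hg x]
  have h3 : cv (lap K2) g x = cv K2 (lap g) x := by
    unfold cv
    rw [← ibp_lap K2_sm (hg.refl x).sm (Or.inr (hg.refl x).cs)]
    simp [lap_refl hg.sm]
  rw [h3]
  unfold cv
  rw [← integral_sub (cv_integrable Nw_locallyIntegrable hg.lap.cont hg.lap.cs x)
    (cv_integrable K2_sm.cont.locallyIntegrable hg.lap.cont hg.lap.cs x)]
  congr 1; funext y
  simp only [Pk, K2]; ring

end convolution

/-! ### Smooth solutions of the Poisson equation -/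

section potential
variable {n : ℕ}

lemma lintegral_kernel_le {a c : ℝ} (hc : 0 ≤ c) {K f : Euc n → ℝ}
    (hK : ∀ y, y ≠ 0 → |K y| ≤ c * ‖y‖ ^ (a - n)) [NeZero n] (x : Euc n) :
    ∫⁻ y, ‖K y * f (x - y)‖ₑ ≤ ENNReal.ofReal c * riesz a (fun y => ‖f y‖ₑ) x := by
  rw [riesz, ← lintegral_sub_left_eq_self (fun y => ENNReal.ofReal (‖x - y‖ ^ (a - n)) * ‖f y‖ₑ) x,
    ← lintegral_const_mul' _ _ ENNReal.ofReal_ne_top]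
  refine lintegral_mono_ae ?_
  filter_upwards [Measure.ae_ne volume (0 : Euc n)] with y hy
  rw [enorm_mul, sub_sub_cancel, ← mul_assoc, ← ENNReal.ofReal_mul hc]
  gcongr
  rw [Real.enorm_eq_ofReal_abs]
  exact ENNReal.ofReal_le_ofReal (hK y hy)

lemma Nw_abs_le (y : Euc n) : |Nw 0 y| ≤ 1 * ‖y‖ ^ ((2:ℝ) - n) := by
  rw [Nw_zero, one_mul, abs_of_nonneg (by positivity)]

lemma newton_bound [NeZero n] (f : Euc n → ℝ) (x : Euc n) :
    ‖cv (Nw 0) f x‖ₑ ≤ riesz 2 (fun y => ‖f y‖ₑ) x := by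
  have := lintegral_kernel_le (f := f) zero_le_one (fun y _ => Nw_abs_le y) x
  rw [ENNReal.ofReal_one, one_mul] at this
  exact (enorm_integral_le_lintegral_enorm _).trans this

lemma pd_Nw_le (hn : 3 ≤ n) {c : ℝ} (hc : 0 < c) (i : Fin n) {y : Euc n} (hy : y ≠ 0) :
    |pd i (Nw c) y| ≤ ((n:ℝ) - 2) * ‖y‖ ^ ((1:ℝ) - n) := by
  have hn' : (3:ℝ) ≤ n := by exact_mod_cast hn
  have hy' : 0 < ‖y‖ := norm_pos_iff.2 hy
  unfold Nw
  rw [pd_qd _ (by positivity)]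
  have h1 : (‖y‖ ^ 2 + c) ^ ((2 - (n:ℝ)) / 2 - 1) ≤ ‖y‖ ^ (-(n:ℝ)) := by
    calc (‖y‖ ^ 2 + c) ^ ((2 - (n:ℝ)) / 2 - 1) ≤ (‖y‖ ^ 2) ^ ((2 - (n:ℝ)) / 2 - 1) :=
          Real.rpow_le_rpow_of_nonpos (by positivity) (by linarith) (by linarith)
      _ = ‖y‖ ^ (-(n:ℝ)) := by
          rw [← Real.rpow_natCast, ← Real.rpow_mul hy'.le]; congr 1; push_cast; ring
  have h2 : |y i| ≤ ‖y‖ := by simpa using PiLp.norm_apply_le y i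
  rw [abs_mul, abs_mul, abs_of_nonneg (a := (‖y‖ ^ 2 + c) ^ ((2 - (n:ℝ)) / 2 - 1)) (by positivity),
    show |2 * ((2 - (n:ℝ)) / 2)| = (n:ℝ) - 2 by rw [mul_div_cancel₀ _ two_ne_zero, abs_of_nonpos] <;> linarith,
    show (1:ℝ) - n = 1 + (-(n:ℝ)) by ring, Real.rpow_add hy', Real.rpow_one, mul_assoc]
  have : (0:ℝ) ≤ (n:ℝ) - 2 := by linarith
  gcongr

/-- The gradient of a Newton potential is bounded by a Riesz potential of order one: put the derivative
on the regularized kernel, where `|∂ᵢN| ≤ (n - 2) ‖y‖^(1-n)` uniformly. -/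
lemma newton_grad_bound (hn : 3 ≤ n) {f : Euc n → ℝ} (hf : Tst f) (i : Fin n) (x : Euc n) :
    ‖cv (Nw 0) (pd i f) x‖ₑ ≤ ENNReal.ofReal ((n:ℝ) - 2) * riesz 1 (fun y => ‖f y‖ₑ) x := by
  have : NeZero n := ⟨by omega⟩
  have hn' : (3:ℝ) ≤ n := by exact_mod_cast hn
  have ht := Nw_tendsto hn (g := fun y => pd i f (x - y)) ((hf.pd i).refl x).cont ((hf.pd i).refl x).cs
    (tendsto_one_div_add_atTop_nhds_zero_nat (𝕜 := ℝ))
  refine le_of_tendsto ht.enorm (Eventually.of_forall fun m => ?_)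
  have he : (0:ℝ) < (1 / ((m:ℝ) + 1)) ^ 2 := by positivity
  have h1 : ∫ y, Nw ((1 / ((m:ℝ) + 1)) ^ 2) y * pd i f (x - y) =
      ∫ y, pd i (Nw ((1 / ((m:ℝ) + 1)) ^ 2)) y * f (x - y) := by
    have := ibp (Nw_sm he) (hf.refl x).sm (Or.inr (hf.refl x).cs) i
    rw [pd_refl hf.sm] at this
    simpa [integral_neg] using this
  rw [h1]
  exact (enorm_integral_le_lintegral_enorm _).trans
    (lintegral_kernel_le (by linarith) (fun y hy => pd_Nw_le hn he i hy) x)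

/-- Eventual coincidence on every ball. -/
def LocEq (g : ℕ → Euc n → ℝ) (f : Euc n → ℝ) : Prop :=
  ∀ R : ℝ, ∀ᶠ m in atTop, ∀ x, ‖x‖ < R → g m x = f x

lemma LocEq.pd {g : ℕ → Euc n → ℝ} {f : Euc n → ℝ} (h : LocEq g f) (i : Fin n) :
    LocEq (fun m => pd i (g m)) (pd i f) := fun R => by
  filter_upwards [h R] with m hm x hx
  exact (pd_congr (eventuallyEq_of_ball hm hx) i).eq_of_nhds

/-- The parametrix representation of a Newton potential `u` with density `g` (for `ψ = Δ K2`). -/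
def Wp (g u ψ : Euc n → ℝ) (x : Euc n) : ℝ := cv Pk g x - (cN n)⁻¹ * cv u ψ x

lemma Wp_sm [NeZero n] {g u ψ : Euc n → ℝ} (hg : Sm g) (hu : LocallyIntegrable u) (hψ : Tst ψ) :
    Sm (Wp g u ψ) := (cv_sm' Pk_li Pk_zero hg).sub (contDiff_const.mul (cv_sm hu hψ))

lemma pd_Wp [NeZero n] {g u ψ : Euc n → ℝ} (hg : Sm g) (hu : LocallyIntegrable u) (hψ : Tst ψ)
    (i : Fin n) : pd i (Wp g u ψ) = Wp (pd i g) u (pd i ψ) := by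
  have h1 : Sm (cv Pk g) := cv_sm' Pk_li Pk_zero hg
  have h2 : Sm (cv u ψ) := cv_sm hu hψ
  have h3 : Sm (fun x => (cN n)⁻¹ * cv u ψ x) := contDiff_const.mul h2
  have := pd_sub h1.diff h3.diff i
  rw [pd_cv' Pk_li Pk_zero hg, pd_const_mul h2.diff, pd_cv hu hψ] at this
  exact this

/-- Passage to the limit in the parametrix representation; the first convolution only sees a bounded
region, the second converges by domination. -/
lemma Wp_tendsto [NeZero n] {g : ℕ → Euc n → ℝ} {f : Euc n → ℝ} (h : LocEq g f)
    {u : ℕ → Euc n → ℝ} {U F : Euc n → ℝ} (hu : ∀ m, Continuous (u m))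
    (hF : LocallyIntegrable F) (huF : ∀ m, ∀ᵐ x, |u m x| ≤ F x)
    (hU : ∀ᵐ x, Tendsto (fun m => u m x) atTop (𝓝 (U x))) {ψ : Euc n → ℝ} (hψ : Tst ψ)
    (x : Euc n) : Tendsto (fun m => Wp (g m) (u m) ψ x) atTop (𝓝 (Wp f U ψ x)) := by
  refine Tendsto.sub (tendsto_const_nhds.congr' ?_) (Tendsto.const_mul _ ?_)
  · filter_upwards [h (‖x‖ + 3)] with m hm
    exact (cv_local Pk_zero hm (by linarith)).symm
  · unfold cv
    refine tendsto_integral_of_dominated_convergence (fun y => F y * |ψ (x - y)|) (fun m => ?_) ?_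
      (fun m => ?_) ?_
    · exact ((hu m).mul (hψ.refl x).cont).aestronglyMeasurable
    · exact cv_integrable hF (f := fun y => |ψ y|) hψ.cont.abs
        (hψ.cs.comp_left (g := fun s : ℝ => |s|) (by simp)) x
    · filter_upwards [huF m] with y hy
      rw [norm_mul]
      exact mul_le_mul_of_nonneg_right hy (abs_nonneg _)
    · filter_upwards [hU] with y hy using hy.mul_const _

/-- Smooth solvability of `Δv = f` with pointwise potential bounds, as soon as the potential of
`|f|` is finite almost everywhere and locally integrable. -/
lemma solve (hn : 3 ≤ n) {f : Euc n → ℝ} (hf : Sm f)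
    (hfin : ∀ᵐ x, riesz 2 (fun y => ‖f y‖ₑ) x < ⊤)
    (hF : LocallyIntegrable fun x => (riesz 2 (fun y => ‖f y‖ₑ) x).toReal) :
    ∃ v : Euc n → ℝ, Sm v ∧ (∀ x, lap v x = f x) ∧
      (∀ x, ‖v x‖ₑ ≤ ENNReal.ofReal (cN n)⁻¹ * riesz 2 (fun y => ‖f y‖ₑ) x) ∧
      (∀ i x, ‖pd i v x‖ₑ ≤ ENNReal.ofReal ((cN n)⁻¹ * (n - 2)) * riesz 1 (fun y => ‖f y‖ₑ) x) := by
  have : NeZero n := ⟨by omega⟩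
  have hn' : (3:ℝ) ≤ n := by exact_mod_cast hn
  have hc := cN_pos hn
  let g : ℕ → Euc n → ℝ := fun m x => cut (((m:ℝ) + 1)⁻¹ • x) * f x
  have hg : ∀ m, Tst (g m) := fun m => by
    have := cut_tst (n := n).comp_smul (c := ((m:ℝ) + 1)⁻¹) (by positivity)
    exact ⟨this.sm.mul hf, this.cs.mul_right⟩
  have hgf : ∀ m x, |g m x| ≤ |f x| := fun m x => by
    simp only [g]
    rw [abs_mul, abs_of_nonneg (cut_nonneg _)]
    exact mul_le_of_le_one_left (abs_nonneg _) (cut_le_one _)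
  have hgf' : ∀ m x, ‖g m x‖ₑ ≤ ‖f x‖ₑ := fun m x => by
    rw [Real.enorm_eq_ofReal_abs, Real.enorm_eq_ofReal_abs]
    exact ENNReal.ofReal_le_ofReal (hgf m x)
  have hriesz : ∀ a m x, riesz a (fun y => ‖g m y‖ₑ) x ≤ riesz a (fun y => ‖f y‖ₑ) x := by
    intro a m x
    unfold riesz
    exact lintegral_mono fun y => by gcongr; exact hgf' m y
  have hloc : LocEq g f := by
    intro R
    filter_upwards [eventually_ge_atTop ⌈R⌉₊] with m hm x hx
    have : cut (((m:ℝ) + 1)⁻¹ • x) = 1 := cut_one (by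
      rw [norm_smul, norm_inv, Real.norm_of_nonneg (by positivity), inv_mul_le_one₀ (by positivity)]
      have := Nat.ceil_le.1 hm
      linarith)
    simp [g, this]
  let u : ℕ → Euc n → ℝ := fun m => cv (Nw 0) (g m)
  have hu : ∀ m, Sm (u m) := fun m => cv_sm Nw_locallyIntegrable (hg m)
  let U := cv (Nw 0) f
  have huF : ∀ m, ∀ᵐ x, |u m x| ≤ (riesz 2 (fun y => ‖f y‖ₑ) x).toReal := by
    intro m
    filter_upwards [hfin] with x hx
    have := (newton_bound (g m) x).trans (hriesz 2 m x)
    rw [Real.enorm_eq_ofReal_abs] at this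
    exact (ENNReal.ofReal_le_iff_le_toReal hx.ne).1 this
  have hU : ∀ᵐ x, Tendsto (fun m => u m x) atTop (𝓝 (U x)) := by
    filter_upwards [hfin] with x hx
    refine tendsto_integral_of_dominated_convergence (fun y => ‖Nw 0 y * f (x - y)‖) (fun m => ?_) ?_
      (fun m => ae_of_all _ fun y => ?_) (ae_of_all _ fun y => ?_)
    · exact (Nw_measurable 0).aestronglyMeasurable.mul ((hg m).refl x).cont.aestronglyMeasurable
    · refine Integrable.norm ⟨(Nw_measurable 0).aestronglyMeasurable.mul
        (hf.cont.comp (continuous_const.sub continuous_id)).aestronglyMeasurable, ?_⟩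
      rw [hasFiniteIntegral_iff_enorm]
      refine lt_of_le_of_lt (lintegral_kernel_le zero_le_one (fun y _ => Nw_abs_le y) x) ?_
      rw [ENNReal.ofReal_one, one_mul]; exact hx
    · exact (norm_mul _ _).trans_le ((mul_le_mul_of_nonneg_left (hgf m (x - y))
        (norm_nonneg (Nw 0 y))).trans_eq (norm_mul _ _).symm)
    · refine Tendsto.const_mul _ (tendsto_const_nhds.congr' ?_)
      filter_upwards [hloc (‖x - y‖ + 1)] with m hm
      exact (hm _ (by linarith)).symm
  have hUli : LocallyIntegrable U := by
    refine hF.mono (aestronglyMeasurable_of_tendsto_ae _ (fun m => (hu m).cont.aestronglyMeasurable) hU) ?_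
    filter_upwards [hU, ae_all_iff.2 huF] with x hx hx2
    rw [Real.norm_of_nonneg ENNReal.toReal_nonneg]
    exact le_of_tendsto hx.norm (Eventually.of_forall hx2)
  -- The parametrix identity for `u m`, in which `Δ(u m)` is a multiple of `g m`. The right-hand side
  -- makes sense for the merely locally integrable limit `U`, and is then smooth.
  have hrep : ∀ m, u m = Wp (g m) (u m) (lap K2) := by
    intro m; funext x
    have h1 := parametrix hn (hu m) x
    have h2 : lap (u m) = fun x => - cN n * g m x := by
      funext x
      rw [lap_cv Nw_locallyIntegrable (hg m)]
      exact newton hn (hg m) x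
    have h3 : cv Pk (fun x => - cN n * g m x) x = - cN n * cv Pk (g m) x := by
      unfold cv
      rw [← integral_const_mul]; congr 1; funext y; ring
    rw [h2, h3] at h1
    rw [Wp]
    field_simp
    linarith
  let V := Wp f U (lap K2)
  have hV : Sm V := Wp_sm hf hUli psi_tst
  have hcont : ∀ m, Continuous (u m) := fun m => (hu m).cont
  have t0 : ∀ x, Tendsto (fun m => u m x) atTop (𝓝 (V x)) := by
    intro x
    have := Wp_tendsto hloc hcont hF huF hU psi_tst x
    exact this.congr fun m => by rw [← hrep m]
  have t1 : ∀ i x, Tendsto (fun m => pd i (u m) x) atTop (𝓝 (pd i V x)) := by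
    intro i x
    have := Wp_tendsto (hloc.pd i) hcont hF huF hU (psi_tst.pd i) x
    rw [← pd_Wp hf hUli psi_tst] at this
    refine this.congr fun m => ?_
    rw [← pd_Wp (hg m).sm (hcont m).locallyIntegrable psi_tst, ← hrep m]
  have t2 : ∀ i x, Tendsto (fun m => pd i (pd i (u m)) x) atTop (𝓝 (pd i (pd i V) x)) := by
    intro i x
    have := Wp_tendsto ((hloc.pd i).pd i) hcont hF huF hU ((psi_tst.pd i).pd i) x
    rw [← pd_Wp (hf.pd i) hUli (psi_tst.pd i), ← pd_Wp hf hUli psi_tst] at this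
    refine this.congr fun m => ?_
    rw [← pd_Wp ((hg m).pd i).sm (hcont m).locallyIntegrable (psi_tst.pd i),
      ← pd_Wp (hg m).sm (hcont m).locallyIntegrable psi_tst, ← hrep m]
  have hlapV : ∀ x, lap V x = - cN n * f x := by
    intro x
    have h1 : Tendsto (fun m => lap (u m) x) atTop (𝓝 (lap V x)) :=
      tendsto_finsetSum _ fun i _ => t2 i x
    refine tendsto_nhds_unique h1 (tendsto_const_nhds.congr' ?_)
    filter_upwards [hloc (‖x‖ + 1)] with m hm
    rw [lap_cv Nw_locallyIntegrable (hg m), ← hm x (by linarith)]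
    exact (newton hn (hg m) x).symm
  have b0 : ∀ x, ‖V x‖ₑ ≤ riesz 2 (fun y => ‖f y‖ₑ) x := fun x =>
    le_of_tendsto (t0 x).enorm (Eventually.of_forall fun m => (newton_bound (g m) x).trans (hriesz 2 m x))
  have b1 : ∀ i x, ‖pd i V x‖ₑ ≤ ENNReal.ofReal ((n:ℝ) - 2) * riesz 1 (fun y => ‖f y‖ₑ) x := fun i x => by
    refine le_of_tendsto (t1 i x).enorm (Eventually.of_forall fun m => ?_)
    simp only [u]
    rw [pd_cv Nw_locallyIntegrable (hg m)]
    refine (newton_grad_bound hn (hg m) i x).trans ?_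
    gcongr
    exact hriesz 1 m x
  have hci : (0:ℝ) ≤ (cN n)⁻¹ := by positivity
  have hnorm : ‖-(cN n)⁻¹‖ₑ = ENNReal.ofReal (cN n)⁻¹ := by
    rw [enorm_neg, Real.enorm_eq_ofReal hci]
  have hpdv : ∀ i, pd i (fun x => -(cN n)⁻¹ * V x) = fun x => -(cN n)⁻¹ * pd i V x :=
    fun i => pd_const_mul hV.diff _ i
  refine ⟨fun x => -(cN n)⁻¹ * V x, contDiff_const.mul hV, fun x => ?_, fun x => ?_, fun i x => ?_⟩
  · have : lap (fun x => -(cN n)⁻¹ * V x) x = -(cN n)⁻¹ * lap V x := by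
      simp only [lap, Finset.mul_sum]
      refine Finset.sum_congr rfl fun i _ => ?_
      rw [hpdv, pd_const_mul (hV.pd i).diff]
    rw [this, hlapV]
    field_simp
  · rw [enorm_mul, hnorm]
    gcongr
    exact b0 x
  · rw [hpdv, enorm_mul, hnorm, ENNReal.ofReal_mul hci, mul_assoc]
    gcongr
    exact b1 i x

end potential

/-! ### The weighted second-derivative estimate -/

section apriori
variable {n : ℕ}

/-- The `p`-th power of the (unweighted) `L^p` norm. -/
def Lint (p : ℝ) (F : Euc n → ℝ) : ℝ≥0∞ := ∫⁻ x, ENNReal.ofReal (|F x| ^ p)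

lemma Lint_mono {p : ℝ} (hp : 0 ≤ p) {F G : Euc n → ℝ} (h : ∀ x, |F x| ≤ |G x|) :
    Lint p F ≤ Lint p G :=
  lintegral_mono fun x => ENNReal.ofReal_le_ofReal (Real.rpow_le_rpow (abs_nonneg _) (h x) hp)

lemma Lint_const {p c : ℝ} (F : Euc n → ℝ) :
    Lint p (fun x => c * F x) = ENNReal.ofReal (|c| ^ p) * Lint p F := by
  unfold Lint
  rw [← lintegral_const_mul' _ _ ENNReal.ofReal_ne_top]
  congr 1; funext x
  rw [abs_mul, Real.mul_rpow (abs_nonneg _) (abs_nonneg _), ENNReal.ofReal_mul (by positivity)]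

lemma Lint_le_add {p : ℝ} (hp : 0 ≤ p) {F G H : Euc n → ℝ} (hG : Measurable G)
    (h : ∀ x, |F x| ≤ |G x| + |H x|) :
    Lint p F ≤ ENNReal.ofReal (2 ^ p) * (Lint p G + Lint p H) := by
  unfold Lint
  rw [← lintegral_add_left (hG.abs.pow_const p).ennreal_ofReal,
    ← lintegral_const_mul' _ _ ENNReal.ofReal_ne_top]
  refine lintegral_mono fun x => ?_
  simp only
  rw [← ENNReal.ofReal_add (by positivity) (by positivity), ← ENNReal.ofReal_mul (by positivity)]
  refine ENNReal.ofReal_le_ofReal ?_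
  have h1 : |F x| ≤ 2 * max |G x| |H x| := by
    have := le_max_left |G x| |H x|
    have := le_max_right |G x| |H x|
    linarith [h x]
  refine (Real.rpow_le_rpow (abs_nonneg _) h1 hp).trans ?_
  rw [Real.mul_rpow (by norm_num) (by positivity)]
  refine mul_le_mul_of_nonneg_left ?_ (by positivity)
  have g1 : 0 ≤ |G x| ^ p := by positivity
  have g2 : 0 ≤ |H x| ^ p := by positivity
  rcases max_choice |G x| |H x| with e | e <;> rw [e] <;> linarith

/-- Fatou's lemma for sequences that are pointwise eventually equal to their limit. -/
lemma Lint_fatou {p : ℝ} {F : Euc n → ℝ} {G : ℕ → Euc n → ℝ} (hG : ∀ m, Measurable (G m))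
    (h : ∀ x, ∀ᶠ m in atTop, G m x = F x) : Lint p F ≤ liminf (fun m => Lint p (G m)) atTop := by
  refine le_trans (le_of_eq ?_) (lintegral_liminf_le fun m => ((hG m).abs.pow_const p).ennreal_ofReal)
  unfold Lint
  congr 1; funext x
  refine (Tendsto.liminf_eq (tendsto_const_nhds.congr' ?_)).symm
  filter_upwards [h x] with m hm
  rw [hm]

/-- Dilated cutoff functions, equal to `1` on the ball of radius `m + 1`. -/
def cutR (m : ℕ) (x : Euc n) : ℝ := cut (((m:ℝ) + 1)⁻¹ • x)

lemma cutR_tst (m : ℕ) : Tst (cutR (n := n) m) := cut_tst.comp_smul (by positivity)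
lemma cutR_abs_le (m : ℕ) (x : Euc n) : |cutR m x| ≤ 1 := by
  rw [cutR, abs_of_nonneg (cut_nonneg _)]; exact cut_le_one _
lemma cutR_one {m : ℕ} {x : Euc n} (h : ‖x‖ ≤ (m:ℝ) + 1) : cutR m x = 1 := cut_one (by
  rw [norm_smul, norm_inv, Real.norm_of_nonneg (by positivity), inv_mul_le_one₀ (by positivity)]
  exact h)
lemma cutR_eventually (x : Euc n) : ∀ᶠ m : ℕ in atTop, cutR m x = 1 := by
  filter_upwards [eventually_ge_atTop ⌈‖x‖⌉₊] with m hm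
  have := Nat.ceil_le.1 hm
  exact cutR_one (by linarith)

lemma pd_cutR (m : ℕ) (i : Fin n) :
    pd i (cutR m) = fun x => ((m:ℝ) + 1)⁻¹ * pd i cut (((m:ℝ) + 1)⁻¹ • x) :=
  pd_comp_smul cut_tst.sm _ i

lemma pd_pd_cutR (m : ℕ) (i j : Fin n) :
    pd i (pd j (cutR m)) =
      fun x => (((m:ℝ) + 1)⁻¹) ^ 2 * pd i (pd j cut) (((m:ℝ) + 1)⁻¹ • x) := by
  have hs : Sm fun x : Euc n => pd j cut (((m:ℝ) + 1)⁻¹ • x) :=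
    ((cut_tst.pd j).comp_smul (by positivity)).sm
  rw [pd_cutR, pd_const_mul hs.diff, pd_comp_smul (cut_tst.pd j).sm]
  funext x; ring

lemma pd_cutR_inner {m : ℕ} {x : Euc n} (h : ‖x‖ < (m:ℝ) + 1) (i : Fin n) :
    pd i (cutR m) x = 0 ∧ ∀ j, pd j (pd i (cutR m)) x = 0 := by
  have h0 : cutR m =ᶠ[𝓝 x] fun _ => (1:ℝ) := by
    filter_upwards [(isOpen_lt continuous_norm continuous_const).mem_nhds h] with y hy
    exact cutR_one (le_of_lt hy)
  have h1 : pd i (cutR m) =ᶠ[𝓝 x] fun _ => (0:ℝ) :=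
    (pd_congr h0 i).trans (Eventually.of_forall fun y => by simp [pd])
  refine ⟨h1.eq_of_nhds, fun j => ?_⟩
  rw [(pd_congr h1 j).eq_of_nhds]; simp [pd]

/-- Dilates of a compactly supported profile: on its support `‖x‖ ≤ 2 (m + 1)`, so each factor
`(m + 1)⁻¹` is at most a multiple of `⟨x⟩⁻¹`. -/
lemma dilate_bound {η : Euc n → ℝ} (hη : Continuous η) (h2 : ∀ x, 2 < ‖x‖ → η x = 0) (k : ℕ) :
    ∃ A : ℝ, 0 ≤ A ∧ ∀ (m : ℕ) x, |(((m:ℝ) + 1)⁻¹) ^ k * η (((m:ℝ) + 1)⁻¹ • x)| ≤ A * ((jap x)⁻¹) ^ k := by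
  have hc : HasCompactSupport η := HasCompactSupport.of_support_subset_isCompact
    (isCompact_closedBall (0 : Euc n) 2) fun x hx => by
      by_contra h; exact hx (h2 x (by simpa using h))
  obtain ⟨M, hM⟩ := hc.exists_bound_of_continuous hη
  refine ⟨3 ^ k * |M|, by positivity, fun m x => ?_⟩
  have hj := jap_pos x
  set r : ℝ := (m:ℝ) + 1 with hr
  have hr1 : 1 ≤ r := by simp [hr]
  by_cases hx : 2 < ‖r⁻¹ • x‖
  · rw [h2 _ hx]; simp; positivity
  · rw [abs_mul, abs_of_nonneg (by positivity)]
    have h3 : jap x ≤ 3 * r := by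
      rw [norm_smul, norm_inv, Real.norm_of_nonneg (by linarith), not_lt, inv_mul_le_iff₀ (by linarith)] at hx
      linarith [jap_le x]
    have h4 : r⁻¹ ≤ 3 * (jap x)⁻¹ := by
      rw [← div_eq_mul_inv, le_div_iff₀ hj, inv_mul_le_iff₀ (by linarith)]; linarith
    have h5 : |η (r⁻¹ • x)| ≤ |M| := (hM _).trans (le_abs_self _)
    calc r⁻¹ ^ k * |η (r⁻¹ • x)| ≤ (3 * (jap x)⁻¹) ^ k * |M| := by gcongr
      _ = _ := by rw [mul_pow]; ring

lemma cut_out {x : Euc n} (hx : 2 < ‖x‖) : cut =ᶠ[𝓝 x] fun _ => (0:ℝ) := by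
  filter_upwards [(isOpen_lt continuous_const continuous_norm).mem_nhds hx] with y hy
  exact cut_zero (le_of_lt hy)

lemma pd_zero_of {f : Euc n → ℝ} {x : Euc n} (h : f =ᶠ[𝓝 x] fun _ => (0:ℝ)) (i : Fin n) :
    pd i f =ᶠ[𝓝 x] fun _ => (0:ℝ) :=
  (pd_congr h i).trans (Eventually.of_forall fun y => by simp [pd])

/-- Scale-invariant bounds for the derivatives of the cutoffs. -/
lemma cutR_bound : ∃ A : ℝ, 0 ≤ A ∧ (∀ (m : ℕ) (i : Fin n) x, |pd i (cutR m) x| ≤ A * (jap x)⁻¹) ∧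
    ∀ (m : ℕ) (i j : Fin n) x, |pd i (pd j (cutR m)) x| ≤ A * ((jap x)⁻¹) ^ 2 := by
  have h1 := fun i : Fin n => dilate_bound (cut_tst.pd i).cont
    (fun x hx => (pd_zero_of (cut_out hx) i).eq_of_nhds) 1
  have h2 := fun ij : Fin n × Fin n => dilate_bound ((cut_tst.pd ij.2).pd ij.1).cont
    (fun x hx => (pd_zero_of (pd_zero_of (cut_out hx) ij.2) ij.1).eq_of_nhds) 2
  choose A1 hA1 hb1 using h1
  choose A2 hA2 hb2 using h2
  have s1 : 0 ≤ ∑ i, A1 i := Finset.sum_nonneg fun i _ => hA1 i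
  have s2 : 0 ≤ ∑ ij, A2 ij := Finset.sum_nonneg fun i _ => hA2 i
  refine ⟨∑ i, A1 i + ∑ ij, A2 ij, by positivity, fun m i x => ?_, fun m i j x => ?_⟩
  · have hj := jap_pos x
    have := hb1 i m x
    rw [pow_one, pow_one] at this
    rw [pd_cutR]
    refine this.trans ?_
    have := Finset.single_le_sum (fun i _ => hA1 i) (Finset.mem_univ i)
    gcongr; linarith
  · have hj := jap_pos x
    rw [pd_pd_cutR]
    refine (hb2 (i, j) m x).trans ?_
    have := Finset.single_le_sum (fun i _ => hA2 i) (Finset.mem_univ (i, j))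
    gcongr; linarith

lemma jap_rpow_eq (β : ℝ) :
    (fun x : Euc n => jap x ^ β) = fun x => (‖x‖ ^ 2 + 1) ^ (β / 2) := by
  funext x
  rw [add_comm, ← jap_sq, ← Real.rpow_natCast, ← Real.rpow_mul (jap_pos x).le]
  congr 1; push_cast; ring

lemma jap_rpow_sm (β : ℝ) : Sm fun x : Euc n => jap x ^ β :=
  ContDiff.rpow_const_of_ne jap_sm fun x => (jap_pos x).ne'

/-- The symbol bounds for powers of the weight: each derivative gains a factor `⟨x⟩⁻¹`. -/
lemma jap_rpow_bound (β : ℝ) : ∃ B : ℝ, 0 ≤ B ∧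
    (∀ (i : Fin n) x, |pd i (fun x : Euc n => jap x ^ β) x| ≤ B * (jap x ^ β * (jap x)⁻¹)) ∧
    ∀ (i j : Fin n) x, |pd i (pd j (fun x : Euc n => jap x ^ β)) x| ≤ B * (jap x ^ β * ((jap x)⁻¹) ^ 2) := by
  have hq : ∀ (s : ℝ) (x : Euc n), (‖x‖ ^ 2 + 1) ^ s = jap x ^ (2 * s) := fun s x => by
    have := congrFun (jap_rpow_eq (n := n) (2 * s)) x
    rw [this]; congr 1; ring
  have hx : ∀ (x : Euc n) i, |x i| ≤ jap x := fun x i => by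
    have : |x i| ≤ ‖x‖ := by simpa using PiLp.norm_apply_le x i
    exact this.trans (norm_le_jap x)
  refine ⟨|β| + |β| * |β - 2|, by positivity, fun i x => ?_, fun i j x => ?_⟩
  · have hj := jap_pos x
    rw [jap_rpow_eq, pd_qd _ (by positivity), hq, show 2 * (β / 2 - 1) = β - 1 - 1 by ring,
      Real.rpow_sub_one hj.ne', Real.rpow_sub_one hj.ne', abs_mul, abs_mul,
      show 2 * (β / 2) = β by ring, abs_of_nonneg (a := jap x ^ β / jap x / jap x) (by positivity)]
    calc |β| * |x i| * (jap x ^ β / jap x / jap x) ≤ |β| * jap x * (jap x ^ β / jap x / jap x) := by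
          gcongr; exact hx x i
      _ = |β| * (jap x ^ β * (jap x)⁻¹) := by field_simp
      _ ≤ _ := by
          gcongr
          have : 0 ≤ |β| * |β - 2| := by positivity
          linarith
  · have hj := jap_pos x
    rw [jap_rpow_eq, pd_pd_qd _ (by positivity), hq, hq, show 2 * (β / 2 - 1) = β - 1 - 1 by ring,
      show 2 * (β / 2 - 2) = β - 1 - 1 - 1 - 1 by ring]
    simp only [Real.rpow_sub_one hj.ne']
    set J := jap x ^ β with hJ
    have hJ0 : 0 < J := by positivity
    refine (abs_add_le _ _).trans ?_
    have e1 : |2 * (β / 2) * (if j = i then 1 else 0) * (J / jap x / jap x)| ≤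
        |β| * (J * ((jap x)⁻¹) ^ 2) := by
      rw [show 2 * (β / 2) = β by ring, abs_mul, abs_mul,
        abs_of_nonneg (a := J / jap x / jap x) (by positivity)]
      have : |(if j = i then (1:ℝ) else 0)| ≤ 1 := by split_ifs <;> simp
      calc |β| * |(if j = i then (1:ℝ) else 0)| * (J / jap x / jap x) ≤ |β| * 1 * (J / jap x / jap x) := by
            gcongr
        _ = _ := by field_simp
    have e2 : |4 * (β / 2) * (β / 2 - 1) * (x j * x i) * (J / jap x / jap x / jap x / jap x)| ≤
        |β| * |β - 2| * (J * ((jap x)⁻¹) ^ 2) := by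
      rw [show 4 * (β / 2) * (β / 2 - 1) = β * (β - 2) by ring, abs_mul, abs_mul, abs_mul, abs_mul,
        abs_of_nonneg (a := J / jap x / jap x / jap x / jap x) (by positivity)]
      calc |β| * |β - 2| * (|x j| * |x i|) * (J / jap x / jap x / jap x / jap x)
          ≤ |β| * |β - 2| * (jap x * jap x) * (J / jap x / jap x / jap x / jap x) := by
            gcongr
            exacts [hx x j, hx x i]
        _ = _ := by field_simp
    linarith

/-- The weighted cutoffs `χ_R ⟨x⟩^β` obey symbol bounds uniformly in `R`. -/
lemma multiplier_bound (β : ℝ) : ∃ A : ℝ, 0 ≤ A ∧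
    (∀ (m : ℕ) (i : Fin n) x, |pd i (fun x => cutR m x * jap x ^ β) x| ≤ A * (jap x ^ β * (jap x)⁻¹)) ∧
    ∀ (m : ℕ) (i j : Fin n) x, |pd i (pd j (fun x => cutR m x * jap x ^ β)) x| ≤
      A * (jap x ^ β * ((jap x)⁻¹) ^ 2) := by
  obtain ⟨A, hA, hA1, hA2⟩ := cutR_bound (n := n)
  obtain ⟨B, hB, hB1, hB2⟩ := jap_rpow_bound (n := n) β
  refine ⟨A + B + 2 * (A * B), by positivity, fun m i x => ?_, fun m i j x => ?_⟩
  · have hj := jap_pos x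
    have hJ : 0 < jap x ^ β := by positivity
    rw [pd_mul (cutR_tst m).sm.diff (jap_rpow_sm β).diff]
    refine (abs_add_le _ _).trans ?_
    rw [abs_mul, abs_mul, abs_of_pos hJ]
    have e1 := mul_le_mul_of_nonneg_right (hA1 m i x) hJ.le
    have e2 := mul_le_mul (cutR_abs_le m x) (hB1 i x) (abs_nonneg _) zero_le_one
    have e3 : 0 ≤ A * B * (jap x ^ β * (jap x)⁻¹) := by positivity
    linarith
  · have hj := jap_pos x
    have hJ : 0 < jap x ^ β := by positivity
    rw [pd_pd_mul (cutR_tst m).sm (jap_rpow_sm β)]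
    refine (abs_add_le _ _).trans ((add_le_add (abs_add_le _ _) (abs_add_le _ _)).trans ?_)
    simp only [abs_mul, abs_of_pos hJ]
    have e1 := mul_le_mul_of_nonneg_right (hA2 m i j x) hJ.le
    have e2 := mul_le_mul (hA1 m j x) (hB1 i x) (abs_nonneg _) (by positivity)
    have e3 := mul_le_mul (hA1 m i x) (hB1 j x) (abs_nonneg _) (by positivity)
    have e4 := mul_le_mul (cutR_abs_le m x) (hB2 i j x) (abs_nonneg _) zero_le_one
    calc _ ≤ _ := add_le_add (add_le_add e1 e2) (add_le_add e3 e4)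
      _ = _ := by ring

/-- The density controlling weighted second derivatives. -/
def Zd (β : ℝ) (v : Euc n → ℝ) (x : Euc n) : ℝ :=
  jap x ^ β * |lap v x| + (jap x ^ β * (jap x)⁻¹ * ∑ i, |pd i v x| +
    jap x ^ β * ((jap x)⁻¹) ^ 2 * |v x|)

/-- The Calderón–Zygmund inequality `cz` in terms of `Lint`. -/
lemma cz_lint [NeZero n] {p : ℝ} (hp : 1 < p) : ∃ C : ℝ, 0 < C ∧ ∀ u : Euc n → ℝ, Tst u → ∀ i j,
    Lint p (pd i (pd j u)) ≤ ENNReal.ofReal C * Lint p (lap u) := by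
  obtain ⟨C, hC0, hC⟩ := cz (n := n) hp
  refine ⟨C, hC0, fun u hu i j => ?_⟩
  unfold Lint
  rw [← ofReal_integral_eq_lintegral_ofReal (((hu.pd j).pd i).pow_integrable (by linarith))
      (ae_of_all _ fun x => by positivity),
    ← ofReal_integral_eq_lintegral_ofReal (hu.lap.pow_integrable (by linarith))
      (ae_of_all _ fun x => by positivity), ← ENNReal.ofReal_mul hC0.le]
  exact ENNReal.ofReal_le_ofReal (hC u hu i j)

/-- The weighted second-derivative estimate, from the unweighted one applied to
`χ_R ⟨x⟩^β v`. -/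
lemma apriori [NeZero n] {p : ℝ} (hp : 1 < p) (β : ℝ) : ∃ C : ℝ, 0 < C ∧ ∀ v : Euc n → ℝ, Sm v → ∀ i j,
    Lint p (fun x => jap x ^ β * pd i (pd j v) x) ≤ ENNReal.ofReal C * Lint p (Zd β v) := by
  obtain ⟨K, hK0, hK⟩ := cz_lint (n := n) hp
  obtain ⟨A, hA, hA1, hA2⟩ := multiplier_bound (n := n) β
  have hp0 : 0 ≤ p := by linarith
  set A' : ℝ := 1 + (2 * A + n * A) with hA'
  have hA'0 : 0 < A' := by positivity
  refine ⟨2 ^ p * (K + 1) * A' ^ p, by positivity, fun v hv i j => ?_⟩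
  have key : ∀ m, Lint p (fun x => (cutR m x * jap x ^ β) * pd i (pd j v) x) ≤
      ENNReal.ofReal (2 ^ p * (K + 1) * A' ^ p) * Lint p (Zd β v) := by
    intro m
    set g : Euc n → ℝ := fun x => cutR m x * jap x ^ β with hg
    have hgt : Tst g := ⟨(cutR_tst m).sm.mul (jap_rpow_sm β), (cutR_tst m).cs.mul_right⟩
    have hgv : Tst fun x => g x * v x := ⟨hgt.sm.mul hv, hgt.cs.mul_right⟩
    have hg0 : ∀ x, |g x| ≤ jap x ^ β := fun x => by
      have hj := jap_pos x
      rw [hg]; simp only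
      rw [abs_mul, abs_of_pos (by positivity : 0 < jap x ^ β)]
      exact mul_le_of_le_one_left (by positivity) (cutR_abs_le m x)
    have Zlow : ∀ x, 0 ≤ jap x ^ β * |lap v x| ∧ 0 ≤ jap x ^ β * (jap x)⁻¹ * ∑ i, |pd i v x| ∧
        0 ≤ jap x ^ β * ((jap x)⁻¹) ^ 2 * |v x| := fun x => by
      have hj := jap_pos x
      refine ⟨by positivity, by positivity, by positivity⟩
    have h1 : ∀ x, |lap (fun x => g x * v x) x| ≤ |A' * Zd β v x| := by
      intro x
      have hj := jap_pos x
      obtain ⟨z1, z2, z3⟩ := Zlow x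
      rw [lap_mul hgt.sm hv]
      refine (abs_add_le _ _).trans ((add_le_add_left (abs_add_le _ _) _).trans ?_)
      have e1 : |lap g x * v x| ≤ n * A * (jap x ^ β * ((jap x)⁻¹) ^ 2 * |v x|) := by
        rw [abs_mul]
        have : |lap g x| ≤ n * (A * (jap x ^ β * ((jap x)⁻¹) ^ 2)) := by
          unfold lap
          refine (Finset.abs_sum_le_sum_abs _ _).trans ((Finset.sum_le_sum fun i _ => hA2 m i i x).trans ?_)
          simp
        exact (mul_le_mul_of_nonneg_right this (abs_nonneg _)).trans_eq (by ring)
      have e2 : |2 * ∑ i, pd i g x * pd i v x| ≤ 2 * A * (jap x ^ β * (jap x)⁻¹ * ∑ i, |pd i v x|) := by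
        rw [abs_mul, abs_two, mul_assoc]
        refine mul_le_mul_of_nonneg_left ?_ zero_le_two
        refine (Finset.abs_sum_le_sum_abs _ _).trans ?_
        rw [Finset.mul_sum, Finset.mul_sum]
        refine Finset.sum_le_sum fun i _ => ?_
        rw [abs_mul]
        exact (mul_le_mul_of_nonneg_right (hA1 m i x) (abs_nonneg _)).trans_eq (by ring)
      have e3 : |g x * lap v x| ≤ jap x ^ β * |lap v x| := by
        rw [abs_mul]; exact mul_le_mul_of_nonneg_right (hg0 x) (abs_nonneg _)
      have hn0 : (0:ℝ) ≤ n * A := by positivity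
      refine le_trans ?_ (le_abs_self _)
      rw [Zd, hA']
      nlinarith [mul_nonneg hA z1, mul_nonneg hA z2, mul_nonneg hA z3, mul_nonneg hn0 z1,
        mul_nonneg hn0 z2, mul_nonneg hn0 z3]
    have h2 : ∀ x, |g x * pd i (pd j v) x| ≤ |pd i (pd j fun x => g x * v x) x| + |A' * Zd β v x| := by
      intro x
      have hj := jap_pos x
      obtain ⟨z1, z2, z3⟩ := Zlow x
      rw [pd_pd_mul hgt.sm hv]
      simp only
      have e1 : |pd i (pd j g) x * v x| ≤ A * (jap x ^ β * ((jap x)⁻¹) ^ 2 * |v x|) := by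
        rw [abs_mul]
        exact (mul_le_mul_of_nonneg_right (hA2 m i j x) (abs_nonneg _)).trans_eq (by ring)
      have e2 : ∀ k l, |pd k g x * pd l v x| ≤ A * (jap x ^ β * (jap x)⁻¹ * ∑ i, |pd i v x|) := by
        intro k l
        rw [abs_mul]
        have := Finset.single_le_sum (f := fun i => |pd i v x|) (fun i _ => abs_nonneg _)
          (Finset.mem_univ l)
        exact (mul_le_mul (hA1 m k x) this (abs_nonneg _) (by positivity)).trans_eq (by ring)
      have e4 : g x * pd i (pd j v) x = (pd i (pd j g) x * v x + pd j g x * pd i v x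
          + (pd i g x * pd j v x + g x * pd i (pd j v) x)) +
          -(pd i (pd j g) x * v x) + -(pd j g x * pd i v x) + -(pd i g x * pd j v x) := by ring
      rw [e4]
      have t := abs_add_le ((pd i (pd j g) x * v x + pd j g x * pd i v x
          + (pd i g x * pd j v x + g x * pd i (pd j v) x)) +
          -(pd i (pd j g) x * v x) + -(pd j g x * pd i v x)) (-(pd i g x * pd j v x))
      have t2 := abs_add_le ((pd i (pd j g) x * v x + pd j g x * pd i v x
          + (pd i g x * pd j v x + g x * pd i (pd j v) x)) +
          -(pd i (pd j g) x * v x)) (-(pd j g x * pd i v x))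
      have t3 := abs_add_le (pd i (pd j g) x * v x + pd j g x * pd i v x
          + (pd i g x * pd j v x + g x * pd i (pd j v) x)) (-(pd i (pd j g) x * v x))
      rw [abs_neg] at t t2 t3
      rw [← e4] at *
      have hn0 : (1:ℝ) ≤ n := by exact_mod_cast NeZero.one_le
      have hnA : A ≤ n * A := le_mul_of_one_le_left hA hn0
      have e5 := le_abs_self (A' * Zd β v x)
      have e6 : A * (jap x ^ β * ((jap x)⁻¹) ^ 2 * |v x|) +
          2 * (A * (jap x ^ β * (jap x)⁻¹ * ∑ i, |pd i v x|)) ≤ A' * Zd β v x := by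
        rw [Zd, hA']
        have hnA0 : (0:ℝ) ≤ n * A := by positivity
        nlinarith [mul_nonneg hA z1, mul_nonneg hA z2, mul_nonneg hA z3, mul_nonneg hnA0 z1,
          mul_nonneg hnA0 z2, mul_nonneg hnA0 z3, mul_le_mul_of_nonneg_right hnA z3]
      have := e2 i j
      have := e2 j i
      linarith
    have hAZ : Lint p (fun x => A' * Zd β v x) = ENNReal.ofReal (A' ^ p) * Lint p (Zd β v) := by
      rw [Lint_const, abs_of_pos hA'0]
    calc Lint p (fun x => g x * pd i (pd j v) x)
        ≤ ENNReal.ofReal (2 ^ p) * (Lint p (pd i (pd j fun x => g x * v x)) +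
            Lint p (fun x => A' * Zd β v x)) :=
          Lint_le_add hp0 ((hgv.pd j).pd i).cont.measurable h2
      _ ≤ ENNReal.ofReal (2 ^ p) * (ENNReal.ofReal K * Lint p (fun x => A' * Zd β v x) +
            Lint p (fun x => A' * Zd β v x)) := by
          gcongr
          refine (hK _ hgv i j).trans ?_
          gcongr
          exact Lint_mono hp0 h1
      _ = _ := by
          rw [hAZ, ENNReal.ofReal_mul (by positivity), ENNReal.ofReal_mul (by positivity),
            ENNReal.ofReal_add hK0.le zero_le_one, ENNReal.ofReal_one]
          ring
  refine (Lint_fatou (G := fun m x => (cutR m x * jap x ^ β) * pd i (pd j v) x) (fun m => ?_)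
    (fun x => ?_)).trans ?_
  · exact (((cutR_tst m).cont.mul (jap_rpow_sm β).cont).mul ((hv.pd j).pd i).cont).measurable
  · filter_upwards [cutR_eventually x] with m hm
    rw [hm, one_mul]
  · refine (liminf_le_liminf (Eventually.of_forall key)).trans ?_
    simp

end apriori

/-! ### Integrability of potentials and control of the lower-order density -/

section assembly
variable {n : ℕ}

lemma Lint_eq {p : ℝ} (hp : 0 ≤ p) (F : Euc n → ℝ) : Lint p F = ∫⁻ x, ‖F x‖ₑ ^ p := by
  unfold Lint
  congr 1; funext x
  rw [Real.enorm_eq_ofReal_abs, ENNReal.ofReal_rpow_of_nonneg (abs_nonneg _) hp]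

lemma Lint_sum {ι : Type*} {p : ℝ} (hp : 1 ≤ p) (s : Finset ι) {F : Euc n → ℝ}
    {G : ι → Euc n → ℝ} (hG : ∀ i, Measurable (G i)) (h : ∀ x, |F x| ≤ ∑ i ∈ s, |G i x|) :
    Lint p F ≤ ENNReal.ofReal ((s.card : ℝ) ^ (p - 1)) * ∑ i ∈ s, Lint p (G i) := by
  unfold Lint
  rw [← lintegral_finsetSum _ fun i _ => ((hG i).abs.pow_const p).ennreal_ofReal,
    ← lintegral_const_mul' _ _ ENNReal.ofReal_ne_top]
  refine lintegral_mono fun x => ?_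
  simp only
  rw [← ENNReal.ofReal_sum_of_nonneg fun i _ => by positivity, ← ENNReal.ofReal_mul (by positivity)]
  refine ENNReal.ofReal_le_ofReal ((Real.rpow_le_rpow (abs_nonneg _) (h x) (by linarith)).trans ?_)
  exact Real.rpow_sum_le_const_mul_sum_rpow s _ hp

/-- The bound `riesz_Lp`, for functions dominated pointwise by a Riesz potential. -/
lemma riesz_Lint [NeZero n] {p δ a : ℝ} (hp : 1 < p) (hδ : 2 - n < δ) (hδ0 : δ < 0)
    (ha : 0 < a) (ha2 : a ≤ 2) : ∃ C : ℝ≥0∞, C ≠ ⊤ ∧ ∀ (f F : Euc n → ℝ) (c : ℝ), Continuous f →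
      (∀ x, ‖F x‖ₑ ≤ ENNReal.ofReal c * riesz a (fun y => ‖f y‖ₑ) x) →
      Lint p (fun x => jap x ^ (2 - δ - n / p - a) * F x) ≤
        ENNReal.ofReal c ^ p * C * Lint p (fun x => jap x ^ (2 - δ - n / p) * f x) := by
  obtain ⟨C, hC, h⟩ := riesz_Lp (n := n) hp hδ hδ0 ha ha2
  refine ⟨C, hC, fun f F c hf hF => ?_⟩
  have hp0 : 0 ≤ p := by linarith
  have e : ∀ (s : ℝ) (x : Euc n), ‖jap x ^ s‖ₑ = ENNReal.ofReal (jap x ^ s) := fun s x =>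
    Real.enorm_of_nonneg (Real.rpow_nonneg (jap_pos x).le _)
  rw [Lint_eq hp0, Lint_eq hp0]
  simp only [enorm_mul, e]
  calc _ ≤ ∫⁻ x, ENNReal.ofReal c ^ p * (ENNReal.ofReal (jap x ^ (2 - δ - n / p - a)) *
        riesz a (fun y => ‖f y‖ₑ) x) ^ p := by
        refine lintegral_mono fun x => ?_
        simp only
        rw [← ENNReal.mul_rpow_of_nonneg _ _ hp0]
        refine ENNReal.rpow_le_rpow ?_ hp0
        rw [mul_left_comm]
        exact mul_le_mul_right (hF x) _
    _ = ENNReal.ofReal c ^ p * ∫⁻ x, (ENNReal.ofReal (jap x ^ (2 - δ - n / p - a)) *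
        riesz a (fun y => ‖f y‖ₑ) x) ^ p :=
        lintegral_const_mul' _ _ (ENNReal.rpow_ne_top_of_nonneg hp0 ENNReal.ofReal_ne_top)
    _ ≤ _ := by
        rw [mul_assoc]
        exact mul_le_mul_right (h _ hf.measurable.enorm) _

lemma le_one_add_rpow {p : ℝ} (hp : 1 ≤ p) (t : ℝ≥0∞) : t ≤ 1 + t ^ p := by
  rcases le_total t 1 with h | h
  · exact h.trans le_self_add
  · exact (ENNReal.le_rpow_self_of_one_le h hp).trans le_add_self

/-- The Riesz potential of order two of a function in the weighted `L^p` space is finite almost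
everywhere and locally integrable. -/
lemma riesz_locInt [NeZero n] {p δ : ℝ} (hp : 1 < p) (hδ : 2 - n < δ) (hδ0 : δ < 0)
    {f : Euc n → ℝ} (hf : Continuous f) (hN : Lint p (fun x => jap x ^ (2 - δ - n / p) * f x) < ⊤) :
    (∀ᵐ x, riesz 2 (fun y => ‖f y‖ₑ) x < ⊤) ∧
      LocallyIntegrable fun x => (riesz 2 (fun y => ‖f y‖ₑ) x).toReal := by
  have hp0 : 0 < p := by linarith
  obtain ⟨C, hC, h⟩ := riesz_Lp (n := n) hp hδ hδ0 (a := 2) (by norm_num) le_rfl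
  have h1 := h _ hf.measurable.enorm
  set s : ℝ := 2 - δ - n / p - 2
  set U : Euc n → ℝ≥0∞ := riesz 2 (fun y => ‖f y‖ₑ)
  have hU : Measurable U := riesz_measurable _ hf.measurable.enorm
  have hjm : ∀ t : ℝ, Measurable fun x : Euc n => ENNReal.ofReal (jap x ^ t) := fun t =>
    (jap_rpow_sm t).cont.measurable.ennreal_ofReal
  have e : ∀ (s : ℝ) (x : Euc n), ‖jap x ^ s‖ₑ = ENNReal.ofReal (jap x ^ s) := fun s x =>
    Real.enorm_of_nonneg (Real.rpow_nonneg (jap_pos x).le _)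
  have h2 : ∫⁻ x, (ENNReal.ofReal (jap x ^ s) * U x) ^ p < ⊤ := by
    refine h1.trans_lt (ENNReal.mul_lt_top hC.lt_top ?_)
    rw [Lint_eq hp0.le] at hN
    simpa only [enorm_mul, e] using hN
  have hUe : ∀ x, U x = ENNReal.ofReal (jap x ^ (-s)) * (ENNReal.ofReal (jap x ^ s) * U x) := by
    intro x
    rw [← mul_assoc, ← ENNReal.ofReal_mul (Real.rpow_nonneg (jap_pos x).le _),
      ← Real.rpow_add (jap_pos x)]
    simp
  refine ⟨?_, ?_⟩
  · have := ae_lt_top (((hjm s).mul hU).pow_const p) h2.ne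
    filter_upwards [this] with x hx
    have hx' := (ENNReal.rpow_lt_top_iff_of_pos hp0).1 hx
    rw [hUe x]
    exact ENNReal.mul_lt_top ENNReal.ofReal_lt_top hx'
  · intro x0
    refine ⟨Metric.closedBall x0 1, Metric.closedBall_mem_nhds _ one_pos, ?_⟩
    have hK := isCompact_closedBall x0 (1:ℝ)
    obtain ⟨M, hM⟩ := hK.exists_bound_of_continuousOn (jap_rpow_sm (n := n) (-s)).cont.continuousOn
    refine ⟨hU.ennreal_toReal.aestronglyMeasurable, ?_⟩
    rw [hasFiniteIntegral_iff_enorm]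
    calc ∫⁻ x in Metric.closedBall x0 1, ‖(U x).toReal‖ₑ
        ≤ ∫⁻ x in Metric.closedBall x0 1, ENNReal.ofReal M *
            (1 + (ENNReal.ofReal (jap x ^ s) * U x) ^ p) := by
          refine setLIntegral_mono' measurableSet_closedBall fun x hx => ?_
          refine (le_trans ?_ (hUe x).le).trans ?_
          · rw [Real.enorm_of_nonneg ENNReal.toReal_nonneg]
            exact ENNReal.ofReal_toReal_le
          · exact mul_le_mul' (ENNReal.ofReal_le_ofReal ((le_abs_self _).trans (hM x hx)))
              (le_one_add_rpow hp.le _)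
      _ < ⊤ := by
          rw [lintegral_const_mul' _ _ ENNReal.ofReal_ne_top, lintegral_add_left measurable_const]
          refine ENNReal.mul_lt_top ENNReal.ofReal_lt_top (ENNReal.add_lt_top.2 ⟨?_, ?_⟩)
          · simpa using hK.measure_lt_top
          · exact (setLIntegral_le_lintegral _ _).trans_lt h2

lemma jap_w1 (β : ℝ) (x : Euc n) : jap x ^ β * (jap x)⁻¹ = jap x ^ (β - 1) := by
  rw [Real.rpow_sub_one (jap_pos x).ne', div_eq_mul_inv]
lemma jap_w2 (β : ℝ) (x : Euc n) : jap x ^ β * ((jap x)⁻¹) ^ 2 = jap x ^ (β - 2) := by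
  rw [show β - 2 = β - 1 - 1 by ring, ← jap_w1, ← jap_w1]; ring

lemma jap_rpow_meas (β : ℝ) {g : Euc n → ℝ} (hg : Continuous g) :
    Measurable fun x => jap x ^ β * g x :=
  ((jap_rpow_sm β).cont.mul hg).measurable

lemma Zd_cont (β : ℝ) {v : Euc n → ℝ} (hv : Sm v) : Continuous (Zd β v) := by
  have h1 := (jap_rpow_sm (n := n) β).cont
  have h2 : Continuous fun x : Euc n => (jap x)⁻¹ := jap_cont.inv₀ fun x => (jap_pos x).ne'
  have h3 : ∀ i, Continuous (pd i v) := fun i => (hv.pd i).cont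
  have h4 := hv.cont
  have h5 := hv.lap.cont
  unfold Zd
  fun_prop

/-- The density `Zd` splits into its three weighted norms. -/
lemma Zd_Lint {p : ℝ} (hp : 1 ≤ p) (β : ℝ) : ∃ C : ℝ≥0∞, C ≠ ⊤ ∧ ∀ v : Euc n → ℝ, Sm v →
    Lint p (Zd β v) ≤ C * (Lint p (fun x => jap x ^ β * lap v x) +
      (∑ i, Lint p (fun x => jap x ^ (β - 1) * pd i v x) +
        Lint p (fun x => jap x ^ (β - 2) * v x))) := by
  let G : (v : Euc n → ℝ) → Option (Option (Fin n)) → Euc n → ℝ := fun v o x => match o with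
    | none => jap x ^ β * lap v x
    | some none => jap x ^ (β - 2) * v x
    | some (some i) => jap x ^ (β - 1) * pd i v x
  refine ⟨ENNReal.ofReal (((Finset.univ : Finset (Option (Option (Fin n)))).card : ℝ) ^ (p - 1)),
    ENNReal.ofReal_ne_top, fun v hv => (Lint_sum hp Finset.univ (G := G v) ?_ ?_).trans
    (le_of_eq ?_)⟩
  · rintro (_ | _ | i)
    · exact jap_rpow_meas _ hv.lap.cont
    · exact jap_rpow_meas _ hv.cont
    · exact jap_rpow_meas _ (hv.pd i).cont
  · intro x
    have hb : ∀ t : ℝ, 0 ≤ jap x ^ t := fun t => Real.rpow_nonneg (jap_pos x).le _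
    simp only [Fintype.sum_option, G, Zd, jap_w1, jap_w2, abs_mul, abs_of_nonneg (hb _)]
    rw [abs_of_nonneg (by have := hb β; have := hb (β - 1); have := hb (β - 2); positivity),
      Finset.mul_sum]
    linarith
  · congr 1
    simp only [Fintype.sum_option, G]
    ring

end assembly

/-! ### Existence, uniqueness and the isomorphism theorem -/

section final
variable {n : ℕ}

/-- The `p`-th power of the order-`j` term of the norm `W^{2,p}_δ`. -/
def Sterm (p δ : ℝ) (j : ℕ) (u : Euc n → ℝ) : ℝ≥0∞ :=
  Lint p (fun x => jap x ^ (-δ - (n : ℝ) / p + (j : ℝ)) * ‖iteratedFDeriv ℝ j u x‖)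

lemma SobW_eq (k : ℕ) (p δ : ℝ) (u : Euc n → ℝ) :
    SobW k p δ u = ∑ j ∈ Finset.range (k + 1), Sterm p δ j u ^ (1 / p) := by
  unfold SobW Sterm Lint
  refine Finset.sum_congr rfl fun j _ => ?_
  congr 2; funext x
  rw [abs_of_nonneg (mul_nonneg (Real.rpow_nonneg (jap_pos x).le _) (norm_nonneg _))]

lemma LpW_eq (p δ : ℝ) (f : Euc n → ℝ) :
    LpW p (δ - 2) f = Lint p (fun x => jap x ^ (2 - δ - n / p) * f x) ^ (1 / p) := by
  unfold LpW Lint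
  congr 2; funext x
  rw [abs_mul, abs_of_nonneg (Real.rpow_nonneg (jap_pos x).le _), Real.norm_eq_abs,
    show -(δ - 2) - (n:ℝ) / p = 2 - δ - n / p by ring]

/-- Existence with estimates: `solve` gives the solution, `riesz_Lint` the terms of order zero and one,
`apriori` the term of order two. -/
lemma exists_sol (hn : 3 ≤ n) {p δ : ℝ} (hp : 1 < p) (hδ : 2 - n < δ) (hδ0 : δ < 0) :
    ∃ C : ℝ≥0∞, C ≠ ⊤ ∧ ∀ f : Euc n → ℝ, Sm f →
      Lint p (fun x => jap x ^ (2 - δ - n / p) * f x) < ⊤ →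
      ∃ v : Euc n → ℝ, Sm v ∧ (∀ x, lap v x = f x) ∧ ∀ j ∈ Finset.range 3,
        Sterm p δ j v ≤ C * Lint p (fun x => jap x ^ (2 - δ - n / p) * f x) := by
  have : NeZero n := ⟨by omega⟩
  have hp0 : 0 ≤ p := by linarith
  obtain ⟨C₂, hC₂, h₂⟩ := riesz_Lint (n := n) hp hδ hδ0 (a := 2) (by norm_num) le_rfl
  obtain ⟨C₁, hC₁, h₁⟩ := riesz_Lint (n := n) hp hδ hδ0 (a := 1) (by norm_num) (by norm_num)
  set β : ℝ := 2 - δ - n / p with hβ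
  obtain ⟨C₃, hC₃, h₃⟩ := Zd_Lint (n := n) hp.le β
  obtain ⟨A, hA, h₄⟩ := apriori (n := n) hp β
  set D₀ : ℝ≥0∞ := ENNReal.ofReal (cN n)⁻¹ ^ p * C₂
  set D₁ : ℝ≥0∞ := ENNReal.ofReal ((cN n)⁻¹ * (n - 2)) ^ p * C₁
  set D₂ : ℝ≥0∞ := ENNReal.ofReal A * (C₃ * (1 + (n * D₁ + D₀)))
  set k₁ : ℝ≥0∞ := ENNReal.ofReal (((Finset.univ : Finset (Fin n)).card : ℝ) ^ (p - 1))
  set k₂ : ℝ≥0∞ := ENNReal.ofReal (((Finset.univ : Finset (Fin n × Fin n)).card : ℝ) ^ (p - 1))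
  have hD₀ : D₀ ≠ ⊤ := ENNReal.mul_ne_top (ENNReal.rpow_ne_top_of_nonneg hp0 ENNReal.ofReal_ne_top) hC₂
  have hD₁ : D₁ ≠ ⊤ := ENNReal.mul_ne_top (ENNReal.rpow_ne_top_of_nonneg hp0 ENNReal.ofReal_ne_top) hC₁
  have hD₂ : D₂ ≠ ⊤ := by
    refine ENNReal.mul_ne_top ENNReal.ofReal_ne_top (ENNReal.mul_ne_top hC₃ ?_)
    refine ENNReal.add_ne_top.2 ⟨ENNReal.one_ne_top, ENNReal.add_ne_top.2 ⟨?_, hD₀⟩⟩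
    exact ENNReal.mul_ne_top (ENNReal.natCast_ne_top n) hD₁
  refine ⟨D₀ + k₁ * (n * D₁) + k₂ * ((n * n : ℕ) * D₂), ?_, fun f hf hN => ?_⟩
  · refine ENNReal.add_ne_top.2 ⟨ENNReal.add_ne_top.2 ⟨hD₀, ?_⟩, ?_⟩
    · exact ENNReal.mul_ne_top ENNReal.ofReal_ne_top
        (ENNReal.mul_ne_top (ENNReal.natCast_ne_top n) hD₁)
    · exact ENNReal.mul_ne_top ENNReal.ofReal_ne_top
        (ENNReal.mul_ne_top (ENNReal.natCast_ne_top _) hD₂)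
  obtain ⟨hfin, hF⟩ := riesz_locInt hp hδ hδ0 hf.cont hN
  obtain ⟨v, hv, hlap, hb0, hb1⟩ := solve hn hf hfin hF
  set N : ℝ≥0∞ := Lint p (fun x => jap x ^ β * f x)
  have e0 : Lint p (fun x => jap x ^ (β - 2) * v x) ≤ D₀ * N := h₂ f v _ hf.cont hb0
  have e1 : ∀ i, Lint p (fun x => jap x ^ (β - 1) * pd i v x) ≤ D₁ * N := fun i =>
    h₁ f (pd i v) _ hf.cont (hb1 i)
  have s1 : ∑ i, Lint p (fun x => jap x ^ (β - 1) * pd i v x) ≤ n * D₁ * N := by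
    refine (Finset.sum_le_sum fun i _ => e1 i).trans (le_of_eq ?_)
    simp [mul_assoc]
  have e2 : ∀ i j, Lint p (fun x => jap x ^ β * pd i (pd j v) x) ≤ D₂ * N := fun i j => by
    refine (h₄ v hv i j).trans ?_
    rw [show D₂ * N = ENNReal.ofReal A * (C₃ * (N + (n * D₁ * N + D₀ * N))) by
      simp only [D₂]; ring]
    refine mul_le_mul_right ((h₃ v hv).trans (mul_le_mul_right ?_ _)) _
    refine add_le_add (le_of_eq ?_) (add_le_add s1 e0)
    simp only [hlap, N]
  refine ⟨v, hv, hlap, fun j hj => ?_⟩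
  have hj3 : j = 0 ∨ j = 1 ∨ j = 2 := by have := Finset.mem_range.1 hj; omega
  rcases hj3 with rfl | rfl | rfl
  · refine (le_trans (Lint_mono hp0 fun x => ?_) e0).trans (mul_le_mul_left (le_self_add.trans le_self_add) _)
    rw [norm_iter0, show -δ - (n:ℝ) / p + ((0:ℕ):ℝ) = β - 2 by rw [hβ]; push_cast; ring]
    simp [abs_mul]
  · refine (le_trans (Lint_sum hp.le Finset.univ (G := fun i x => jap x ^ (β - 1) * pd i v x)
      (fun i => jap_rpow_meas _ (hv.pd i).cont) fun x => ?_) (mul_le_mul_right s1 k₁)).trans ?_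
    · rw [show -δ - (n:ℝ) / p + ((1:ℕ):ℝ) = β - 1 by rw [hβ]; push_cast; ring, abs_mul, abs_norm]
      simp only [abs_mul]
      rw [← Finset.mul_sum]
      exact mul_le_mul_of_nonneg_left (norm_iter1_le x) (abs_nonneg _)
    · rw [← mul_assoc k₁, ]
      exact mul_le_mul_left (le_add_self.trans le_self_add) _
  · refine (le_trans (Lint_sum hp.le Finset.univ
      (G := fun (q : Fin n × Fin n) x => jap x ^ β * pd q.1 (pd q.2 v) x)
      (fun q => jap_rpow_meas _ ((hv.pd q.2).pd q.1).cont) fun x => ?_)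
      (mul_le_mul_right (Finset.sum_le_sum fun q _ => e2 q.1 q.2) k₂)).trans ?_
    · rw [show -δ - (n:ℝ) / p + ((2:ℕ):ℝ) = β by rw [hβ]; push_cast; ring, abs_mul, abs_norm]
      simp only [abs_mul]
      rw [← Finset.mul_sum, Fintype.sum_prod_type]
      exact mul_le_mul_of_nonneg_left (norm_iter2_le hv x) (abs_nonneg _)
    · rw [Finset.sum_const, Finset.card_univ, Fintype.card_prod, Fintype.card_fin, nsmul_eq_mul,
        ← mul_assoc _ D₂ N, ← mul_assoc k₂]
      exact mul_le_mul_left le_add_self _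

lemma Sterm_lt_top {p δ : ℝ} (hp : 0 < p) {k : ℕ} {u : Euc n → ℝ} (h : SobW k p δ u < ⊤) {j : ℕ}
    (hj : j ∈ Finset.range (k + 1)) : Sterm p δ j u < ⊤ := by
  rw [SobW_eq] at h
  have := (ENNReal.sum_lt_top.1 h) j hj
  exact (ENNReal.rpow_lt_top_iff_of_pos (by positivity)).1 this

lemma Zd_lt_top {p δ : ℝ} (hp : 1 < p) {w : Euc n → ℝ} (hw : Sm w) (hl : ∀ x, lap w x = 0)
    (h0 : Lint p (fun x => jap x ^ ((2 - δ - n / p) - 2) * w x) < ⊤)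
    (h1 : ∀ i, Lint p (fun x => jap x ^ ((2 - δ - n / p) - 1) * pd i w x) < ⊤) :
    Lint p (Zd (2 - δ - n / p) w) < ⊤ := by
  obtain ⟨C, hC, h⟩ := Zd_Lint (n := n) hp.le (2 - δ - n / p)
  refine (h w hw).trans_lt (ENNReal.mul_lt_top hC.lt_top ?_)
  refine ENNReal.add_lt_top.2 ⟨?_, ENNReal.add_lt_top.2 ⟨ENNReal.sum_lt_top.2 fun i _ => h1 i, h0⟩⟩
  simp [hl, Lint, Real.zero_rpow (show p ≠ 0 by linarith)]

/-- Harmonic functions whose weighted value and gradient norms are finite vanish: the products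
`χ_m w` are recovered from `Δ(χ_m w)`, which tends to zero in the weighted `L^p` norm. -/
lemma harm_zero (hn : 3 ≤ n) {p δ : ℝ} (hp : 1 < p) (hδ : 2 - n < δ) (hδ0 : δ < 0)
    {w : Euc n → ℝ} (hw : Sm w) (hl : ∀ x, lap w x = 0)
    (hZ : Lint p (Zd (2 - δ - n / p) w) < ⊤) : w = 0 := by
  have : NeZero n := ⟨by omega⟩
  have hp0 : 0 < p := by linarith
  obtain ⟨C₂, hC₂, h₂⟩ := riesz_Lint (n := n) hp hδ hδ0 (a := 2) (by norm_num) le_rfl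
  set β : ℝ := 2 - δ - n / p with hβ
  obtain ⟨A, hA, hA1, hA2⟩ := cutR_bound (n := n)
  have hφ : ∀ m : ℕ, Tst (fun x => cutR m x * w x) := fun m =>
    ⟨(cutR_tst m).sm.mul hw, (cutR_tst m).cs.mul_right⟩
  have hlap : ∀ (m : ℕ) x, lap (fun x => cutR m x * w x) x =
      lap (cutR m) x * w x + 2 * ∑ i, pd i (cutR m) x * pd i w x := fun m x => by
    rw [lap_mul (cutR_tst m).sm hw, hl, mul_zero, add_zero]
  have hbd : ∀ (m : ℕ) x, |jap x ^ β * lap (fun x => cutR m x * w x) x| ≤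
      |((n + 2) * A) * Zd β w x| := by
    intro m x
    have b : 0 ≤ jap x ^ β := Real.rpow_nonneg (jap_pos x).le _
    have jp : 0 ≤ (jap x)⁻¹ := (inv_pos.2 (jap_pos x)).le
    have l1 : |lap (cutR m) x| ≤ n * (A * ((jap x)⁻¹) ^ 2) := by
      unfold lap
      refine (Finset.abs_sum_le_sum_abs _ _).trans ((Finset.sum_le_sum fun i _ => hA2 m i i x).trans ?_)
      simp
    have l2 : |∑ i, pd i (cutR m) x * pd i w x| ≤ A * (jap x)⁻¹ * ∑ i, |pd i w x| := by
      refine (Finset.abs_sum_le_sum_abs _ _).trans ?_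
      rw [Finset.mul_sum]
      refine Finset.sum_le_sum fun i _ => ?_
      rw [abs_mul]
      exact mul_le_mul_of_nonneg_right (hA1 m i x) (abs_nonneg _)
    have l3 : |lap (fun x => cutR m x * w x) x| ≤
        n * (A * ((jap x)⁻¹) ^ 2) * |w x| + 2 * (A * (jap x)⁻¹ * ∑ i, |pd i w x|) := by
      rw [hlap]
      refine (abs_add_le _ _).trans (add_le_add ?_ ?_)
      · rw [abs_mul]; exact mul_le_mul_of_nonneg_right l1 (abs_nonneg _)
      · rw [abs_mul, abs_of_pos (show (0:ℝ) < 2 by norm_num)]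
        exact mul_le_mul_of_nonneg_left l2 (by norm_num)
    have q0 : 0 ≤ jap x ^ β * (jap x)⁻¹ * ∑ i, |pd i w x| := by positivity
    have q1 : 0 ≤ jap x ^ β * ((jap x)⁻¹) ^ 2 * |w x| := by positivity
    rw [abs_mul, abs_of_nonneg b]
    refine (mul_le_mul_of_nonneg_left l3 b).trans (le_trans (b := n * A * (jap x ^ β *
      ((jap x)⁻¹) ^ 2 * |w x|) + 2 * A * (jap x ^ β * (jap x)⁻¹ * ∑ i, |pd i w x|)) (le_of_eq ?_)
      (le_trans ?_ (le_abs_self _)))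
    · ring
    · rw [Zd, hl, abs_zero, mul_zero, zero_add]
      have := mul_nonneg (mul_nonneg (Nat.cast_nonneg n) hA) q0
      have := mul_nonneg hA q1
      nlinarith
  have hfin : Lint p (fun x => ((n + 2) * A) * Zd β w x) ≠ ⊤ := by
    rw [Lint_const]; exact ENNReal.mul_ne_top ENNReal.ofReal_ne_top hZ.ne
  have hev : ∀ x, ∀ᶠ m : ℕ in atTop, lap (fun x => cutR m x * w x) x = 0 := by
    intro x
    filter_upwards [tendsto_natCast_atTop_atTop.eventually_gt_atTop (‖x‖ : ℝ)] with m hm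
    have hx : ‖x‖ < (m:ℝ) + 1 := by linarith
    rw [hlap]
    simp [lap, (pd_cutR_inner hx _).1, (pd_cutR_inner hx _).2]
  have hlim : Tendsto (fun m : ℕ => Lint p (fun x => jap x ^ β * lap (fun x => cutR m x * w x) x))
      atTop (𝓝 0) := by
    have := tendsto_lintegral_of_dominated_convergence (μ := (volume : Measure (Euc n)))
      (F := fun m x => ENNReal.ofReal (|jap x ^ β * lap (fun x => cutR m x * w x) x| ^ p))
      (f := fun _ => 0)
      (fun x => ENNReal.ofReal (|((n + 2) * A) * Zd β w x| ^ p))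
      (fun m => ((jap_rpow_meas β (hφ m).lap.cont).abs.pow_const p).ennreal_ofReal)
      (fun m => ae_of_all _ fun x => ENNReal.ofReal_le_ofReal
        (Real.rpow_le_rpow (abs_nonneg _) (hbd m x) hp0.le)) hfin
      (ae_of_all _ fun x => tendsto_const_nhds.congr' (by
        filter_upwards [hev x] with m hm
        simp [hm, Real.zero_rpow hp0.ne']))
    simpa [Lint] using this
  have hc := cN_pos hn
  have hrep : ∀ (m : ℕ) x, ‖cutR m x * w x‖ₑ ≤ ENNReal.ofReal (cN n)⁻¹ *
      riesz 2 (fun y => ‖lap (fun x => cutR m x * w x) y‖ₑ) x := fun m x => by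
    have h := newton hn (hφ m) x
    have h' := newton_bound (lap (fun x => cutR m x * w x)) x
    have e : cutR m x * w x = -(cN n)⁻¹ * cv (Nw 0) (lap (fun x => cutR m x * w x)) x := by
      rw [cv, h]; field_simp
    rw [e, enorm_mul, enorm_neg, Real.enorm_of_nonneg (inv_pos.2 hc).le]
    exact mul_le_mul_right h' _
  have hup : ∀ m : ℕ, Lint p (fun x => jap x ^ (β - 2) * (cutR m x * w x)) ≤
      ENNReal.ofReal (cN n)⁻¹ ^ p * C₂ *
        Lint p (fun x => jap x ^ β * lap (fun x => cutR m x * w x) x) := fun m =>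
    h₂ _ _ _ (hφ m).lap.cont (hrep m)
  have hlim2 : Tendsto (fun m : ℕ => Lint p (fun x => jap x ^ (β - 2) * (cutR m x * w x)))
      atTop (𝓝 0) := by
    refine tendsto_of_tendsto_of_tendsto_of_le_of_le tendsto_const_nhds ?_ (fun _ => zero_le) hup
    have := ENNReal.Tendsto.const_mul (a := ENNReal.ofReal (cN n)⁻¹ ^ p * C₂) hlim (Or.inr
      (ENNReal.mul_ne_top (ENNReal.rpow_ne_top_of_nonneg hp0.le ENNReal.ofReal_ne_top) hC₂))
    simpa using this
  have hz : Lint p (fun x => jap x ^ (β - 2) * w x) ≤ 0 := by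
    refine (Lint_fatou (fun m => jap_rpow_meas (β - 2) (hφ m).cont) fun x => ?_).trans
      hlim2.liminf_eq.le
    filter_upwards [cutR_eventually x] with m hm
    rw [hm, one_mul]
  have hz' := nonpos_iff_eq_zero.1 hz
  unfold Lint at hz'
  rw [lintegral_eq_zero_iff ((jap_rpow_meas _ hw.cont).abs.pow_const p).ennreal_ofReal] at hz'
  refine Continuous.ae_eq_iff_eq (volume : Measure (Euc n)) hw.cont continuous_zero |>.1 ?_
  filter_upwards [hz'] with x hx
  have h1 : |jap x ^ (β - 2) * w x| ^ p ≤ 0 := ENNReal.ofReal_eq_zero.1 hx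
  have h2 : |jap x ^ (β - 2) * w x| = 0 := by
    by_contra hne
    exact absurd h1 (not_le.2 (Real.rpow_pos_of_pos (lt_of_le_of_ne (abs_nonneg _) (Ne.symm hne)) p))
  have h3 := abs_eq_zero.1 h2
  exact (mul_eq_zero.1 h3).resolve_left (Real.rpow_pos_of_pos (jap_pos x) _).ne'

/-- Finiteness of the `W^{2,p}_δ` norm, expressed through partial derivatives of order zero and one. -/
lemma finite_terms {p δ : ℝ} (hp : 1 < p) {u : Euc n → ℝ} (h : SobW 2 p δ u < ⊤) :
    Lint p (fun x => jap x ^ ((2 - δ - n / p) - 2) * u x) < ⊤ ∧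
    ∀ i, Lint p (fun x => jap x ^ ((2 - δ - n / p) - 1) * pd i u x) < ⊤ := by
  have hp0 : 0 < p := by linarith
  refine ⟨(Lint_mono hp0.le fun x => ?_).trans_lt (Sterm_lt_top hp0 h (j := 0) (by simp)),
    fun i => (Lint_mono hp0.le fun x => ?_).trans_lt (Sterm_lt_top hp0 h (j := 1) (by simp))⟩
  · rw [norm_iter0, show -δ - (n:ℝ) / p + ((0:ℕ):ℝ) = 2 - δ - n / p - 2 by push_cast; ring]
    simp [abs_mul]
  · rw [show -δ - (n:ℝ) / p + ((1:ℕ):ℝ) = 2 - δ - n / p - 1 by push_cast; ring, abs_mul, abs_mul,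
      abs_norm]
    exact mul_le_mul_of_nonneg_left (abs_pd_le i x) (abs_nonneg _)

/-- Uniqueness: `harm_zero` applied to the difference. -/
lemma unique_sol (hn : 3 ≤ n) {p δ : ℝ} (hp : 1 < p) (hδ : 2 - n < δ) (hδ0 : δ < 0)
    {u v : Euc n → ℝ} (hu : Sm u) (hv : Sm v) (hu1 : SobW 2 p δ u < ⊤) (hv1 : SobW 2 p δ v < ⊤)
    (h : ∀ x, lap u x = lap v x) : u = v := by
  have hp0 : 0 < p := by linarith
  have hw : Sm (fun x => u x - v x) := hu.sub hv
  obtain ⟨a0, a1⟩ := finite_terms hp hu1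
  obtain ⟨b0, b1⟩ := finite_terms hp hv1
  have key : ∀ (s : ℝ) {f g : Euc n → ℝ}, Continuous f → Lint p (fun x => jap x ^ s * f x) < ⊤ →
      Lint p (fun x => jap x ^ s * g x) < ⊤ → Lint p (fun x => jap x ^ s * (f x - g x)) < ⊤ := by
    intro s f g hf h1 h2
    refine (Lint_le_add hp0.le (jap_rpow_meas s hf) (H := fun x => jap x ^ s * g x) fun x => ?_).trans_lt
      (ENNReal.mul_lt_top ENNReal.ofReal_lt_top (ENNReal.add_lt_top.2 ⟨h1, h2⟩))
    rw [mul_sub]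
    exact abs_sub _ _
  have hl : ∀ x, lap (fun x => u x - v x) x = 0 := fun x => by
    rw [lap_sub hu hv, h, sub_self]
  have := harm_zero hn hp hδ hδ0 hw hl (Zd_lt_top hp hw hl (key _ hu.cont a0 b0) fun i => by
    rw [pd_sub hu.diff hv.diff]
    exact key _ (hu.pd i).cont (a1 i) (b1 i))
  funext x
  exact sub_eq_zero.1 (congrFun this x)

end final

/-- **Isomorphism property of the flat scalar Laplacian on weighted spaces.** -/
theorem scalarLaplacian_isomorphism (n : ℕ) (hn : 3 ≤ n) (p δ : ℝ) (hp : 1 < p)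
    (hδ1 : 2 - (n : ℝ) < δ) (hδ2 : δ < 0) :
    ∃ C > (0 : ℝ),
      ∀ f : Euc n → ℝ, ContDiff ℝ (⊤ : ℕ∞) f → LpW p (δ - 2) f < ⊤ →
        ∃ u : Euc n → ℝ,
          ContDiff ℝ (⊤ : ℕ∞) u ∧ SobW 2 p δ u < ⊤ ∧
          (∀ x, lap u x = f x) ∧
          SobW 2 p δ u ≤ ENNReal.ofReal C * LpW p (δ - 2) f ∧
          (∀ v : Euc n → ℝ, ContDiff ℝ (⊤ : ℕ∞) v → SobW 2 p δ v < ⊤ →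
            (∀ x, lap v x = f x) → v = u) := by
  have hp0 : 0 < p := by linarith
  have hq : (0:ℝ) < 1 / p := by positivity
  obtain ⟨C, hC, h⟩ := exists_sol hn hp hδ1 hδ2
  have hK : 3 * C ^ (1 / p) ≠ ⊤ :=
    ENNReal.mul_ne_top (by norm_num) (ENNReal.rpow_ne_top_of_nonneg hq.le hC)
  refine ⟨(3 * C ^ (1 / p)).toReal + 1, by positivity, fun f hf hN => ?_⟩
  have hN' := hN
  rw [LpW_eq, ENNReal.rpow_lt_top_iff_of_pos hq] at hN'
  obtain ⟨u, hu, hl, hS⟩ := h f hf hN'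
  have hle : SobW 2 p δ u ≤ ENNReal.ofReal ((3 * C ^ (1 / p)).toReal + 1) * LpW p (δ - 2) f := by
    calc SobW 2 p δ u ≤ 3 * C ^ (1 / p) * LpW p (δ - 2) f := by
          rw [SobW_eq, LpW_eq]
          refine (Finset.sum_le_sum fun j hj => ENNReal.rpow_le_rpow (hS j hj) hq.le).trans
            (le_of_eq ?_)
          rw [Finset.sum_const, Finset.card_range, nsmul_eq_mul, ENNReal.mul_rpow_of_nonneg _ _ hq.le,
            mul_assoc]
          norm_num
      _ ≤ _ := by
          refine mul_le_mul_left ?_ _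
          rw [ENNReal.ofReal_add ENNReal.toReal_nonneg zero_le_one, ENNReal.ofReal_toReal hK]
          exact le_self_add
  have hfin : SobW 2 p δ u < ⊤ := hle.trans_lt (ENNReal.mul_lt_top ENNReal.ofReal_lt_top hN)
  exact ⟨u, hu, hfin, hl, hle, fun v hv hv1 hvl =>
    unique_sol hn hp hδ1 hδ2 hv hu hv1 hfin fun x => by rw [hvl, hl]⟩
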